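/- Let $(\Omega_n)$ be a sequence of finite-perimeter subsets of a bounded open set $\mathcal{D}$ converging in $L^1$ to $\Omega$, and let $K \subset \mathcal{D}$ be closed. Suppose $U$ is an open set with $K \subset U \subset \mathcal{D}$ such that $\mathcal{H}^{N-1}(\partial^*\Omega_n \cap \partial U) = 0$ for all $n$ and $\mathcal{H}^{N-1}(\partial^*\Omega \cap \partial U) = 0$. Then for any $A \geq 1$, $\liminf_n \big(\mathcal{H}^{N-1}(\partial^*\Omega_n \cap K \cap \mathcal{D}) + A\,\mathcal{H}^{N-1}(\partial^*\Omega_n \setminus K \cap \mathcal{D})\big) \geq \mathcal{H}^{N-1}(\partial^*\Omega \cap K \cap \mathcal{D}) + A\,\mathcal{H}^{N-1}(\partial^*\Omega \setminus K \cap \mathcal{D})$, provided also $\mathcal{H}^{N-1}(\partial^*\Omega_n \cap U \setminus K)$ and $\mathcal{H}^{N-1}(\partial^*\Omega \cap U \setminus K)$ are handled by lower semicontinuity on the open set $U \setminus K$ (i.e., assuming additionally $K = \partial\Omega_0$ for some fixed set so that $U \setminus K$ is open). -/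

import Mathlib

open MeasureTheory Metric Filter Set Bornology
open scoped ENNReal Topology NNReal RealInnerProductSpace

noncomputable section

/-- Points of Lebesgue density `1` of a set in `ℝ^N`. -/
def densityOnePts {N : ℕ} (E : Set (EuclideanSpace ℝ (Fin N))) :
    Set (EuclideanSpace ℝ (Fin N)) :=
  {x | Tendsto (fun r : ℝ => volume (E ∩ ball x r) / volume (ball x r)) (𝓝[>] 0) (𝓝 1)}

/-- Points of Lebesgue density `0` of a set in `ℝ^N`. -/
def densityZeroPts {N : ℕ} (E : Set (EuclideanSpace ℝ (Fin N))) :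
    Set (EuclideanSpace ℝ (Fin N)) :=
  {x | Tendsto (fun r : ℝ => volume (E ∩ ball x r) / volume (ball x r)) (𝓝[>] 0) (𝓝 0)}

/-- The essential boundary `∂*E`: points of density neither `0` nor `1`. -/
def essBdry {N : ℕ} (E : Set (EuclideanSpace ℝ (Fin N))) :
    Set (EuclideanSpace ℝ (Fin N)) :=
  (densityOnePts E ∪ densityZeroPts E)ᶜ

/-- Relative perimeter of `E` in `Ω` (De Giorgi–Federer):
`P(E,Ω) = H^{N-1}(∂*E ∩ Ω)`. -/
def perim {N : ℕ} (E Ω : Set (EuclideanSpace ℝ (Fin N))) : ℝ≥0∞ :=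
  μH[(N : ℝ) - 1] (essBdry E ∩ Ω)

/-- Support of the Gauss–Green measure `μ_E`, whose total variation is
`H^{N-1} ⌊ ∂*E`. -/
def sptGG {N : ℕ} (E : Set (EuclideanSpace ℝ (Fin N))) :
    Set (EuclideanSpace ℝ (Fin N)) :=
  {x | ∀ r : ℝ, 0 < r → 0 < μH[(N : ℝ) - 1] (essBdry E ∩ ball x r)}

/-- The Lebesgue volume `ω_N` of the unit ball of `ℝ^N`. -/
def omegaVol (N : ℕ) : ℝ := (volume (ball (0 : EuclideanSpace ℝ (Fin N)) 1)).toReal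

/-!
As `A ≥ 1`, the weighted functional of `E` is the sum of `H(∂*E ∩ D)` and `A - 1` times
`H(∂*E ∩ (D \ K))`, so it suffices that `E ↦ H(∂*E ∩ V)` is lower semicontinuous in `L¹` for open
`V`.

Almost every line that passes from `E` to its complement meets `∂*E`; hence, by slicing and
Eilenberg's inequality, a set of finite perimeter has a Gauss–Green field `σ` with respect to `H` on
`∂*E`. At a Lebesgue point `x` of `σ`, `E` is almost invariant in small balls under translations
orthogonal to `σ x`. Since `x ∈ ∂*E`, both `E` and `Eᶜ` fill a definite part of suitable small
balls, so most lines in direction `σ x` through such a ball of radius `R` meet both of them, and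
meet both `F` and `Fᶜ` if `F` is close to `E` in `L¹`: projecting along `σ x`, the part of `∂*F` in
the ball has measure almost `2 ^ n * R ^ n`, where `n + 1` is the dimension of the space. Here the
isodiametric inequality enters, as `μH` is normalised by diameters and not by volumes of balls. The
upper density of `H` on `∂*E` being at most `1` almost everywhere, this is almost the measure of
`∂*E` in the ball, and a Besicovitch covering of `∂*E ∩ V` by such balls completes the proof.
-/

section RealLine

lemma exists_mem_Ioc_notMem_nhdsLT {X : Type*} [ConditionallyCompleteLinearOrder X]
    [TopologicalSpace X] [OrderTopology X] {O : Set X} (hO : IsOpen O) {s t : X} (hs : s ∈ O)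
    (ht : t ∉ O) (hst : s ≤ t) : ∃ u ∈ Ioc s t, u ∉ O ∧ O ∈ 𝓝[<] u := by
  have hcompact : IsCompact (Icc s t ∩ Oᶜ) := isCompact_Icc.inter_right hO.isClosed_compl
  obtain ⟨⟨hsu, hut⟩, huO⟩ := hcompact.sInf_mem ⟨t, ⟨hst, le_rfl⟩, ht⟩
  set u := sInf (Icc s t ∩ Oᶜ)
  have hsu' : s < u := hsu.lt_of_ne fun h => huO (h ▸ hs)
  refine ⟨u, ⟨hsu', hut⟩, huO, mem_of_superset (Ioo_mem_nhdsLT hsu') fun v hv => ?_⟩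
  by_contra hvO
  exact (csInf_le hcompact.bddBelow ⟨⟨hv.1.le, hv.2.le.trans hut⟩, hvO⟩).not_gt hv.2

lemma exists_mem_Ico_notMem_nhdsGT {X : Type*} [ConditionallyCompleteLinearOrder X]
    [TopologicalSpace X] [OrderTopology X] {O : Set X} (hO : IsOpen O) {s t : X} (hs : s ∈ O)
    (ht : t ∉ O) (hts : t ≤ s) : ∃ u ∈ Ico t s, u ∉ O ∧ O ∈ 𝓝[>] u := by
  obtain ⟨u, hu, huO, hnhds⟩ := exists_mem_Ioc_notMem_nhdsLT (X := Xᵒᵈ) hO hs ht hts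
  exact ⟨u, hu.symm, huO, hnhds⟩

variable {A B I : Set ℝ}

/-- A countable closed cover `T` of `A ⊆ ℝ` which separates `A` from `B`: the members of `T` are
disjoint from `B`, and `B` is not a one-sided neighbourhood of any of their points. It makes the
Baire category theorem applicable to partitions `{A, B}` of an interval. -/
structure IsSeparatingCover (A B : Set ℝ) (T : ℕ → Set ℝ) : Prop where
  isClosed : ∀ k, IsClosed (T k)
  subset_iUnion : A ⊆ ⋃ k, T k
  disjoint : ∀ k, Disjoint (T k) B
  notMem_nhdsGT : ∀ k, ∀ t ∈ T k, B ∉ 𝓝[>] t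
  notMem_nhdsLT : ∀ k, ∀ t ∈ T k, B ∉ 𝓝[<] t

lemma notMem_interior_of_disjoint_of_mem_nhdsWithin {X : Type*} [TopologicalSpace X]
    {A B s : Set X} {x : X} [NeBot (𝓝[s] x)] (hAB : Disjoint A B) (hB : B ∈ 𝓝[s] x) :
    x ∉ interior A := fun hA => by
  have hA' : A ∈ 𝓝[s] x := mem_nhdsWithin_of_mem_nhds (mem_interior_iff_mem_nhds.1 hA)
  obtain ⟨y, hyA, hyB⟩ := Filter.nonempty_of_mem (inter_mem hA' hB)
  exact disjoint_left.1 hAB hyA hyB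

lemma subset_interior_union_of_sdiff_subset {T : Set ℝ} (hI : IsOpen I) (hIc : I.OrdConnected)
    (hAB : Disjoint A B) (hcover : I ⊆ A ∪ B) (hIT : I \ (interior A ∪ interior B) ⊆ T)
    (hTB : Disjoint T B) (hGT : ∀ t ∈ T, B ∉ 𝓝[>] t) (hLT : ∀ t ∈ T, B ∉ 𝓝[<] t) :
    I ⊆ interior A ∪ interior B := by
  intro t ht
  by_contra htAB
  refine htAB (Or.inl (interior_maximal (fun s hs => ?_) hI ht))
  by_contra hsA
  have hsB : s ∈ interior B := by
    by_contra hsB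
    have hsT := hIT ⟨hs, fun h => h.elim (fun h => hsA (interior_subset h)) hsB⟩
    exact disjoint_left.1 hTB hsT ((hcover hs).resolve_left hsA)
  have htB : t ∉ interior B := fun h => htAB (Or.inr h)
  rcases le_total s t with hst | hts
  · obtain ⟨u, hu, huB, hnhds⟩ := exists_mem_Ioc_notMem_nhdsLT isOpen_interior hsB htB hst
    have hB := mem_of_superset hnhds interior_subset
    have huA := notMem_interior_of_disjoint_of_mem_nhdsWithin hAB hB
    exact hLT u (hIT ⟨hIc.out hs ht (Ioc_subset_Icc_self hu), fun h => h.elim huA huB⟩) hB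
  · obtain ⟨u, hu, huB, hnhds⟩ := exists_mem_Ico_notMem_nhdsGT isOpen_interior hsB htB hts
    have hB := mem_of_superset hnhds interior_subset
    have huA := notMem_interior_of_disjoint_of_mem_nhdsWithin hAB hB
    exact hGT u (hIT ⟨hIc.out ht hs (Ico_subset_Icc_self hu), fun h => h.elim huA huB⟩) hB

lemma exists_ball_inter_subset_of_subset_iUnion {X ι : Type*} [MetricSpace X]
    [LocallyCompactSpace X] [Countable ι] {F : Set X} {T : ι → Set X} (hF : IsLocallyClosed F)
    (hFne : F.Nonempty) (hT : ∀ i, IsClosed (T i)) (hFT : F ⊆ ⋃ i, T i) :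
    ∃ x ∈ F, ∃ i, ∃ ε > 0, ball x ε ∩ F ⊆ T i := by
  have : LocallyCompactSpace F := hF.locallyCompactSpace
  have : Nonempty F := hFne.to_subtype
  obtain ⟨i, ⟨x, hx⟩⟩ := nonempty_interior_of_iUnion_of_closed
    (f := fun i => (Subtype.val ⁻¹' T i : Set F))
    (fun i => (hT i).preimage continuous_subtype_val)
    (by rw [← preimage_iUnion]; exact eq_univ_of_forall fun y => hFT y.2)
  have hnhds := mem_interior_iff_mem_nhds.1 hx
  rw [nhds_subtype_eq_comap, mem_comap] at hnhds
  obtain ⟨V, hV, hVT⟩ := hnhds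
  obtain ⟨ε, hε, hεV⟩ := Metric.mem_nhds_iff.1 hV
  exact ⟨x, x.2, i, ε, hε, fun y hy =>
    hVT (show (⟨y, hy.2⟩ : F) ∈ Subtype.val ⁻¹' V from hεV hy.1)⟩

lemma IsSeparatingCover.subset_or_subset {TA TB : ℕ → Set ℝ} (hA : IsSeparatingCover A B TA)
    (hB : IsSeparatingCover B A TB) (hI : IsOpen I) (hIc : I.OrdConnected) (hAB : Disjoint A B)
    (hcover : I ⊆ A ∪ B) : I ⊆ A ∨ I ⊆ B := by
  suffices hinterior : I ⊆ interior A ∪ interior B by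
    refine (hIc.isPreconnected.subset_or_subset isOpen_interior isOpen_interior
      (hAB.mono interior_subset interior_subset) hinterior).imp ?_ ?_ <;>
    exact fun h => h.trans interior_subset
  by_contra hnot
  obtain ⟨t, ⟨htI, htAB⟩, i, ε, hε, hεT⟩ := exists_ball_inter_subset_of_subset_iUnion
    (F := I \ (interior A ∪ interior B)) (T := Sum.elim TA TB)
    (hI.isLocallyClosed.inter
      (isOpen_interior.union isOpen_interior).isClosed_compl.isLocallyClosed)
    (sdiff_nonempty.2 hnot) (Sum.forall.2 ⟨hA.isClosed, hB.isClosed⟩)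
    (by
      rw [iUnion_sum]
      exact (sdiff_subset.trans hcover).trans
        (union_subset_union hA.subset_iUnion hB.subset_iUnion))
  have hJ : IsOpen (Ioo (t - ε) (t + ε) ∩ I) := isOpen_Ioo.inter hI
  have hJc : (Ioo (t - ε) (t + ε) ∩ I).OrdConnected := ordConnected_Ioo.inter hIc
  have hJcover : Ioo (t - ε) (t + ε) ∩ I ⊆ A ∪ B := inter_subset_right.trans hcover
  have htJ : t ∈ Ioo (t - ε) (t + ε) ∩ I := ⟨⟨by linarith, by linarith⟩, htI⟩
  rw [Real.ball_eq_Ioo, ← inter_sdiff_assoc] at hεT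
  rcases i with k | k
  · exact htAB (subset_interior_union_of_sdiff_subset hJ hJc hAB hJcover hεT (hA.disjoint k)
      (hA.notMem_nhdsGT k) (hA.notMem_nhdsLT k) htJ)
  · rw [union_comm] at hJcover hεT htAB
    exact htAB (subset_interior_union_of_sdiff_subset hJ hJc hAB.symm hJcover hεT (hB.disjoint k)
      (hB.notMem_nhdsGT k) (hB.notMem_nhdsLT k) htJ)

end RealLine

section Density

lemma measure_compl_inter_div {X : Type*} [MeasurableSpace X] {μ : Measure X} {E B : Set X}
    (hE : NullMeasurableSet E μ) (h0 : μ B ≠ 0) (htop : μ B ≠ ⊤) :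
    μ (Eᶜ ∩ B) / μ B = 1 - μ (E ∩ B) / μ B := by
  rw [← ENNReal.div_self h0 htop, ← ENNReal.sub_div fun _ _ => h0, inter_comm Eᶜ,
    ← sdiff_eq_compl_inter.trans (inter_comm _ _), inter_comm E,
    ← measure_inter_add_sdiff₀ B hE, ENNReal.add_sub_cancel_left]
  exact measure_ne_top_of_subset inter_subset_left htop

lemma lowerSemicontinuous_measure_inter_ball {X : Type*} [PseudoMetricSpace X]
    [MeasurableSpace X] (μ : Measure X) (E : Set X) (r : ℝ) :
    LowerSemicontinuous fun x => μ (E ∩ ball x r) := by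
  intro x c (hc : c < μ (E ∩ ball x r))
  have hmono : Monotone fun s : Iio r => E ∩ ball x s := fun _ _ hst =>
    inter_subset_inter_right _ (ball_subset_ball hst)
  have hiUnion : ⋃ s : Iio r, E ∩ ball x s = E ∩ ball x r := by
    rw [← inter_iUnion, ← biUnion_lt_ball x r, iUnion_subtype]
    rfl
  rw [← hiUnion, hmono.measure_iUnion] at hc
  obtain ⟨⟨s, hs⟩, hcs⟩ := lt_iSup_iff.1 hc
  filter_upwards [ball_mem_nhds x (sub_pos.2 hs)] with y hy
  refine hcs.trans_le (measure_mono (inter_subset_inter_right _ (ball_subset_ball' ?_)))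
  rw [mem_ball, dist_comm] at hy
  linarith

variable {N : ℕ} {E : Set (EuclideanSpace ℝ (Fin N))}

lemma volume_compl_inter_ball_div (hE : MeasurableSet E) (x : EuclideanSpace ℝ (Fin N)) {r : ℝ}
    (hr : 0 < r) : volume (Eᶜ ∩ ball x r) / volume (ball x r) =
      1 - volume (E ∩ ball x r) / volume (ball x r) :=
  measure_compl_inter_div hE.nullMeasurableSet (measure_ball_pos _ _ hr).ne' measure_ball_lt_top.ne

lemma densityZeroPts_subset_densityOnePts_compl (hE : MeasurableSet E) :
    densityZeroPts E ⊆ densityOnePts Eᶜ := by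
  intro x hx
  have hlim := ENNReal.Tendsto.sub tendsto_const_nhds hx (Or.inl ENNReal.one_ne_top)
  rw [tsub_zero] at hlim
  refine hlim.congr' ?_
  filter_upwards [self_mem_nhdsWithin] with r hr
  exact (volume_compl_inter_ball_div hE x hr).symm

lemma densityOnePts_subset_densityZeroPts_compl (hE : MeasurableSet E) :
    densityOnePts E ⊆ densityZeroPts Eᶜ := by
  intro x hx
  have hlim := ENNReal.Tendsto.sub tendsto_const_nhds hx (Or.inl ENNReal.one_ne_top)
  rw [tsub_self] at hlim
  refine hlim.congr' ?_
  filter_upwards [self_mem_nhdsWithin] with r hr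
  exact (volume_compl_inter_ball_div hE x hr).symm

lemma densityZeroPts_compl (hE : MeasurableSet E) : densityZeroPts Eᶜ = densityOnePts E :=
  Subset.antisymm
    (by simpa only [compl_compl] using densityZeroPts_subset_densityOnePts_compl hE.compl)
    (densityOnePts_subset_densityZeroPts_compl hE)

lemma densityOnePts_compl (hE : MeasurableSet E) : densityOnePts Eᶜ = densityZeroPts E := by
  rw [← densityZeroPts_compl hE.compl, compl_compl]

lemma disjoint_densityOnePts_densityZeroPts (E : Set (EuclideanSpace ℝ (Fin N))) :
    Disjoint (densityOnePts E) (densityZeroPts E) :=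
  disjoint_left.2 fun _ hone hzero => one_ne_zero (tendsto_nhds_unique hone hzero)

lemma volume_sdiff_densityOnePts (hE : MeasurableSet E) : volume (E \ densityOnePts E) = 0 := by
  have hdensity := Besicovitch.ae_tendsto_measure_inter_div volume E
  rw [ae_restrict_iff' hE] at hdensity
  rw [measure_eq_zero_iff_ae_notMem]
  filter_upwards [hdensity] with x hlim hx
  refine hx.2 ((hlim hx.1).congr' ?_)
  filter_upwards [self_mem_nhdsWithin] with r hr
  have hae : (closedBall x r : Set _) =ᵐ[volume] ball x r := by
    rw [← ball_union_sphere]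
    exact union_ae_eq_left_of_ae_eq_empty
      (ae_eq_empty.2 (Measure.addHaar_sphere_of_ne_zero _ _ (ne_of_gt hr)))
  rw [measure_congr hae, measure_congr ((ae_eq_refl E).inter hae)]

lemma volume_compl_sdiff_densityZeroPts (hE : MeasurableSet E) :
    volume (Eᶜ \ densityZeroPts E) = 0 := by
  rw [← densityOnePts_compl hE]
  exact volume_sdiff_densityOnePts hE.compl

lemma volume_densityOnePts_sdiff (hE : MeasurableSet E) : volume (densityOnePts E \ E) = 0 := by
  refine measure_mono_null (fun x hx => ?_) (volume_compl_sdiff_densityZeroPts hE)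
  exact ⟨hx.2, disjoint_left.1 (disjoint_densityOnePts_densityZeroPts E) hx.1⟩

/-- The points at which `E` has volume fraction at most `δ` in all balls of radius less than
`1 / (k + 1)`. These closed sets exhaust the points of density `0`. -/
def lowDensityPts (E : Set (EuclideanSpace ℝ (Fin N))) (δ : ℝ≥0∞) (k : ℕ) :
    Set (EuclideanSpace ℝ (Fin N)) :=
  {x | ∀ r : ℝ, 0 < r → r < 1 / ((k : ℝ) + 1) → volume (E ∩ ball x r) ≤ δ * volume (ball x r)}

lemma lowDensityPts_mono {δ δ' : ℝ≥0∞} (h : δ ≤ δ') (k : ℕ) :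
    lowDensityPts E δ k ⊆ lowDensityPts E δ' k :=
  fun _ hx r hr hrk => (hx r hr hrk).trans (by gcongr)

lemma isClosed_lowDensityPts (E : Set (EuclideanSpace ℝ (Fin N))) (δ : ℝ≥0∞) (k : ℕ) :
    IsClosed (lowDensityPts E δ k) := by
  simp only [lowDensityPts, ofPred_forall, Measure.addHaar_ball_center]
  exact isClosed_iInter fun r => isClosed_iInter fun _ => isClosed_iInter fun _ =>
    (lowerSemicontinuous_measure_inter_ball volume E r).isClosed_preimage _

lemma densityZeroPts_subset_iUnion_lowDensityPts (E : Set (EuclideanSpace ℝ (Fin N)))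
    {δ : ℝ≥0∞} (hδ : 0 < δ) : densityZeroPts E ⊆ ⋃ k, lowDensityPts E δ k := by
  intro x hx
  have hlt : ∀ᶠ r in 𝓝[>] (0 : ℝ), volume (E ∩ ball x r) / volume (ball x r) < δ :=
    hx.eventually (gt_mem_nhds hδ)
  obtain ⟨ε, hε, hεδ⟩ := mem_nhdsGT_iff_exists_Ioo_subset.1 hlt
  obtain ⟨k, hk⟩ := exists_nat_one_div_lt (mem_Ioi.1 hε)
  refine mem_iUnion.2 ⟨k, fun r hr hrk => ?_⟩
  exact (ENNReal.div_le_iff (measure_ball_pos _ _ hr).ne' measure_ball_lt_top.ne).1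
    (hεδ ⟨hr, hrk.trans hk⟩).le

lemma disjoint_lowDensityPts_densityOnePts (E : Set (EuclideanSpace ℝ (Fin N))) {δ : ℝ≥0∞}
    (hδ : δ < 1) (k : ℕ) : Disjoint (lowDensityPts E δ k) (densityOnePts E) := by
  refine disjoint_left.2 fun x hlow hone => ?_
  have hlt : ∀ᶠ r in 𝓝[>] (0 : ℝ), δ < volume (E ∩ ball x r) / volume (ball x r) :=
    hone.eventually (lt_mem_nhds hδ)
  obtain ⟨r, hrδ, hr, hrk⟩ :=
    (hlt.and (Ioo_mem_nhdsGT (show (0 : ℝ) < 1 / ((k : ℝ) + 1) by positivity))).exists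
  exact hrδ.not_ge ((ENNReal.div_le_iff (measure_ball_pos _ _ hr).ne' measure_ball_lt_top.ne).2
    (hlow r hr hrk))

end Density

section Slicing

lemma exists_measure_image_eq_mul {G F : Type*} [NormedAddCommGroup G] [NormedSpace ℝ G]
    [MeasurableSpace G] [BorelSpace G] [NormedAddCommGroup F] [NormedSpace ℝ F]
    [FiniteDimensional ℝ F] [MeasurableSpace F] [BorelSpace F]
    (Ψ : G ≃L[ℝ] F) (μ : Measure G) [μ.IsAddHaarMeasure] (ν : Measure F) [ν.IsAddHaarMeasure] :
    ∃ c : ℝ≥0∞, c ≠ 0 ∧ c ≠ ⊤ ∧ ∀ s : Set G, ν (Ψ '' s) = c * μ s := by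
  have : (μ.map Ψ).IsAddHaarMeasure := Ψ.isAddHaarMeasure_map μ
  refine ⟨ν.addHaarScalarFactor (μ.map Ψ), ?_, ENNReal.coe_ne_top, fun s => ?_⟩
  · exact_mod_cast (Measure.addHaarScalarFactor_pos_of_isAddHaarMeasure ν (μ.map Ψ)).ne'
  · have hmap : μ.map Ψ (Ψ '' s) = μ s := by
      refine (Ψ.toHomeomorph.toMeasurableEquiv.map_apply (Ψ '' s)).trans ?_
      exact congrArg μ (preimage_image_eq s Ψ.injective)
    conv_lhs => rw [Measure.isAddLeftInvariant_eq_smul ν (μ.map Ψ)]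
    rw [Measure.smul_apply, hmap, ENNReal.smul_def, smul_eq_mul]

lemma exists_eventually_half_measure_le_inter_closedBall {G : Type*} [NormedAddCommGroup G]
    [NormedSpace ℝ G] [FiniteDimensional ℝ G] [MeasurableSpace G] [BorelSpace G] {μ : Measure G}
    [μ.IsAddHaarMeasure] {T : Set G} (hT : μ T ≠ 0) :
    ∃ z, ∀ᶠ r in 𝓝[>] (0 : ℝ), 2⁻¹ * μ (closedBall z r) ≤ μ (T ∩ closedBall z r) := by
  have : NeBot (ae (μ.restrict T)) := by
    rw [ae_neBot]
    exact fun h => hT (Measure.restrict_eq_zero.1 h)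
  obtain ⟨z, hz⟩ := (Besicovitch.ae_tendsto_measure_inter_div μ T).exists
  refine ⟨z, ?_⟩
  filter_upwards [hz.eventually (lt_mem_nhds (show (2⁻¹ : ℝ≥0∞) < 1 by simp)),
    self_mem_nhdsWithin] with r hr hrpos
  exact (ENNReal.le_div_iff_mul_le (Or.inl (measure_closedBall_pos μ z hrpos).ne')
    (Or.inl measure_closedBall_lt_top.ne)).1 hr.le

lemma exists_mem_forall_lt_add {α : Type*} {s : Set α} (hs : s.Nonempty) {f : α → ℝ}
    (hf : BddAbove (f '' s)) {r : ℝ} (hr : 0 < r) : ∃ x ∈ s, ∀ y ∈ s, f y < f x + r := by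
  obtain ⟨_, ⟨x, hx, rfl⟩, hlt⟩ := exists_lt_of_lt_csSup (hs.image f) (sub_lt_self (sSup _) hr)
  exact ⟨x, hx, fun y hy => by linarith [le_csSup hf (mem_image_of_mem f hy)]⟩

variable {B F : Type*} [NormedAddCommGroup B] [NormedSpace ℝ B]

lemma image_prod_Ioo_subset_ball [NormedAddCommGroup F] [NormedSpace ℝ F] (L : B × ℝ →L[ℝ] F)
    {z z₀ : B} {r : ℝ} (hr : 0 < r) (hz : z ∈ closedBall z₀ r) (t : ℝ) :
    L '' (closedBall z₀ r ×ˢ Ioo (t + r) (t + 2 * r)) ⊆ ball (L (z, t)) (2 * (‖L‖ + 1) * r) := by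
  rintro _ ⟨⟨w, s⟩, ⟨hw, hs⟩, rfl⟩
  have hnorm : ‖(w, s) - (z, t)‖ ≤ 2 * r := by
    rw [Prod.mk_sub_mk, Prod.norm_mk, ← dist_eq_norm, Real.norm_eq_abs, abs_of_pos (by
      linarith [hs.1])]
    refine max_le ?_ (by linarith [hs.2])
    linarith [dist_triangle_right w z z₀, mem_closedBall.1 hw, mem_closedBall.1 hz]
  rw [mem_ball, dist_eq_norm, ← map_sub]
  calc ‖L ((w, s) - (z, t))‖ ≤ ‖L‖ * (2 * r) := L.le_opNorm_of_le hnorm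
    _ < 2 * (‖L‖ + 1) * r := by linarith

variable [MeasurableSpace B]

lemma mul_measure_le_of_image_subset_densityOnePts {N : ℕ}
    (Ψ : (B × ℝ) ≃L[ℝ] EuclideanSpace ℝ (Fin N)) {μ : Measure B}
    {E : Set (EuclideanSpace ℝ (Fin N))} {c δ : ℝ≥0∞} {k : ℕ} {R s r : ℝ}
    (hc : ∀ S : Set (B × ℝ), volume (Ψ '' S) = c * (μ.prod volume) S) (hE : MeasurableSet E)
    {x : EuclideanSpace ℝ (Fin N)} (hx : x ∈ lowDensityPts E δ k) (hR : 0 < R)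
    (hRk : R < 1 / ((k : ℝ) + 1)) {A : Set B}
    (hone : Ψ '' (A ×ˢ Ioo s (s + r)) ⊆ densityOnePts E)
    (hball : Ψ '' (A ×ˢ Ioo s (s + r)) ⊆ ball x R) :
    c * (μ A * ENNReal.ofReal r) ≤ δ * volume (ball x R) := by
  calc c * (μ A * ENNReal.ofReal r) = volume (Ψ '' (A ×ˢ Ioo s (s + r))) := by
        rw [hc, Measure.prod_prod, Real.volume_Ioo, add_sub_cancel_left]
    _ ≤ volume ((E ∩ ball x R) ∪ (densityOnePts E \ E)) := by
        refine measure_mono fun y hy => ?_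
        by_cases hyE : y ∈ E
        · exact Or.inl ⟨hyE, hball hy⟩
        · exact Or.inr ⟨hone hy, hyE⟩
    _ ≤ volume (E ∩ ball x R) + volume (densityOnePts E \ E) := measure_union_le _ _
    _ ≤ δ * volume (ball x R) := by
        rw [volume_densityOnePts_sdiff hE, add_zero]
        exact hx R hR hRk

variable [FiniteDimensional ℝ B] [BorelSpace B]

lemma exists_pos_mul_measure_ball_lt [NormedAddCommGroup F] [NormedSpace ℝ F]
    [FiniteDimensional ℝ F] [MeasurableSpace F] [BorelSpace F]
    (hdim : Module.finrank ℝ F = Module.finrank ℝ B + 1) (μ : Measure B) [μ.IsAddHaarMeasure]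
    (ν : Measure F) [ν.IsAddHaarMeasure] {C : ℝ} (hC : 0 < C) {c : ℝ≥0∞} (hc : c ≠ 0) :
    ∃ δ : ℝ≥0∞, 0 < δ ∧ ∀ (x : F) (z : B) (r : ℝ), 0 < r →
      δ * ν (ball x (C * r)) < c * (2⁻¹ * μ (closedBall z r) * ENNReal.ofReal r) := by
  set n := Module.finrank ℝ B
  have hleft : ENNReal.ofReal (C ^ (n + 1)) * ν (ball 0 1) ≠ ⊤ :=
    ENNReal.mul_ne_top ENNReal.ofReal_ne_top measure_ball_lt_top.ne
  have hright : c * (2⁻¹ * μ (ball 0 1)) ≠ 0 := by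
    simp [hc, (measure_ball_pos μ (0 : B) one_pos).ne']
  obtain ⟨δ, hδ0, hδ⟩ := ENNReal.exists_nnreal_pos_mul_lt hleft hright
  refine ⟨δ, by exact_mod_cast hδ0, fun x z r hr => ?_⟩
  have hrpow : ENNReal.ofReal (r ^ (n + 1)) ≠ 0 := by
    simpa only [ne_eq, ENNReal.ofReal_eq_zero, not_le] using pow_pos hr (n + 1)
  calc δ * ν (ball x (C * r))
      = δ * (ENNReal.ofReal (C ^ (n + 1)) * ν (ball 0 1)) * ENNReal.ofReal (r ^ (n + 1)) := by
        rw [Measure.addHaar_ball_of_pos ν _ (by positivity), hdim, mul_pow,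
          ENNReal.ofReal_mul (by positivity)]
        ring
    _ < c * (2⁻¹ * μ (ball 0 1)) * ENNReal.ofReal (r ^ (n + 1)) :=
        ENNReal.mul_lt_mul_left hrpow ENNReal.ofReal_ne_top hδ
    _ = c * (2⁻¹ * μ (closedBall z r) * ENNReal.ofReal r) := by
        rw [Measure.addHaar_closedBall μ z hr.le, pow_succ, ENNReal.ofReal_mul (by positivity)]
        ring

variable {N : ℕ} (Ψ : (B × ℝ) ≃L[ℝ] EuclideanSpace ℝ (Fin N)) (μ : Measure B)
  [μ.IsAddHaarMeasure] {E : Set (EuclideanSpace ℝ (Fin N))}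

lemma ae_volume_preimage_line_eq_zero {A : Set (EuclideanSpace ℝ (Fin N))} (hA : volume A = 0) :
    ∀ᵐ z ∂μ, volume {t : ℝ | Ψ (z, t) ∈ A} = 0 := by
  obtain ⟨c, hc0, -, hc⟩ := exists_measure_image_eq_mul Ψ (μ.prod volume) volume
  have hnull : (μ.prod volume) (Ψ ⁻¹' A) = 0 := by
    have hscale := hc (Ψ ⁻¹' A)
    rw [image_preimage_eq _ Ψ.surjective, hA] at hscale
    exact (mul_eq_zero.1 hscale.symm).resolve_left hc0
  filter_upwards [Measure.ae_ae_of_ae_prod (measure_eq_zero_iff_ae_notMem.1 hnull)] with z hz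
  exact measure_eq_zero_iff_ae_notMem.2 hz

variable {μ}

/-- The parameters `z` for which the line `t ↦ Ψ (z, t)` leaves `lowDensityPts E δ k` at a time in
`[a, a + η)` and then stays in `densityOnePts E` for a time at least `2 * η`. -/
def risingLines (E : Set (EuclideanSpace ℝ (Fin N))) (δ : ℝ≥0∞) (k : ℕ) (a η : ℝ) : Set B :=
  {z | ∃ t ∈ Ico a (a + η), Ψ (z, t) ∈ lowDensityPts E δ k ∧
    ∀ s ∈ Ioo t (t + 2 * η), Ψ (z, s) ∈ densityOnePts E}

-- Near a density point `z₀` of this set, stay above an almost highest exit point `Ψ (z, t)`: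
-- there `E` fills a definite fraction of a ball about a point of low density.
lemma measure_risingLines_eq_zero {c δ : ℝ≥0∞}
    (hc : ∀ S : Set (B × ℝ), volume (Ψ '' S) = c * (μ.prod volume) S)
    (hδ : ∀ (x : EuclideanSpace ℝ (Fin N)) (z : B) (r : ℝ), 0 < r →
      δ * volume (ball x (2 * (‖(Ψ : B × ℝ →L[ℝ] EuclideanSpace ℝ (Fin N))‖ + 1) * r)) <
        c * (2⁻¹ * μ (closedBall z r) * ENNReal.ofReal r))
    (hE : MeasurableSet E) (k : ℕ) (a : ℝ) {η : ℝ} (hη : 0 < η) :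
    μ (risingLines Ψ E δ k a η) = 0 := by
  by_contra hne
  set C := 2 * (‖(Ψ : B × ℝ →L[ℝ] EuclideanSpace ℝ (Fin N))‖ + 1)
  have hCpos : 0 < C := by positivity
  obtain ⟨z₀, hz₀⟩ := exists_eventually_half_measure_le_inter_closedBall hne
  have hkpos : 0 < 1 / ((k : ℝ) + 1) / C := by positivity
  obtain ⟨r, hhalf, hrη, hr, hrk⟩ := (hz₀.and (inter_mem (Ioo_mem_nhdsGT (half_pos hη))
    (Ioo_mem_nhdsGT hkpos))).exists
  rw [lt_div_iff₀ hCpos, mul_comm] at hrk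
  set A := risingLines Ψ E δ k a η ∩ closedBall z₀ r
  choose! h hIco hlow hone using fun z (hz : z ∈ risingLines Ψ E δ k a η) => hz
  have hAne : A.Nonempty := by
    refine nonempty_of_measure_ne_zero (μ := μ) fun h0 => ?_
    simp [h0, (measure_closedBall_pos μ z₀ hr).ne'] at hhalf
  have hbdd : BddAbove (h '' A) :=
    ⟨a + η, forall_mem_image.2 fun z hz => (hIco z hz.1).2.le⟩
  obtain ⟨z, hz, hmax⟩ := exists_mem_forall_lt_add hAne hbdd hr
  have hsub : Ψ '' (A ×ˢ Ioo (h z + r) (h z + r + r)) ⊆ densityOnePts E := by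
    rintro _ ⟨⟨w, s⟩, ⟨hw, hs⟩, rfl⟩
    refine hone w hw.1 s ⟨(hmax w hw).trans hs.1, ?_⟩
    linarith [hs.2, hrη.2, (hIco z hz.1).2, (hIco w hw.1).1]
  have hball : Ψ '' (A ×ˢ Ioo (h z + r) (h z + r + r)) ⊆ ball (Ψ (z, h z)) (C * r) := by
    rw [add_assoc, ← two_mul]
    exact (image_mono (prod_mono_left inter_subset_right)).trans
      (image_prod_Ioo_subset_ball (Ψ : B × ℝ →L[ℝ] EuclideanSpace ℝ (Fin N)) hr hz.2 (h z))
  refine (hδ (Ψ (z, h z)) z₀ r hr).not_ge (le_trans (by gcongr)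
    (mul_measure_le_of_image_subset_densityOnePts Ψ hc hE (hlow z hz.1) (mul_pos hCpos hr) hrk
      hsub hball))

variable (μ)

lemma exists_pos_ae_densityOnePts_notMem_nhdsGT :
    ∃ δ : ℝ≥0∞, 0 < δ ∧ ∀ E, MeasurableSet E → ∀ᵐ z ∂μ, ∀ k t,
      Ψ (z, t) ∈ lowDensityPts E δ k → {s | Ψ (z, s) ∈ densityOnePts E} ∉ 𝓝[>] t := by
  obtain ⟨c, hc0, -, hc⟩ := exists_measure_image_eq_mul Ψ (μ.prod volume) volume
  have hdim : Module.finrank ℝ (EuclideanSpace ℝ (Fin N)) = Module.finrank ℝ B + 1 := by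
    rw [← Ψ.toLinearEquiv.finrank_eq, Module.finrank_prod, Module.finrank_self]
  obtain ⟨δ, hδ0, hδ⟩ := exists_pos_mul_measure_ball_lt hdim μ volume
    (show 0 < 2 * (‖(Ψ : B × ℝ →L[ℝ] EuclideanSpace ℝ (Fin N))‖ + 1) by positivity) hc0
  refine ⟨δ, hδ0, fun E hE => ?_⟩
  let η : ℕ → ℝ := fun m => 1 / ((m : ℝ) + 1)
  have hη : ∀ m, 0 < η m := fun m => Nat.one_div_pos_of_nat
  have hnull : ∀ᵐ z ∂μ, ∀ k m (j : ℤ), z ∉ risingLines Ψ E δ k (j * η m) (η m) := by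
    simp only [ae_all_iff, ← measure_eq_zero_iff_ae_notMem]
    exact fun k m j => measure_risingLines_eq_zero Ψ hc hδ hE k _ (hη m)
  filter_upwards [hnull] with z hz k t hlow hmem
  obtain ⟨u, htu, hu⟩ := mem_nhdsGT_iff_exists_Ioo_subset.1 hmem
  obtain ⟨m, hm⟩ := exists_nat_one_div_lt (half_pos (sub_pos.2 (mem_Ioi.1 htu)))
  refine hz k m ⌊t / η m⌋ ⟨t, ⟨(le_div_iff₀ (hη m)).1 (Int.floor_le _), ?_⟩, hlow,
    fun s hs => hu ⟨hs.1, ?_⟩⟩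
  · linarith [(div_lt_iff₀ (hη m)).1 (Int.lt_floor_add_one (t / η m))]
  · have hs' : s < t + 2 * (1 / ((m : ℝ) + 1)) := hs.2
    linarith

lemma exists_pos_ae_densityOnePts_notMem_nhdsLT :
    ∃ δ : ℝ≥0∞, 0 < δ ∧ ∀ E, MeasurableSet E → ∀ᵐ z ∂μ, ∀ k t,
      Ψ (z, t) ∈ lowDensityPts E δ k → {s | Ψ (z, s) ∈ densityOnePts E} ∉ 𝓝[<] t := by
  obtain ⟨Ψ', hΨ'⟩ : ∃ Ψ' : (B × ℝ) ≃L[ℝ] EuclideanSpace ℝ (Fin N), ∀ z t, Ψ' (z, t) = Ψ (z, -t) :=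
    ⟨((ContinuousLinearEquiv.refl ℝ B).prodCongr (ContinuousLinearEquiv.neg ℝ)).trans Ψ,
      fun _ _ => by simp⟩
  obtain ⟨δ, hδ, hnotMem⟩ := exists_pos_ae_densityOnePts_notMem_nhdsGT Ψ' μ
  refine ⟨δ, hδ, fun E hE => ?_⟩
  filter_upwards [hnotMem E hE] with z hz k t hlow hmem
  refine hz k (-t) (by rwa [hΨ', neg_neg]) ?_
  have hneg : Tendsto (fun s : ℝ => -s) (𝓝[>] (-t)) (𝓝[<] t) := by
    simpa only [neg_neg] using tendsto_neg_nhdsGT (a := -t)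
  filter_upwards [hneg.eventually hmem] with s hs
  exact (hΨ' z s).symm ▸ hs

lemma exists_ae_isSeparatingCover :
    ∃ δ : ℝ≥0∞, ∀ E, MeasurableSet E → ∀ᵐ z ∂μ,
      IsSeparatingCover {t | Ψ (z, t) ∈ densityZeroPts E} {t | Ψ (z, t) ∈ densityOnePts E}
        fun k => {t | Ψ (z, t) ∈ lowDensityPts E δ k} := by
  obtain ⟨δ₁, hδ₁, hGT⟩ := exists_pos_ae_densityOnePts_notMem_nhdsGT Ψ μ
  obtain ⟨δ₂, hδ₂, hLT⟩ := exists_pos_ae_densityOnePts_notMem_nhdsLT Ψ μ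
  set δ := min (min δ₁ δ₂) 2⁻¹ with hδ
  have hδpos : 0 < δ := by simp [hδ, hδ₁, hδ₂]
  have hδone : δ < 1 := (min_le_right _ _).trans_lt (by simp)
  have hle₁ : δ ≤ δ₁ := (min_le_left _ _).trans (min_le_left _ _)
  have hle₂ : δ ≤ δ₂ := (min_le_left _ _).trans (min_le_right _ _)
  refine ⟨δ, fun E hE => ?_⟩
  filter_upwards [hGT E hE, hLT E hE] with z hzGT hzLT
  have hcont : Continuous fun t : ℝ => Ψ (z, t) := by fun_prop
  exact
    { isClosed := fun k => (isClosed_lowDensityPts E δ k).preimage hcont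
      subset_iUnion := fun t ht => by
        obtain ⟨k, hk⟩ := mem_iUnion.1 (densityZeroPts_subset_iUnion_lowDensityPts E hδpos ht)
        exact mem_iUnion.2 ⟨k, hk⟩
      disjoint := fun k => (disjoint_lowDensityPts_densityOnePts E hδone k).preimage _
      notMem_nhdsGT := fun k t ht => hzGT k t (lowDensityPts_mono hle₁ k ht)
      notMem_nhdsLT := fun k t ht => hzLT k t (lowDensityPts_mono hle₂ k ht) }

/-- `A` jumps only in `T`: on every open interval missing `T`, either `A` or its complement is
negligible. -/
def JumpsIn (A T : Set ℝ) : Prop :=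
  ∀ a b, Disjoint (Ioo a b) T → volume (Ioo a b ∩ A) = 0 ∨ volume (Ioo a b \ A) = 0

lemma ae_jumpsIn_essBdry (hE : MeasurableSet E) :
    ∀ᵐ z ∂μ, JumpsIn {t | Ψ (z, t) ∈ E} {t | Ψ (z, t) ∈ essBdry E} := by
  obtain ⟨δ, hcover⟩ := exists_ae_isSeparatingCover Ψ μ
  filter_upwards [hcover E hE, hcover Eᶜ hE.compl,
    ae_volume_preimage_line_eq_zero Ψ μ (volume_compl_sdiff_densityZeroPts hE),
    ae_volume_preimage_line_eq_zero Ψ μ (volume_sdiff_densityOnePts hE)]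
    with z hzero hone hnullZero hnullOne a b hab
  rw [densityZeroPts_compl hE, densityOnePts_compl hE] at hone
  have hdisj : Disjoint {t | Ψ (z, t) ∈ densityZeroPts E} {t | Ψ (z, t) ∈ densityOnePts E} :=
    (disjoint_densityOnePts_densityZeroPts E).symm.preimage _
  have hunion : Ioo a b ⊆ {t | Ψ (z, t) ∈ densityZeroPts E} ∪ {t | Ψ (z, t) ∈ densityOnePts E} :=
    fun t ht => (notMem_compl_iff.1 (disjoint_left.1 hab ht)).symm
  rcases hzero.subset_or_subset hone isOpen_Ioo ordConnected_Ioo hdisj hunion with h | h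
  · refine Or.inl (measure_mono_null (fun t ht => ?_) hnullOne)
    exact ⟨ht.2, disjoint_left.1 hdisj (h ht.1)⟩
  · refine Or.inr (measure_mono_null (fun t ht => ?_) hnullZero)
    exact ⟨ht.2, disjoint_right.1 hdisj (h ht.1)⟩

end Slicing

section Eilenberg

variable {X F : Type*} [MetricSpace X] [SecondCountableTopology X] [Nonempty X]

/-- The cells of a countable Borel partition of `X` into sets of diameter at most `2 / (m + 1)`. -/
def meshCell (X : Type*) [MetricSpace X] [SecondCountableTopology X] [Nonempty X] (m : ℕ) :
    ℕ → Set X :=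
  disjointed fun j => ball (TopologicalSpace.denseSeq X j) (1 / ((m : ℝ) + 1))

lemma pairwise_disjoint_meshCell (m : ℕ) : Pairwise (Function.onFun Disjoint (meshCell X m)) :=
  disjoint_disjointed _

lemma iUnion_meshCell (m : ℕ) : ⋃ j, meshCell X m j = univ := by
  refine (iUnion_disjointed).trans (eq_univ_of_forall fun x => ?_)
  obtain ⟨j, hj⟩ := (TopologicalSpace.denseRange_denseSeq X).exists_dist_lt x
    (Nat.one_div_pos_of_nat (α := ℝ) (n := m))
  exact mem_iUnion.2 ⟨j, hj⟩

lemma exists_mem_meshCell (m : ℕ) (x : X) : ∃ j, x ∈ meshCell X m j :=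
  iUnion_eq_univ_iff.1 (iUnion_meshCell m) x

lemma dist_lt_of_mem_meshCell {m j : ℕ} {x y : X} (hx : x ∈ meshCell X m j)
    (hy : y ∈ meshCell X m j) : dist x y < 2 * (1 / ((m : ℝ) + 1)) := by
  have hball : meshCell X m j ⊆ ball (TopologicalSpace.denseSeq X j) (1 / ((m : ℝ) + 1)) :=
    disjointed_subset _ j
  linarith [mem_ball.1 (hball hx), mem_ball.1 (hball hy),
    dist_triangle_right x y (TopologicalSpace.denseSeq X j)]

lemma eventually_two_mul_one_div_lt {ε : ℝ} (hε : 0 < ε) :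
    ∀ᶠ m : ℕ in atTop, 2 * (1 / ((m : ℝ) + 1)) < ε := by
  have hlim := (tendsto_one_div_add_atTop_nhds_zero_nat (𝕜 := ℝ)).const_mul 2
  rw [mul_zero] at hlim
  exact hlim.eventually_lt_const hε

lemma eventually_injOn_of_mem_meshCell {i : ℕ → X → ℕ} (hi : ∀ m x, x ∈ meshCell X m (i m x))
    (s : Finset X) : ∀ᶠ m in atTop, InjOn (i m) s := by
  suffices ∀ᶠ m in atTop, ∀ x ∈ s, ∀ y ∈ s, i m x = i m y → x = y from
    this.mono fun m hm x hx y hy => hm x hx y hy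
  refine (eventually_all_finset s).2 fun x _ => (eventually_all_finset s).2 fun y _ => ?_
  rcases eq_or_ne x y with hxy | hxy
  · exact Eventually.of_forall fun _ _ => hxy
  · filter_upwards [eventually_two_mul_one_div_lt (dist_pos.2 hxy)] with m hm heq
    exact absurd (dist_lt_of_mem_meshCell (heq ▸ hi m x) (hi m y)) hm.not_gt

lemma tendsto_iInf_meshCell {u : X → ℝ≥0∞} (hu : LowerSemicontinuous u) {x : X} {j : ℕ → ℕ}
    (hj : ∀ m, x ∈ meshCell X m (j m)) :
    Tendsto (fun m => ⨅ y ∈ meshCell X m (j m), u y) atTop (𝓝 (u x)) := by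
  refine tendsto_order.2 ⟨fun b hb => ?_, fun b hb => ?_⟩
  · obtain ⟨b', hbb', hb'⟩ := exists_between hb
    obtain ⟨ε, hε, hball⟩ := Metric.eventually_nhds_iff.1 (hu x b' hb')
    filter_upwards [eventually_two_mul_one_div_lt hε] with m hm
    exact hbb'.trans_le (le_iInf₂ fun y hy =>
      (hball ((dist_lt_of_mem_meshCell hy (hj m)).trans hm)).le)
  · exact Eventually.of_forall fun m => (iInf₂_le x (hj m)).trans_lt hb

variable [MetricSpace F] [MeasurableSpace F] [BorelSpace F]

/-- A measurable approximation from below, on the scale `1 / (m + 1)`, of the sum of `u` over the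
fibres `S ∩ P ⁻¹' {z}`. -/
def meshFiberSum (d : ℝ) (P : X → F) (S : Set X) (u : X → ℝ≥0∞) (m : ℕ) (z : F) : ℝ≥0∞ :=
  ∑' j, (toMeasurable μH[d] (P '' (S ∩ meshCell X m j))).indicator
    (fun _ => ⨅ x ∈ meshCell X m j, u x) z

lemma measurable_meshFiberSum (d : ℝ) (P : X → F) (S : Set X) (u : X → ℝ≥0∞) (m : ℕ) :
    Measurable (meshFiberSum d P S u m) :=
  Measurable.tsum fun _ => measurable_const.indicator (measurableSet_toMeasurable _ _)

lemma tsum_fiber_le_liminf_meshFiberSum (d : ℝ) (P : X → F) (S : Set X) {u : X → ℝ≥0∞}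
    (hu : LowerSemicontinuous u) (z : F) :
    ∑' x : (S ∩ P ⁻¹' {z} : Set X), u x ≤ liminf (meshFiberSum d P S u · z) atTop := by
  classical
  choose i hi using exists_mem_meshCell (X := X)
  rw [ENNReal.tsum_eq_iSup_sum]
  refine iSup_le fun s => ?_
  have hsum : Tendsto (fun m => ∑ x ∈ s, ⨅ y ∈ meshCell X m (i m x), u y) atTop
      (𝓝 (∑ x ∈ s, u x)) :=
    tendsto_finsetSum _ fun x _ => tendsto_iInf_meshCell hu fun m => hi m x
  rw [← hsum.liminf_eq]
  refine liminf_le_liminf ?_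
  filter_upwards [eventually_injOn_of_mem_meshCell hi (s.image Subtype.val)] with m hinj
  set term : ℕ → ℝ≥0∞ := fun j =>
    (toMeasurable μH[d] (P '' (S ∩ meshCell X m j))).indicator
      (fun _ => ⨅ x ∈ meshCell X m j, u x) z
  calc ∑ x ∈ s, ⨅ y ∈ meshCell X m (i m x), u y = ∑ x ∈ s, term (i m x) := by
        refine Finset.sum_congr rfl fun x _ => ?_
        have hz : z ∈ toMeasurable μH[d] (P '' (S ∩ meshCell X m (i m x))) :=
          subset_toMeasurable _ _ ⟨x, ⟨x.2.1, hi m x⟩, x.2.2⟩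
        simp only [term, indicator_of_mem hz]
    _ = ∑ j ∈ s.image (fun x : (S ∩ P ⁻¹' {z} : Set X) => i m x), term j := by
        refine (Finset.sum_image fun x hx y hy hxy => Subtype.ext (hinj ?_ ?_ hxy)).symm
        · exact Finset.mem_coe.2 (Finset.mem_image_of_mem _ hx)
        · exact Finset.mem_coe.2 (Finset.mem_image_of_mem _ hy)
    _ ≤ meshFiberSum d P S u m z := ENNReal.sum_le_tsum _

variable [MeasurableSpace X] [BorelSpace X]

lemma measurableSet_meshCell (m j : ℕ) : MeasurableSet (meshCell X m j) :=
  MeasurableSet.disjointed (fun _ => measurableSet_ball) j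

lemma lintegral_meshFiberSum_le {P : X → F} (hP : LipschitzWith 1 P) {d : ℝ} (hd : 0 ≤ d)
    (S : Set X) (u : X → ℝ≥0∞) (m : ℕ) :
    ∫⁻ z, meshFiberSum d P S u m z ∂μH[d] ≤ ∫⁻ x in S, u x ∂μH[d] := by
  unfold meshFiberSum
  rw [lintegral_tsum fun j =>
      (measurable_const.indicator (measurableSet_toMeasurable _ _)).aemeasurable,
    ← setLIntegral_univ (μ := μH[d].restrict S), ← iUnion_meshCell m,
    lintegral_iUnion (measurableSet_meshCell m) (pairwise_disjoint_meshCell m)]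
  refine ENNReal.tsum_le_tsum fun j => ?_
  have himage : μH[d] (P '' (S ∩ meshCell X m j)) ≤ μH[d] (S ∩ meshCell X m j) := by
    simpa using hP.lipschitzOnWith.hausdorffMeasure_image_le hd (s := S ∩ meshCell X m j)
  rw [lintegral_indicator (measurableSet_toMeasurable _ _), setLIntegral_const,
    measure_toMeasurable]
  calc (⨅ x ∈ meshCell X m j, u x) * μH[d] (P '' (S ∩ meshCell X m j))
      ≤ (⨅ x ∈ meshCell X m j, u x) * μH[d].restrict S (meshCell X m j) := by
        rw [Measure.restrict_apply (measurableSet_meshCell m j), inter_comm _ S]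
        gcongr
    _ = ∫⁻ _ in meshCell X m j, ⨅ x ∈ meshCell X m j, u x ∂μH[d].restrict S := by
        rw [setLIntegral_const]
    _ ≤ ∫⁻ x in meshCell X m j, u x ∂μH[d].restrict S :=
        setLIntegral_mono' (measurableSet_meshCell m j) fun x hx => iInf₂_le x hx

lemma exists_measurable_tsum_fiber_le {P : X → F} (hP : LipschitzWith 1 P) {d : ℝ} (hd : 0 ≤ d)
    (S : Set X) {u : X → ℝ≥0∞} (hu : LowerSemicontinuous u) :
    ∃ g : F → ℝ≥0∞, Measurable g ∧ (∀ z, ∑' x : (S ∩ P ⁻¹' {z} : Set X), u x ≤ g z) ∧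
      ∫⁻ z, g z ∂μH[d] ≤ ∫⁻ x in S, u x ∂μH[d] := by
  have hmeas := measurable_meshFiberSum d P S u
  refine ⟨fun z => liminf (meshFiberSum d P S u · z) atTop, Measurable.liminf hmeas,
    tsum_fiber_le_liminf_meshFiberSum d P S hu, (lintegral_liminf_le hmeas).trans ?_⟩
  exact liminf_le_of_frequently_le'
    (Frequently.of_forall fun m => lintegral_meshFiberSum_le hP hd S u m)

lemma ae_finite_fiber {P : X → F} (hP : LipschitzWith 1 P) {d : ℝ} (hd : 0 ≤ d) {S : Set X}
    (hS : μH[d] S ≠ ⊤) : ∀ᵐ z ∂(μH[d] : Measure F), (S ∩ P ⁻¹' {z}).Finite := by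
  obtain ⟨g, hg, hle, hint⟩ := exists_measurable_tsum_fiber_le hP hd S (u := fun _ => 1)
    lowerSemicontinuous_const
  have hfin : ∫⁻ z, g z ∂μH[d] ≠ ⊤ := ne_top_of_le_ne_top hS (hint.trans (by simp))
  filter_upwards [ae_lt_top hg hfin] with z hz
  have hcard : ENat.card (S ∩ P ⁻¹' {z} : Set X) ≠ ⊤ := fun htop => by
    simpa [htop] using (hle z).trans_lt hz
  simpa [Set.finite_coe_iff] using hcard

end Eilenberg

section Isodiametric

open scoped Pointwise

lemma volume_add_volume_le_of_isCompact {K L C : Set ℝ} (hK : IsCompact K) (hL : IsCompact L)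
    (hKne : K.Nonempty) (hLne : L.Nonempty) (hC : ∀ x ∈ K, ∀ y ∈ L, midpoint ℝ x y ∈ C) :
    volume K + volume L ≤ 2 * volume C := by
  obtain ⟨k, hk, hkmax⟩ := hK.exists_isGreatest hKne
  obtain ⟨l, hl, hlmin⟩ := hL.exists_isLeast hLne
  have hmid : ∀ x y : ℝ, (2 : ℝ) • midpoint ℝ x y = x + y := fun x y => by
    rw [midpoint_eq_smul_add, smul_smul, mul_invOf_self, one_smul]
  have hinter : volume ((· + l) '' K ∩ (k + ·) '' L) = 0 := by
    refine measure_mono_null (t := {k + l}) ?_ (measure_singleton _)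
    rintro _ ⟨⟨x, hx, rfl⟩, ⟨y, hy, hxy⟩⟩
    have hxk := hkmax hx
    have hly := hlmin hy
    simp only [mem_singleton_iff] at hxy ⊢
    linarith
  calc volume K + volume L = volume ((· + l) '' K ∪ (k + ·) '' L) := by
        rw [measure_union₀ (hL.image (by fun_prop)).measurableSet.nullMeasurableSet hinter]
        simp
    _ ≤ volume ((2 : ℝ) • C) := by
        refine measure_mono ?_
        rintro _ (⟨x, hx, rfl⟩ | ⟨y, hy, rfl⟩)
        · exact ⟨_, hC x hx l hl, hmid x l⟩
        · exact ⟨_, hC k hk y hy, hmid k y⟩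
    _ = 2 * volume C := by simp [Measure.addHaar_smul]

lemma volume_add_volume_le_two_mul {A B C : Set ℝ} (hA : MeasurableSet A) (hB : MeasurableSet B)
    (hAne : A.Nonempty) (hBne : B.Nonempty) (hC : ∀ x ∈ A, ∀ y ∈ B, midpoint ℝ x y ∈ C) :
    volume A + volume B ≤ 2 * volume C := by
  obtain ⟨x₀, hx₀⟩ := hAne
  obtain ⟨y₀, hy₀⟩ := hBne
  have hcompact : ∀ K, K ⊆ A ∧ IsCompact K → ∀ L, L ⊆ B ∧ IsCompact L →
      volume K + volume L ≤ 2 * volume C := by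
    rintro K ⟨hKA, hK⟩ L ⟨hLB, hL⟩
    calc volume K + volume L ≤ volume (insert x₀ K) + volume (insert y₀ L) := by
          gcongr <;> exact subset_insert _ _
      _ ≤ 2 * volume C :=
          volume_add_volume_le_of_isCompact (hK.insert x₀) (hL.insert y₀) (insert_nonempty _ _)
            (insert_nonempty _ _) fun x hx y hy =>
              hC x (insert_subset hx₀ hKA hx) y (insert_subset hy₀ hLB hy)
  rw [hA.measure_eq_iSup_isCompact, hB.measure_eq_iSup_isCompact]
  simp only [iSup_and']
  exact ENNReal.biSup_add_biSup_le' ⟨∅, empty_subset _, isCompact_empty⟩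
    ⟨∅, empty_subset _, isCompact_empty⟩ hcompact

lemma lintegral_eq_lintegral_measure_ofReal_lt {α : Type*} [MeasurableSpace α] (μ : Measure α)
    {f : α → ℝ≥0∞} (hf : Measurable f) (hfin : ∀ x, f x ≠ ⊤) :
    ∫⁻ x, f x ∂μ = ∫⁻ t in Ioi (0 : ℝ), μ {x | ENNReal.ofReal t < f x} := by
  have hlayer := lintegral_eq_lintegral_meas_lt μ
    (Eventually.of_forall fun x => ENNReal.toReal_nonneg (a := f x)) hf.ennreal_toReal.aemeasurable
  simp only [ENNReal.ofReal_toReal (hfin _)] at hlayer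
  rw [hlayer]
  refine setLIntegral_congr_fun measurableSet_Ioi fun t ht => ?_
  simp only [ENNReal.ofReal_lt_iff_lt_toReal (mem_Ioi.1 ht).le (hfin _)]

lemma lintegral_add_lintegral_le_two_mul {f g h : ℝ → ℝ≥0∞} (hf : Measurable f)
    (hg : Measurable g) (hh : Measurable h) (hfsup : ⨆ x, f x = 1) (hgsup : ⨆ x, g x = 1)
    (hhfin : ∀ x, h x ≠ ⊤) (hfgh : ∀ x y, f x * g y ≤ h (midpoint ℝ x y) ^ 2) :
    (∫⁻ x, f x) + ∫⁻ x, g x ≤ 2 * ∫⁻ x, h x := by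
  have hfle : ∀ x, f x ≤ 1 := fun x => hfsup ▸ le_iSup f x
  have hgle : ∀ x, g x ≤ 1 := fun x => hgsup ▸ le_iSup g x
  have hanti : ∀ k : ℝ → ℝ≥0∞, Measurable fun t : ℝ => volume {x | ENNReal.ofReal t < k x} :=
    fun k => Antitone.measurable fun s t hst =>
      measure_mono fun x hx => (ENNReal.ofReal_le_ofReal hst).trans_lt hx
  rw [lintegral_eq_lintegral_measure_ofReal_lt volume hf
      fun x => ne_top_of_le_ne_top ENNReal.one_ne_top (hfle x),
    lintegral_eq_lintegral_measure_ofReal_lt volume hg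
      fun x => ne_top_of_le_ne_top ENNReal.one_ne_top (hgle x),
    lintegral_eq_lintegral_measure_ofReal_lt volume hh hhfin,
    ← lintegral_add_left (hanti f), ← lintegral_const_mul _ (hanti h)]
  refine lintegral_mono fun t => ?_
  rcases lt_or_ge (ENNReal.ofReal t) 1 with ht | ht
  · refine volume_add_volume_le_two_mul (measurableSet_lt measurable_const hf)
      (measurableSet_lt measurable_const hg) ?_ ?_ fun x hx y hy => ?_
    · exact lt_iSup_iff.1 (ht.trans_eq hfsup.symm)
    · exact lt_iSup_iff.1 (ht.trans_eq hgsup.symm)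
    suffices ENNReal.ofReal t ^ 2 < h (midpoint ℝ x y) ^ 2 from
      lt_of_not_ge fun hle => this.not_ge (pow_le_pow_left' hle 2)
    calc ENNReal.ofReal t ^ 2 < f x * g y := by
          rw [sq]
          exact ENNReal.mul_lt_mul hx hy
      _ ≤ h (midpoint ℝ x y) ^ 2 := hfgh x y
  · simp [fun x => ((hfle x).trans ht).not_gt, fun x => ((hgle x).trans ht).not_gt]

lemma mul_le_sq_of_add_le_two_mul {p q r : ℝ≥0∞} (h : p + q ≤ 2 * r) : p * q ≤ r ^ 2 := by
  rcases eq_or_ne r ⊤ with rfl | hr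
  · simp
  have htop : 2 * r ≠ ⊤ := ENNReal.mul_ne_top ENNReal.ofNat_ne_top hr
  lift p to ℝ≥0 using ne_top_of_le_ne_top htop (le_self_add.trans h)
  lift q to ℝ≥0 using ne_top_of_le_ne_top htop (le_add_self.trans h)
  lift r to ℝ≥0 using hr
  have hreal : (p : ℝ) + q ≤ 2 * r := by exact_mod_cast h
  have hsq : (p : ℝ) * q ≤ r ^ 2 := by
    nlinarith [sq_nonneg ((p : ℝ) - q), p.coe_nonneg, q.coe_nonneg, r.coe_nonneg]
  exact_mod_cast hsq

-- After dividing `f` and `g` by their suprema, the sets where they exceed a given `t < 1` are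
-- nonempty, so that the one-dimensional Brunn–Minkowski inequality applies to them.
lemma lintegral_mul_lintegral_le_sq_of_le {f g h : ℝ → ℝ≥0∞} (hf : Measurable f)
    (hg : Measurable g) (hh : Measurable h) {R : ℝ≥0∞} (hR : R ≠ ⊤) (hfR : ∀ x, f x ≤ R)
    (hgR : ∀ x, g x ≤ R) (hhR : ∀ x, h x ≤ R) (hfgh : ∀ x y, f x * g y ≤ h (midpoint ℝ x y) ^ 2) :
    (∫⁻ x, f x) * ∫⁻ x, g x ≤ (∫⁻ x, h x) ^ 2 := by
  set a := ⨆ x, f x with ha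
  set b := ⨆ x, g x with hb
  have hatop : a ≠ ⊤ := ne_top_of_le_ne_top hR (iSup_le hfR)
  have hbtop : b ≠ ⊤ := ne_top_of_le_ne_top hR (iSup_le hgR)
  rcases eq_or_ne a 0 with ha0 | ha0
  · simp [ENNReal.iSup_eq_zero.1 ha0]
  rcases eq_or_ne b 0 with hb0 | hb0
  · simp [ENNReal.iSup_eq_zero.1 hb0]
  obtain ⟨c, hc⟩ : ∃ c : ℝ≥0∞, c ^ 2 = a * b := ⟨(a * b) ^ (1 / 2 : ℝ), by
    rw [← ENNReal.rpow_natCast, ← ENNReal.rpow_mul]; norm_num⟩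
  have hc0 : c ≠ 0 := by rintro rfl; simp [eq_comm, ha0, hb0] at hc
  have hctop : c ≠ ⊤ := by rintro rfl; simp [eq_comm, ENNReal.mul_eq_top, hatop, hbtop] at hc
  have hdiv : ∀ p q : ℝ≥0∞, p / a * (q / b) = p * q / c ^ 2 := fun p q => by
    rw [hc, ENNReal.mul_div_mul_comm (Or.inl ha0) (Or.inl hatop)]
  have hsq : ∀ p : ℝ≥0∞, (p / c) ^ 2 = p ^ 2 / c ^ 2 := fun p => by
    rw [div_eq_mul_inv, mul_pow, div_eq_mul_inv, ENNReal.inv_pow]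
  have hnormalized : (∫⁻ x, f x / a) + ∫⁻ x, g x / b ≤ 2 * ∫⁻ x, h x / c := by
    refine lintegral_add_lintegral_le_two_mul (by fun_prop) (by fun_prop) (by fun_prop) ?_ ?_
      (fun x => ENNReal.div_ne_top (ne_top_of_le_ne_top hR (hhR x)) hc0) fun x y => ?_
    · rw [← ENNReal.iSup_div, ← ha, ENNReal.div_self ha0 hatop]
    · rw [← ENNReal.iSup_div, ← hb, ENNReal.div_self hb0 hbtop]
    · rw [hdiv, hsq]
      exact ENNReal.div_le_div_right (hfgh x y) _
  have hamgm := mul_le_sq_of_add_le_two_mul hnormalized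
  simp only [div_eq_mul_inv, lintegral_mul_const _ hf, lintegral_mul_const _ hg,
    lintegral_mul_const _ hh] at hamgm
  rw [← div_eq_mul_inv, ← div_eq_mul_inv, ← div_eq_mul_inv, hdiv, hsq] at hamgm
  rwa [ENNReal.div_le_iff (pow_ne_zero 2 hc0) (ENNReal.pow_ne_top hctop),
    ENNReal.div_mul_cancel (pow_ne_zero 2 hc0) (ENNReal.pow_ne_top hctop)] at hamgm

lemma lintegral_eq_iSup_lintegral_min_natCast {α : Type*} [MeasurableSpace α] (μ : Measure α)
    {f : α → ℝ≥0∞} (hf : Measurable f) :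
    ∫⁻ x, f x ∂μ = ⨆ k : ℕ, ∫⁻ x, min (f x) k ∂μ := by
  have hsup : ∀ x, f x = ⨆ k : ℕ, min (f x) k := fun x => by
    rw [← inf_iSup_eq, ENNReal.iSup_natCast, inf_top_eq]
  rw [lintegral_congr hsup]
  refine lintegral_iSup (fun k => by fun_prop) fun k l hkl x => ?_
  exact min_le_min_left _ (Nat.cast_le.2 hkl)

lemma lintegral_mul_lintegral_le_sq {f g h : ℝ → ℝ≥0∞} (hf : Measurable f) (hg : Measurable g)
    (hh : Measurable h) (hfgh : ∀ x y, f x * g y ≤ h (midpoint ℝ x y) ^ 2) :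
    (∫⁻ x, f x) * ∫⁻ x, g x ≤ (∫⁻ x, h x) ^ 2 := by
  rw [lintegral_eq_iSup_lintegral_min_natCast volume hf,
    lintegral_eq_iSup_lintegral_min_natCast volume hg, ENNReal.iSup_mul]
  refine iSup_le fun k => (ENNReal.mul_iSup ..).le.trans (iSup_le fun l => ?_)
  set m := max k l
  have hmin : ∀ x y, min (f x) k * min (g y) l ≤ min (h (midpoint ℝ x y)) m ^ 2 := fun x y => by
    rcases min_choice (h (midpoint ℝ x y)) (m : ℝ≥0∞) with hmid | hmid <;> rw [hmid]
    · exact (mul_le_mul' (min_le_left _ _) (min_le_left _ _)).trans (hfgh x y)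
    · rw [sq]
      exact mul_le_mul' ((min_le_right _ _).trans (Nat.cast_le.2 (le_max_left k l)))
        ((min_le_right _ _).trans (Nat.cast_le.2 (le_max_right k l)))
  calc (∫⁻ x, min (f x) k) * ∫⁻ x, min (g x) l ≤ (∫⁻ x, min (h x) m) ^ 2 :=
        lintegral_mul_lintegral_le_sq_of_le (by fun_prop) (by fun_prop) (by fun_prop)
          (ENNReal.natCast_ne_top m)
          (fun x => (min_le_right _ _).trans (Nat.cast_le.2 (le_max_left k l)))
          (fun x => (min_le_right _ _).trans (Nat.cast_le.2 (le_max_right k l)))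
          (fun x => min_le_right _ _) hmin
    _ ≤ (∫⁻ x, h x) ^ 2 := by gcongr; exact min_le_left _ _

lemma piFinSuccAbove_zero_symm_preimage {n : ℕ} (A : Set (Fin (n + 1) → ℝ)) (t : ℝ) :
    Prod.mk t ⁻¹' ((MeasurableEquiv.piFinSuccAbove (fun _ => ℝ) 0).symm ⁻¹' A) =
      {z : Fin n → ℝ | Fin.cons t z ∈ A} := by
  ext z
  simp [MeasurableEquiv.piFinSuccAbove, Fin.consEquiv]

lemma measurableSet_cons_slice {n : ℕ} {A : Set (Fin (n + 1) → ℝ)} (hA : MeasurableSet A) (t : ℝ) :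
    MeasurableSet {z : Fin n → ℝ | Fin.cons t z ∈ A} := by
  rw [← piFinSuccAbove_zero_symm_preimage]
  exact measurable_prodMk_left ((MeasurableEquiv.measurable _) hA)

lemma measurable_volume_cons_slice {n : ℕ} {A : Set (Fin (n + 1) → ℝ)} (hA : MeasurableSet A) :
    Measurable fun t : ℝ => volume {z : Fin n → ℝ | Fin.cons t z ∈ A} := by
  simp only [← piFinSuccAbove_zero_symm_preimage]
  exact measurable_measure_prodMk_left ((MeasurableEquiv.measurable _) hA)

lemma volume_eq_lintegral_volume_cons_slice {n : ℕ} {A : Set (Fin (n + 1) → ℝ)}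
    (hA : MeasurableSet A) :
    volume A = ∫⁻ t : ℝ, volume {z : Fin n → ℝ | Fin.cons t z ∈ A} := by
  rw [← ((volume_preserving_piFinSuccAbove (fun _ => ℝ) 0).symm _).measure_preimage
    hA.nullMeasurableSet, Measure.volume_eq_prod,
    Measure.prod_apply ((MeasurableEquiv.measurable _) hA)]
  simp only [piFinSuccAbove_zero_symm_preimage]

lemma volume_mul_volume_le_sq {n : ℕ} {A B C : Set (Fin n → ℝ)} (hA : MeasurableSet A)
    (hB : MeasurableSet B) (hC : MeasurableSet C) (hABC : ∀ x ∈ A, ∀ y ∈ B, midpoint ℝ x y ∈ C) :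
    volume A * volume B ≤ volume C ^ 2 := by
  induction n with
  | zero =>
    rcases A.eq_empty_or_nonempty with rfl | ⟨x, hx⟩
    · simp
    rcases B.eq_empty_or_nonempty with rfl | ⟨y, hy⟩
    · simp
    rw [Subsingleton.eq_univ_of_nonempty ⟨_, hABC x hx y hy⟩,
      Subsingleton.eq_univ_of_nonempty ⟨_, hx⟩, Subsingleton.eq_univ_of_nonempty ⟨_, hy⟩, sq]
  | succ n ih =>
    rw [volume_eq_lintegral_volume_cons_slice hA, volume_eq_lintegral_volume_cons_slice hB,
      volume_eq_lintegral_volume_cons_slice hC]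
    refine lintegral_mul_lintegral_le_sq (measurable_volume_cons_slice hA)
      (measurable_volume_cons_slice hB) (measurable_volume_cons_slice hC) fun s t => ?_
    refine ih (measurableSet_cons_slice hA s) (measurableSet_cons_slice hB t)
      (measurableSet_cons_slice hC _) fun x hx y hy => ?_
    have hcons : (Fin.cons (midpoint ℝ s t) (midpoint ℝ x y) : Fin (n + 1) → ℝ) =
        midpoint ℝ (Fin.cons s x : Fin (n + 1) → ℝ) (Fin.cons t y : Fin (n + 1) → ℝ) := by
      ext i
      refine Fin.cases ?_ (fun j => ?_) i <;> simp [midpoint_eq_smul_add, mul_add]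
    rw [mem_ofPred_eq, hcons]
    exact hABC _ hx _ hy

lemma euclidean_volume_mul_volume_le_sq {n : ℕ} {A B C : Set (EuclideanSpace ℝ (Fin n))}
    (hA : MeasurableSet A) (hB : MeasurableSet B) (hC : MeasurableSet C)
    (hABC : ∀ x ∈ A, ∀ y ∈ B, midpoint ℝ x y ∈ C) : volume A * volume B ≤ volume C ^ 2 := by
  have hpres := PiLp.volume_preserving_toLp (Fin n)
  rw [← hpres.measure_preimage hA.nullMeasurableSet, ← hpres.measure_preimage hB.nullMeasurableSet,
    ← hpres.measure_preimage hC.nullMeasurableSet]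
  refine volume_mul_volume_le_sq (hpres.measurable hA) (hpres.measurable hB) (hpres.measurable hC)
    fun x hx y hy => ?_
  simpa [midpoint_eq_smul_add] using hABC _ hx _ hy

-- The Brunn–Minkowski inequality for `s` and `-s`, whose midpoints lie in the ball.
lemma volume_le_volume_closedBall_half_diam {n : ℕ} {s : Set (EuclideanSpace ℝ (Fin n))}
    (hs : IsBounded s) :
    volume s ≤ volume (closedBall (0 : EuclideanSpace ℝ (Fin n)) (diam s / 2)) := by
  have hclosure : MeasurableSet (closure s) := isClosed_closure.measurableSet
  refine (measure_mono subset_closure).trans ((ENNReal.pow_le_pow_left_iff two_ne_zero).1 ?_)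
  calc volume (closure s) ^ 2 = volume (closure s) * volume (-closure s) := by
        rw [Measure.measure_neg, sq]
    _ ≤ volume (closedBall (0 : EuclideanSpace ℝ (Fin n)) (diam s / 2)) ^ 2 := by
        refine euclidean_volume_mul_volume_le_sq hclosure hclosure.neg measurableSet_closedBall
          fun x hx y hy => ?_
        have hdist := dist_le_diam_of_mem hs.closure hx hy
        rw [diam_closure, dist_eq_norm, sub_neg_eq_add] at hdist
        rw [mem_closedBall_zero_iff, midpoint_eq_smul_add, norm_smul, invOf_eq_inv, norm_inv,
          Real.norm_ofNat]
        linarith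

lemma two_pow_le_hausdorffMeasure_ball (n : ℕ) :
    (2 : ℝ≥0∞) ^ n ≤ μH[n] (ball (0 : EuclideanSpace ℝ (Fin n)) 1) := by
  set ω := volume (ball (0 : EuclideanSpace ℝ (Fin n)) 1)
  have hω0 : ω ≠ 0 := (measure_ball_pos volume _ one_pos).ne'
  have hωtop : ω ≠ ⊤ := measure_ball_lt_top.ne
  have hle : ((2 : ℝ≥0∞) ^ n / ω) • (volume : Measure (EuclideanSpace ℝ (Fin n))) ≤ μH[n] := by
    refine Measure.le_hausdorffMeasure _ _ 1 one_pos fun s hs => ?_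
    have hfin : ediam s ≠ ⊤ := ne_top_of_le_ne_top ENNReal.one_ne_top hs
    calc 2 ^ n / ω * volume s
        ≤ 2 ^ n / ω * volume (closedBall (0 : EuclideanSpace ℝ (Fin n)) (diam s / 2)) := by
          exact mul_le_mul_right
            (volume_le_volume_closedBall_half_diam (isBounded_iff_ediam_ne_top.2 hfin)) _
      _ = 2 ^ n / ω * ω * ENNReal.ofReal (diam s / 2) ^ n := by
          rw [Measure.addHaar_closedBall _ _ (by positivity), finrank_euclideanSpace_fin,
            ENNReal.ofReal_pow (by positivity)]
          ring
      _ = (2 * ENNReal.ofReal (diam s / 2)) ^ n := by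
          rw [ENNReal.div_mul_cancel hω0 hωtop, mul_pow]
      _ = ediam s ^ (n : ℝ) := by
          have htwo : 2 * ENNReal.ofReal (diam s / 2) = ENNReal.ofReal (2 * (diam s / 2)) := by
            rw [ENNReal.ofReal_mul zero_le_two, ENNReal.ofReal_ofNat]
          rw [htwo, mul_div_cancel₀ _ two_ne_zero, diam, ENNReal.ofReal_toReal hfin,
            ENNReal.rpow_natCast]
  calc (2 : ℝ≥0∞) ^ n = 2 ^ n / ω * ω := (ENNReal.div_mul_cancel hω0 hωtop).symm
    _ ≤ μH[n] (ball (0 : EuclideanSpace ℝ (Fin n)) 1) := hle _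

end Isodiametric

section UpperDensity

variable {X : Type*} [MetricSpace X] [MeasurableSpace X]

/-- The points at which the `d`-dimensional upper density of `ρ`, normalised by the `d`-th power of
the diameter as in Mathlib's `μH[d]`, is attained at level `t` along arbitrarily small radii. -/
def upperDensityPts (ρ : Measure X) (d : ℝ) (t : ℝ≥0∞) : Set X :=
  {x | ∀ ε > 0, ∃ r ∈ Ioo 0 ε, t * ENNReal.ofReal (2 * r) ^ d ≤ ρ (closedBall x r)}

variable [BorelSpace X] {d : ℝ}

lemma mul_hausdorffMeasure_le_of_coverings (hd : 0 ≤ d) {ρ : Measure X} {t c : ℝ≥0∞}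
    (ht0 : t ≠ 0) (htT : t ≠ ⊤) {B : Set X} {T : ℕ → Set X} {r : ℕ → X → ℝ}
    (hTc : ∀ k, (T k).Countable) (hr : ∀ k, ∀ x ∈ T k, r k x ∈ Ioo 0 (1 / ((k : ℝ) + 1)))
    (hρ : ∀ k, ∀ x ∈ T k, t * ENNReal.ofReal (2 * r k x) ^ d ≤ ρ (closedBall x (r k x)))
    (hdisj : ∀ k, (T k).PairwiseDisjoint fun x => closedBall x (r k x))
    (hc : ∀ k, ρ (⋃ x ∈ T k, closedBall x (r k x)) ≤ c)
    (hcov : ∀ k, B ⊆ ⋃ x ∈ T k, closedBall x (r k x)) : t * μH[d] B ≤ c := by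
  have hcount : ∀ k, Countable (T k) := fun k => (hTc k).to_subtype
  have hdiam : ∀ k (x : T k),
      ediam (closedBall (x : X) (r k x)) ≤ ENNReal.ofReal (2 * r k x) := fun k x => by
    have hrx := (hr k x x.2).1.le
    rw [ENNReal.ofReal_mul zero_le_two, ENNReal.ofReal_ofNat, ← closedEBall_ofReal hrx]
    exact ediam_closedEBall_le
  have htend : Tendsto (fun k : ℕ => ENNReal.ofReal (2 * (1 / ((k : ℝ) + 1)))) atTop (𝓝 0) := by
    simpa using ENNReal.tendsto_ofReal
      ((tendsto_one_div_add_atTop_nhds_zero_nat (𝕜 := ℝ)).const_mul 2)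
  have hlim := Measure.hausdorffMeasure_le_liminf_tsum d B _ htend
    (fun k (x : T k) => closedBall (x : X) (r k x))
    (Eventually.of_forall fun k x => (hdiam k x).trans (ENNReal.ofReal_le_ofReal
      (mul_le_mul_of_nonneg_left (hr k x x.2).2.le zero_le_two)))
    (Eventually.of_forall fun k => (hcov k).trans_eq (biUnion_eq_iUnion _ _))
  rw [mul_comm, ← ENNReal.le_div_iff_mul_le (Or.inl ht0) (Or.inl htT)]
  refine hlim.trans (liminf_le_of_frequently_le' (Eventually.of_forall fun k => ?_).frequently)
  rw [ENNReal.le_div_iff_mul_le (Or.inl ht0) (Or.inl htT), ← ENNReal.tsum_mul_right]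
  calc ∑' x : T k, ediam (closedBall (x : X) (r k x)) ^ d * t
      ≤ ∑' x : T k, ρ (closedBall (x : X) (r k x)) := by
        refine ENNReal.tsum_le_tsum fun x => ?_
        rw [mul_comm]
        exact (mul_le_mul_right (ENNReal.rpow_le_rpow (hdiam k x) hd) t).trans (hρ k x x.2)
    _ = ρ (⋃ x ∈ T k, closedBall x (r k x)) :=
        (measure_biUnion (hTc k) (hdisj k) fun _ _ => measurableSet_closedBall).symm
    _ ≤ c := hc k

variable [SecondCountableTopology X] [HasBesicovitchCovering X]

lemma exists_disjoint_closedBall_covering_ae_subset (ν : Measure X)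
    [SFinite ν] {B O : Set X} (hO : IsOpen O) (hBO : B ⊆ O) {f : X → Set ℝ}
    (hf : ∀ x ∈ B, ∀ δ > 0, (f x ∩ Ioo 0 δ).Nonempty) {ε : ℝ} (hε : 0 < ε) :
    ∃ (T : Set X) (r : X → ℝ), T.Countable ∧
      (∀ x ∈ T, r x ∈ f x ∩ Ioo 0 ε ∧ closedBall x (r x) ⊆ O) ∧
      ν (B \ ⋃ x ∈ T, closedBall x (r x)) = 0 ∧
      T.PairwiseDisjoint fun x => closedBall x (r x) := by
  have hfine : ∀ x ∈ B, ∀ δ > 0, ({r | r ∈ f x ∧ closedBall x r ⊆ O} ∩ Ioo 0 δ).Nonempty := by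
    intro x hx δ hδ
    obtain ⟨η, hη, hηO⟩ := Metric.isOpen_iff.1 hO x (hBO hx)
    obtain ⟨r, hrf, hr0, hrlt⟩ := hf x hx (min δ η) (lt_min hδ hη)
    rw [lt_min_iff] at hrlt
    exact ⟨r, ⟨hrf, (closedBall_subset_ball hrlt.2).trans hηO⟩, hr0, hrlt.1⟩
  obtain ⟨T, r, hTc, -, hr, hcov, hdisj⟩ :=
    Besicovitch.exists_disjoint_closedBall_covering_ae ν _ B hfine (fun _ => ε) fun _ _ => hε
  exact ⟨T, r, hTc, fun x hx => ⟨⟨(hr x hx).1.1, (hr x hx).2⟩, (hr x hx).1.2⟩, hcov, hdisj⟩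

lemma mul_hausdorffMeasure_le_of_subset_upperDensityPts (hd : 0 ≤ d) {B : Set X}
    (hB : μH[d] B ≠ ⊤) {ρ : Measure X} {t : ℝ≥0∞} (ht0 : t ≠ 0) (htT : t ≠ ⊤)
    (hBt : B ⊆ upperDensityPts ρ d t) {O : Set X} (hO : IsOpen O) (hBO : B ⊆ O) :
    t * μH[d] B ≤ ρ O := by
  have : IsFiniteMeasure ((μH[d] : Measure X).restrict B) :=
    isFiniteMeasure_restrict.2 hB
  have hfine : ∀ x ∈ B, ∀ δ > 0,
      ({r | t * ENNReal.ofReal (2 * r) ^ d ≤ ρ (closedBall x r)} ∩ Ioo 0 δ).Nonempty :=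
    fun x hx δ hδ => let ⟨r, hr, hrt⟩ := hBt hx δ hδ; ⟨r, hrt, hr⟩
  choose T r hTc hr hcov hdisj using fun k : ℕ =>
    exists_disjoint_closedBall_covering_ae_subset ((μH[d] : Measure X).restrict B) hO hBO hfine
      (Nat.one_div_pos_of_nat (α := ℝ) (n := k))
  set Z : Set X := ⋃ k, B \ ⋃ x ∈ T k, closedBall x (r k x)
  have hZ : μH[d] Z = 0 := measure_iUnion_null fun k => by
    rw [← Measure.restrict_eq_self _ sdiff_subset, hcov k]
  rw [← measure_sdiff_null hZ]
  refine mul_hausdorffMeasure_le_of_coverings hd ht0 htT hTc (fun k x hx => (hr k x hx).1.2)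
    (fun k x hx => (hr k x hx).1.1) hdisj
    (fun k => measure_mono (iUnion₂_subset fun x hx => (hr k x hx).2)) fun k x hx => ?_
  by_contra hxk
  exact hx.2 (mem_iUnion.2 ⟨k, hx.1, hxk⟩)

lemma hausdorffMeasure_inter_upperDensityPts_restrict (hd : 0 ≤ d) {S : Set X}
    (hS : μH[d] S ≠ ⊤) {t : ℝ≥0∞} (ht : 1 < t) (htT : t ≠ ⊤) :
    μH[d] (S ∩ upperDensityPts ((μH[d] : Measure X).restrict S) d t) = 0 := by
  have : IsFiniteMeasure ((μH[d] : Measure X).restrict S) := isFiniteMeasure_restrict.2 hS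
  set B := S ∩ upperDensityPts ((μH[d] : Measure X).restrict S) d t
  have hBfin : μH[d] B ≠ ⊤ := measure_ne_top_of_subset inter_subset_left hS
  by_contra hB0
  have hlt : (μH[d] : Measure X).restrict S B < t * μH[d] B := by
    rw [Measure.restrict_eq_self _ inter_subset_left]
    simpa using (ENNReal.mul_lt_mul_iff_left hB0 hBfin).2 ht
  obtain ⟨O, hBO, hO, hOlt⟩ := B.exists_isOpen_lt_of_lt _ hlt
  exact hOlt.not_ge (mul_hausdorffMeasure_le_of_subset_upperDensityPts hd hBfin
    (zero_lt_one.trans ht).ne' htT inter_subset_right hO hBO)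

end UpperDensity

section IntegralOnLine

lemma exists_subset_Ioo_subset_of_isCompact {K J : Set ℝ} (hK : IsCompact K) (hJ : IsOpen J)
    (hJc : J.OrdConnected) (hKJ : K ⊆ J) : ∃ p q, p ≤ q ∧ K ⊆ Ioo p q ∧ Ioo p q ⊆ J := by
  rcases K.eq_empty_or_nonempty with rfl | hne
  · exact ⟨0, 0, le_rfl, empty_subset _, by simp⟩
  obtain ⟨a, haK, ha⟩ := hK.exists_isLeast hne
  obtain ⟨b, hbK, hb⟩ := hK.exists_isGreatest hne
  have hleft : J ∈ 𝓝[<] a := nhdsWithin_le_nhds (hJ.mem_nhds (hKJ haK))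
  have hright : J ∈ 𝓝[>] b := nhdsWithin_le_nhds (hJ.mem_nhds (hKJ hbK))
  obtain ⟨p, hp, hpa⟩ : (J ∩ Iio a).Nonempty :=
    Filter.nonempty_of_mem (inter_mem hleft self_mem_nhdsWithin)
  obtain ⟨q, hq, hbq⟩ : (J ∩ Ioi b).Nonempty :=
    Filter.nonempty_of_mem (inter_mem hright self_mem_nhdsWithin)
  exact ⟨p, q, (le_of_lt hpa).trans ((ha hbK).trans (le_of_lt hbq)),
    fun t ht => ⟨lt_of_lt_of_le hpa (ha ht), lt_of_le_of_lt (hb ht) hbq⟩,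
    Ioo_subset_Icc_self.trans (hJc.out hp hq)⟩

variable {A T : Set ℝ} {g : ℝ → ℝ}

lemma abs_setIntegral_deriv_le_of_disjoint (hT : JumpsIn A T) (hg : ContDiff ℝ 1 g) {p q : ℝ}
    (hpq : p ≤ q) (hdisj : Disjoint (Ioo p q) T) :
    |∫ t in Ioo p q ∩ A, deriv g t| ≤ |g p| + |g q| := by
  rcases hT p q hdisj with h0 | h0
  · rw [setIntegral_measure_zero _ h0, abs_zero]
    positivity
  · have hae : (Ioo p q ∩ A : Set ℝ) =ᵐ[volume] Ioo p q :=
      ae_eq_set.2 ⟨by simp [sdiff_eq_empty.2], by rwa [sdiff_self_inter]⟩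
    rw [setIntegral_congr_set hae, ← integral_Ioc_eq_integral_Ioo,
      ← intervalIntegral.integral_of_le hpq, intervalIntegral.integral_deriv_eq_sub
        (fun t _ => hg.differentiable one_ne_zero t)
        ((hg.continuous_deriv le_rfl).intervalIntegrable _ _)]
    exact (abs_sub _ _).trans_eq (add_comm _ _)

lemma setIntegral_Ioo_inter_eq_add (hA : MeasurableSet A) {f : ℝ → ℝ} (hf : Continuous f)
    {p q τ : ℝ} (hτ : τ ∈ Ioo p q) :
    ∫ t in Ioo p q ∩ A, f t = (∫ t in Ioo p τ ∩ A, f t) + ∫ t in Ioo τ q ∩ A, f t := by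
  have hint : ∀ a b : ℝ, IntegrableOn f (Ioo a b ∩ A) := fun a b =>
    hf.integrableOn_Icc.mono_set (inter_subset_left.trans Ioo_subset_Icc_self)
  have hae : (Ioo p q : Set ℝ) =ᵐ[volume] (Ioo p τ ∪ Ioo τ q : Set ℝ) := by
    rw [← Ioc_union_Ioo_eq_Ioo hτ.1.le hτ.2]
    exact Ioo_ae_eq_Ioc.symm.union (ae_eq_refl _)
  rw [setIntegral_congr_set (hae.inter (ae_eq_refl A)), union_inter_distrib_right,
    setIntegral_union _ (measurableSet_Ioo.inter hA) (hint _ _) (hint _ _)]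
  exact (Ioo_disjoint_Ioo.2 (by simp)).mono inter_subset_left inter_subset_left

lemma abs_setIntegral_deriv_Ioo_inter_le (hA : MeasurableSet A) (hT : JumpsIn A T)
    (hg : ContDiff ℝ 1 g) (s : Finset ℝ) {p q : ℝ} (hpq : p ≤ q) (hs : T ∩ Ioo p q ⊆ s) :
    |∫ t in Ioo p q ∩ A, deriv g t| ≤
      |g p| + |g q| + 2 * ∑ τ ∈ s, (Ioo p q).indicator (fun t => |g t|) τ := by
  classical
  induction s using Finset.induction_on generalizing p q with
  | empty =>
    have hdisj : Disjoint (Ioo p q) T :=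
      (disjoint_iff_inter_eq_empty.2 (subset_empty_iff.1 (by simpa using hs))).symm
    simpa using abs_setIntegral_deriv_le_of_disjoint hT hg hpq hdisj
  | insert τ s hτs ih =>
    rw [Finset.sum_insert hτs]
    by_cases hτ : τ ∈ Ioo p q
    · have hleft := ih hτ.1.le fun t ht =>
        (Finset.mem_insert.1 (hs ⟨ht.1, ht.2.1, ht.2.2.trans hτ.2⟩)).resolve_left ht.2.2.ne
      have hright := ih hτ.2.le fun t ht =>
        (Finset.mem_insert.1 (hs ⟨ht.1, hτ.1.trans ht.2.1, ht.2.2⟩)).resolve_left ht.2.1.ne'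
      have hsum : ∑ t ∈ s, (Ioo p τ).indicator (fun t => |g t|) t +
          ∑ t ∈ s, (Ioo τ q).indicator (fun t => |g t|) t ≤
            ∑ t ∈ s, (Ioo p q).indicator (fun t => |g t|) t := by
        rw [← Finset.sum_add_distrib]
        refine Finset.sum_le_sum fun t _ => ?_
        have hdisj : Disjoint (Ioo p τ) (Ioo τ q) := Ioo_disjoint_Ioo.2 (by simp)
        rw [← congrFun (indicator_union_of_disjoint hdisj _) t]
        exact indicator_le_indicator_of_subset (union_subset (Ioo_subset_Ioo_right hτ.2.le)
          (Ioo_subset_Ioo_left hτ.1.le)) (fun t => abs_nonneg _) t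
      rw [setIntegral_Ioo_inter_eq_add hA (hg.continuous_deriv le_rfl) hτ, indicator_of_mem hτ]
      linarith [abs_add_le (∫ t in Ioo p τ ∩ A, deriv g t) (∫ t in Ioo τ q ∩ A, deriv g t)]
    · rw [indicator_of_notMem hτ, zero_add]
      refine ih hpq fun t ht => (Finset.mem_insert.1 (hs ht)).resolve_left ?_
      rintro rfl
      exact hτ ht.2

lemma abs_setIntegral_deriv_le_of_hasCompactSupport (hA : MeasurableSet A) (hT : JumpsIn A T)
    (hg : ContDiff ℝ 1 g) (hgc : HasCompactSupport g) {J : Set ℝ} (hJ : IsOpen J)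
    (hJc : J.OrdConnected) (hgJ : tsupport g ⊆ J) (s : Finset ℝ) (hs : T ∩ J ⊆ s) :
    |∫ t in A, deriv g t| ≤ 2 * ∑ τ ∈ s, |g τ| := by
  obtain ⟨p, q, hpq, hsupp, hJpq⟩ := exists_subset_Ioo_subset_of_isCompact hgc hJ hJc hgJ
  have hp : g p = 0 := image_eq_zero_of_notMem_tsupport fun h => (hsupp h).1.false
  have hq : g q = 0 := image_eq_zero_of_notMem_tsupport fun h => (hsupp h).2.false
  have hint : ∫ t in A, deriv g t = ∫ t in Ioo p q ∩ A, deriv g t := by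
    rw [inter_comm]
    refine setIntegral_eq_of_subset_of_forall_sdiff_eq_zero hA inter_subset_left fun t ht => ?_
    by_contra hne
    exact ht.2 ⟨ht.1, hsupp (support_deriv_subset hne)⟩
  calc |∫ t in A, deriv g t|
      ≤ |g p| + |g q| + 2 * ∑ τ ∈ s, (Ioo p q).indicator (fun t => |g t|) τ := by
        rw [hint]
        exact abs_setIntegral_deriv_Ioo_inter_le hA hT hg s hpq
          ((inter_subset_inter_right T hJpq).trans hs)
    _ ≤ 2 * ∑ τ ∈ s, |g τ| := by
        simp only [hp, hq, abs_zero, zero_add]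
        gcongr with τ _
        exact indicator_le_self' (fun _ _ => abs_nonneg _) τ

end IntegralOnLine

section OrthogonalSplitting

variable {F Y : Type*} [NormedAddCommGroup F] [InnerProductSpace ℝ F] [NormedAddCommGroup Y]
  [InnerProductSpace ℝ Y]

/-- `Ψ` identifies `Y` isometrically with the orthogonal sum of `F` and a line, directed by
`Ψ (0, 1)`. The Euclidean norm of the sum is spelled out because Mathlib's norm on `F × ℝ` is the
supremum norm. -/
def IsOrthogonalSplitting (Ψ : (F × ℝ) ≃L[ℝ] Y) : Prop :=
  ∀ p, ‖Ψ p‖ ^ 2 = ‖p.1‖ ^ 2 + p.2 ^ 2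

namespace IsOrthogonalSplitting

variable {Ψ : (F × ℝ) ≃L[ℝ] Y}

lemma norm_apply_zero_right (hΨ : IsOrthogonalSplitting Ψ) (w : F) : ‖Ψ (w, 0)‖ = ‖w‖ := by
  rw [← sq_eq_sq₀ (norm_nonneg _) (norm_nonneg _), hΨ]
  simp

lemma inner_apply_apply (hΨ : IsOrthogonalSplitting Ψ) (w : F) : ⟪Ψ (w, 0), Ψ (0, 1)⟫ = 0 := by
  have hsum : ‖Ψ (w, 0) + Ψ (0, 1)‖ ^ 2 = ‖Ψ (w, 0)‖ ^ 2 + ‖Ψ (0, 1)‖ ^ 2 := by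
    rw [← map_add, hΨ, hΨ, hΨ]
    simp
  linarith [norm_add_sq_real (Ψ (w, 0)) (Ψ (0, 1))]

lemma norm_sub_sq (hΨ : IsOrthogonalSplitting Ψ) (p : F × ℝ) (x : Y) :
    ‖Ψ p - x‖ ^ 2 = ‖p.1 - (Ψ.symm x).1‖ ^ 2 + (p.2 - (Ψ.symm x).2) ^ 2 := by
  rw [← Prod.fst_sub, ← Prod.snd_sub, ← hΨ, map_sub, Ψ.apply_symm_apply]

lemma lipschitzWith_fst_symm (hΨ : IsOrthogonalSplitting Ψ) :
    LipschitzWith 1 fun x => (Ψ.symm x).1 := by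
  refine LipschitzWith.of_dist_le_mul fun x y => ?_
  rw [NNReal.coe_one, one_mul, dist_eq_norm, dist_eq_norm]
  refine (sq_le_sq₀ (norm_nonneg _) (norm_nonneg _)).1 ?_
  have hsq := hΨ.norm_sub_sq (Ψ.symm x) y
  rw [Ψ.apply_symm_apply] at hsq
  linarith [sq_nonneg ((Ψ.symm x).2 - (Ψ.symm y).2)]

end IsOrthogonalSplitting

lemma exists_isOrthogonalSplitting {n : ℕ} [FiniteDimensional ℝ Y]
    (hn : Module.finrank ℝ Y = n + 1) {e : Y} (he : ‖e‖ = 1) :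
    ∃ Ψ : (EuclideanSpace ℝ (Fin n) × ℝ) ≃L[ℝ] Y, Ψ (0, 1) = e ∧ IsOrthogonalSplitting Ψ := by
  have hfact : Fact (Module.finrank ℝ Y = n + 1) := ⟨hn⟩
  have he0 : e ≠ 0 := by
    rintro rfl
    simp at he
  let L : EuclideanSpace ℝ (Fin n) →ₗᵢ[ℝ] Y := (Submodule.subtypeₗᵢ (ℝ ∙ e)ᗮ).comp
    (OrthonormalBasis.fromOrthogonalSpanSingleton (𝕜 := ℝ) n he0).repr.symm.toLinearIsometry
  have hort : ∀ z, ⟪L z, e⟫ = 0 := fun z => by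
    rw [real_inner_comm]
    exact Submodule.mem_orthogonal_singleton_iff_inner_right.1 (Subtype.coe_prop _)
  let M : (EuclideanSpace ℝ (Fin n) × ℝ) →ₗ[ℝ] Y :=
    L.toLinearMap.coprod (LinearMap.toSpanSingleton ℝ Y e)
  have hM : ∀ p, ‖M p‖ ^ 2 = ‖p.1‖ ^ 2 + p.2 ^ 2 := fun p => by
    simp [M, norm_add_sq_real, inner_smul_right, hort, norm_smul, he]
  have hinj : Function.Injective M := (injective_iff_map_eq_zero M).2 fun p hp => by
    have hsq := hM p
    rw [hp, norm_zero, zero_pow two_ne_zero, eq_comm,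
      add_eq_zero_iff_of_nonneg (sq_nonneg _) (sq_nonneg _)] at hsq
    exact Prod.ext (by simpa using hsq.1) (by simpa using hsq.2)
  refine ⟨(LinearMap.linearEquivOfInjective M hinj (by simp [hn])).toContinuousLinearEquiv,
    ?_, fun p => hM p⟩
  exact (show M (0, 1) = e by simp [M])

end OrthogonalSplitting

section TestFunctions

variable {Y : Type*} [NormedAddCommGroup Y] [NormedSpace ℝ Y]

/-- The `C¹` functions with compact support in `V`, against which the derivative of the indicator
of a set is tested. -/
def testFunctions (V : Set Y) : Submodule ℝ (Y → ℝ) where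
  carrier := {φ | ContDiff ℝ 1 φ ∧ HasCompactSupport φ ∧ tsupport φ ⊆ V}
  zero_mem' := ⟨contDiff_const, HasCompactSupport.zero, by simp [tsupport]⟩
  add_mem' := by
    rintro φ ψ ⟨hφ, hφc, hφV⟩ ⟨hψ, hψc, hψV⟩
    exact ⟨hφ.add hψ, hφc.add hψc, (tsupport_add φ ψ).trans (union_subset hφV hψV)⟩
  smul_mem' := by
    rintro c φ ⟨hφ, hφc, hφV⟩
    have hsupp := Function.support_const_smul_subset c φ
    exact ⟨hφ.const_smul c, hφc.mono hsupp, (closure_mono hsupp).trans hφV⟩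

variable [MeasurableSpace Y] [BorelSpace Y] {V : Set Y} {φ : Y → ℝ}

lemma integrable_fderiv_apply_of_mem_testFunctions (hφ : φ ∈ testFunctions V) (ρ : Measure Y)
    [IsFiniteMeasureOnCompacts ρ] (v : Y) : Integrable (fun y => fderiv ℝ φ y v) ρ :=
  ((hφ.1.continuous_fderiv one_ne_zero).clm_apply
    continuous_const).integrable_of_hasCompactSupport (hφ.2.1.fderiv_apply (𝕜 := ℝ) v)

end TestFunctions

section GaussGreen

lemma enorm_setIntegral_deriv_comp_le {Y : Type*} [TopologicalSpace Y] {A : Set ℝ}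
    (hA : MeasurableSet A) {γ : ℝ → Y} (hγ : Topology.IsClosedEmbedding γ) {S V : Set Y}
    (hV : IsOpen V) (hVc : (γ ⁻¹' V).OrdConnected) (hjump : JumpsIn A (γ ⁻¹' S))
    (hfin : (S ∩ V ∩ range γ).Finite) {φ : Y → ℝ} (hφ : ContDiff ℝ 1 (φ ∘ γ))
    (hφc : HasCompactSupport φ) (hφV : tsupport φ ⊆ V) :
    ‖∫ t in A, deriv (φ ∘ γ) t‖ₑ ≤ 2 * ∑' x : (S ∩ V ∩ range γ : Set Y), ‖φ x‖ₑ := by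
  set X := S ∩ V ∩ range γ
  have hfin' : (γ ⁻¹' X).Finite := hfin.preimage hγ.injective.injOn
  have hline : |∫ t in A, deriv (φ ∘ γ) t| ≤ 2 * ∑ t ∈ hfin'.toFinset, |φ (γ t)| :=
    abs_setIntegral_deriv_le_of_hasCompactSupport hA hjump hφ (hφc.comp_isClosedEmbedding hγ)
      (hV.preimage hγ.continuous) hVc ((tsupport_comp_subset_preimage φ hγ.continuous).trans
        (preimage_mono hφV)) _ fun t ht => by simpa [X] using ht
  calc ‖∫ t in A, deriv (φ ∘ γ) t‖ₑ ≤ ENNReal.ofReal (2 * ∑ t ∈ hfin'.toFinset, |φ (γ t)|) := by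
        rw [Real.enorm_eq_ofReal_abs]
        exact ENNReal.ofReal_le_ofReal hline
    _ = 2 * ∑ t ∈ hfin'.toFinset, ‖φ (γ t)‖ₑ := by
        rw [ENNReal.ofReal_mul zero_le_two, ENNReal.ofReal_ofNat,
          ENNReal.ofReal_sum_of_nonneg fun _ _ => abs_nonneg _]
        simp only [Real.enorm_eq_ofReal_abs]
    _ = 2 * ∑' t : (γ ⁻¹' X : Set ℝ), ‖φ (X.restrictPreimage γ t)‖ₑ := by
        rw [← Finset.tsum_subtype' hfin'.toFinset fun t => ‖φ (γ t)‖ₑ, hfin'.coe_toFinset]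
        rfl
    _ ≤ 2 * ∑' x : X, ‖φ x‖ₑ := by
        gcongr
        exact ENNReal.tsum_comp_le_tsum_of_injective
          (X.restrictPreimage_injective hγ.injective) fun x : X => ‖φ x‖ₑ

variable {F Y : Type*} [NormedAddCommGroup F] [NormedSpace ℝ F] [NormedAddCommGroup Y]
  [NormedSpace ℝ Y] [MeasurableSpace Y] [BorelSpace Y]

lemma enorm_integral_indicator_fderiv_line_le (Ψ : (F × ℝ) ≃L[ℝ] Y) {E S V : Set Y}
    (hE : MeasurableSet E) (hV : IsOpen V) (hVc : Convex ℝ V) {z : F}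
    (hjump : JumpsIn {t | Ψ (z, t) ∈ E} {t | Ψ (z, t) ∈ S})
    (hfin : (S ∩ V ∩ (fun x => (Ψ.symm x).1) ⁻¹' {z}).Finite) {φ : Y → ℝ}
    (hφ : φ ∈ testFunctions V) :
    ‖∫ t, E.indicator (fun y => fderiv ℝ φ y (Ψ (0, 1))) (Ψ (z, t))‖ₑ ≤
      2 * ∑' x : (S ∩ V ∩ (fun x => (Ψ.symm x).1) ⁻¹' {z} : Set Y), ‖φ x‖ₑ := by
  set γ : ℝ → Y := fun t => Ψ (z, t)
  have hline : ∀ t, γ t = Ψ (z, 0) + t • Ψ (0, 1) := fun t => by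
    rw [← map_smul, ← map_add]
    simp [γ]
  have hγ : ContDiff ℝ 1 γ := by fun_prop
  have hemb : Topology.IsClosedEmbedding γ :=
    Function.LeftInverse.isClosedEmbedding (f := fun x => (Ψ.symm x).2) (fun t => by simp [γ])
      (by fun_prop) hγ.continuous
  have hrange : (fun x => (Ψ.symm x).1) ⁻¹' {z} = range γ := by
    ext x
    refine ⟨fun hx => ⟨(Ψ.symm x).2, ?_⟩, ?_⟩
    · have hz : (Ψ.symm x).1 = z := hx
      simp only [γ, ← hz, Ψ.apply_symm_apply]
    · rintro ⟨t, rfl⟩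
      simp [γ]
  have hderiv : ∀ t, deriv (φ ∘ γ) t = fderiv ℝ φ (γ t) (Ψ (0, 1)) := fun t => by
    have hγ' : HasDerivAt γ (Ψ (0, 1)) t := by
      simpa [funext hline] using ((hasDerivAt_id t).smul_const (Ψ (0, 1))).const_add (Ψ (z, 0))
    exact ((hφ.1.differentiable one_ne_zero _).hasFDerivAt.comp_hasDerivAt t hγ').deriv
  have hA : MeasurableSet (γ ⁻¹' E) := hγ.continuous.measurable hE
  have hconv : (γ ⁻¹' V).OrdConnected := by
    have haff : γ = AffineMap.lineMap (Ψ (z, 0)) (Ψ (z, 0) + Ψ (0, 1)) := by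
      ext t
      simp [hline, AffineMap.lineMap_apply, add_comm]
    rw [haff]
    exact (hVc.affine_preimage _).ordConnected
  have hint : ∫ t, E.indicator (fun y => fderiv ℝ φ y (Ψ (0, 1))) (γ t) =
      ∫ t in γ ⁻¹' E, deriv (φ ∘ γ) t := by
    rw [← integral_indicator hA]
    simp only [funext hderiv]
    rfl
  rw [hint, hrange]
  rw [hrange] at hfin
  exact enorm_setIntegral_deriv_comp_le hA hemb hV hconv hjump hfin (hφ.1.comp hγ) hφ.2.1 hφ.2.2

variable [FiniteDimensional ℝ F] [MeasurableSpace F] [BorelSpace F] [FiniteDimensional ℝ Y]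

lemma exists_integral_eq_mul_integral_line (Ψ : (F × ℝ) ≃L[ℝ] Y) (μ : Measure F)
    [μ.IsAddHaarMeasure] (ν : Measure Y) [ν.IsAddHaarMeasure] :
    ∃ c : ℝ≥0, ∀ f : Y → ℝ, Integrable f ν →
      ∫ y, f y ∂ν = c * ∫ z, ∫ t, f (Ψ (z, t)) ∂volume ∂μ := by
  obtain ⟨c, hc0, hcT, hc⟩ := exists_measure_image_eq_mul Ψ (μ.prod volume) ν
  have hν : ν = c • Measure.map Ψ (μ.prod volume) := by
    ext s hs
    rw [Measure.smul_apply, Measure.map_apply Ψ.continuous.measurable hs, smul_eq_mul, ← hc,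
      image_preimage_eq _ Ψ.surjective]
  have hemb : MeasurableEmbedding Ψ := Ψ.toHomeomorph.measurableEmbedding
  refine ⟨c.toNNReal, fun f hf => ?_⟩
  rw [hν, integrable_smul_measure hc0 hcT, hemb.integrable_map_iff] at hf
  rw [hν, integral_smul_measure, hemb.integral_map, integral_prod (fun p => f (Ψ p)) hf,
    smul_eq_mul]
  rfl

lemma exists_enorm_setIntegral_fderiv_le {n : ℕ} {E V : Set (EuclideanSpace ℝ (Fin (n + 1)))}
    (hE : MeasurableSet E) (hV : IsOpen V) (hVc : Convex ℝ V) (hfin : μH[n] (essBdry E ∩ V) ≠ ⊤)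
    {e : EuclideanSpace ℝ (Fin (n + 1))} (he : ‖e‖ = 1) :
    ∃ C : ℝ≥0, ∀ φ ∈ testFunctions V,
      ‖∫ y in E, fderiv ℝ φ y e‖ₑ ≤ C * ∫⁻ x in essBdry E ∩ V, ‖φ x‖ₑ ∂μH[n] := by
  obtain ⟨Ψ, rfl, hΨ⟩ := exists_isOrthogonalSplitting (n := n) (by simp) he
  set μ : Measure (EuclideanSpace ℝ (Fin n)) := μH[n]
  obtain ⟨c, hc⟩ := exists_integral_eq_mul_integral_line Ψ μ volume
  refine ⟨c * 2, fun φ hφ => ?_⟩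
  set f := E.indicator fun y => fderiv ℝ φ y (Ψ (0, 1))
  have hint : Integrable f :=
    (integrable_fderiv_apply_of_mem_testFunctions hφ volume _).indicator hE
  obtain ⟨g, hgm, hfiber, hg⟩ := exists_measurable_tsum_fiber_le hΨ.lipschitzWith_fst_symm
    (Nat.cast_nonneg n) (essBdry E ∩ V) hφ.1.continuous.enorm.lowerSemicontinuous
  have hline : ∀ᵐ z ∂μ, ‖∫ t, f (Ψ (z, t))‖ₑ ≤ 2 * g z := by
    filter_upwards [ae_jumpsIn_essBdry Ψ μ hE,
      ae_finite_fiber hΨ.lipschitzWith_fst_symm (Nat.cast_nonneg n) hfin] with z hjump hzfin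
    refine (enorm_integral_indicator_fderiv_line_le Ψ hE hV hVc hjump hzfin hφ).trans ?_
    gcongr
    exact hfiber z
  rw [← integral_indicator hE, hc f hint, enorm_mul, ENNReal.coe_mul, mul_assoc,
    show ‖(c : ℝ)‖ₑ = c by simp]
  gcongr
  calc ‖∫ z, ∫ t, f (Ψ (z, t)) ∂volume ∂μ‖ₑ
      ≤ ∫⁻ z, ‖∫ t, f (Ψ (z, t))‖ₑ ∂μ := enorm_integral_le_lintegral_enorm _
    _ ≤ ∫⁻ z, 2 * g z ∂μ := lintegral_mono_ae hline
    _ = 2 * ∫⁻ z, g z ∂μ := lintegral_const_mul _ hgm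
    _ ≤ (2 : ℝ≥0) * ∫⁻ x in essBdry E ∩ V, ‖φ x‖ₑ ∂μH[n] := by
        gcongr
        · simp

end GaussGreen

section Riesz

lemma exists_forall_eq_inner_of_norm_le {W H : Type*} [AddCommGroup W] [Module ℝ W]
    [NormedAddCommGroup H] [InnerProductSpace ℝ H] [CompleteSpace H] (T : W →ₗ[ℝ] H)
    (l : W →ₗ[ℝ] ℝ) {K : ℝ} (hK : ∀ w, ‖l w‖ ≤ K * ‖T w‖) : ∃ s : H, ∀ w, l w = ⟪s, T w⟫ := by
  obtain ⟨r, hr⟩ := T.rangeRestrict.exists_rightInverse_of_surjective T.range_rangeRestrict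
  have hTr : ∀ x, T (r x) = x := fun x => congrArg Subtype.val (LinearMap.congr_fun hr x)
  let f : LinearMap.range T →L[ℝ] ℝ :=
    (l.comp r).mkContinuous K fun x => (hK (r x)).trans_eq (by rw [hTr]; rfl)
  have hf : ∀ w, f (T.rangeRestrict w) = l w := fun w => by
    have hle : ‖l (r (T.rangeRestrict w) - w)‖ ≤ 0 := by
      simpa [hTr] using hK (r (T.rangeRestrict w) - w)
    rwa [norm_le_zero_iff, map_sub, sub_eq_zero] at hle
  obtain ⟨g, hg, -⟩ := exists_extension_norm_eq _ f
  refine ⟨(InnerProductSpace.toDual ℝ H).symm g, fun w => ?_⟩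
  rw [InnerProductSpace.toDual_symm_apply, ← hf]
  exact (hg _).symm

lemma exists_lintegral_enorm_le_mul_enorm_toLp {X : Type*} [MeasurableSpace X] (ν : Measure X)
    [IsFiniteMeasure ν] :
    ∃ K : ℝ≥0, ∀ (f : X → ℝ) (hf : MemLp f 2 ν), ∫⁻ x, ‖f x‖ₑ ∂ν ≤ K * ‖hf.toLp f‖ₑ := by
  refine ⟨(ν univ ^ (1 / 2 : ℝ)).toNNReal, fun f hf => ?_⟩
  have hle := eLpNorm_le_eLpNorm_mul_rpow_measure_univ one_le_two hf.1
  rw [eLpNorm_one_eq_lintegral_enorm] at hle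
  rw [ENNReal.coe_toNNReal (ENNReal.rpow_ne_top_of_nonneg (by norm_num) (measure_ne_top _ _)),
    Lp.enorm_toLp, mul_comm]
  convert hle using 3
  norm_num

lemma exists_memLp_forall_eq_integral_mul {X : Type*} [MeasurableSpace X] {ν : Measure X}
    [IsFiniteMeasure ν] (W : Submodule ℝ (X → ℝ)) (hW : ∀ φ ∈ W, MemLp φ 2 ν) (l : W →ₗ[ℝ] ℝ)
    {C : ℝ≥0} (hl : ∀ φ : W, ‖l φ‖ₑ ≤ C * ∫⁻ x, ‖φ.1 x‖ₑ ∂ν) :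
    ∃ s, MemLp s 2 ν ∧ ∀ φ : W, l φ = ∫ x, φ.1 x * s x ∂ν := by
  let T : W →ₗ[ℝ] Lp ℝ 2 ν :=
    { toFun := fun φ => (hW φ φ.2).toLp
      map_add' := fun _ _ => rfl
      map_smul' := fun _ _ => rfl }
  obtain ⟨K, hK⟩ := exists_lintegral_enorm_le_mul_enorm_toLp ν
  have hbound : ∀ φ, ‖l φ‖ ≤ (C * K : ℝ≥0) * ‖T φ‖ := fun φ => by
    have hle : ‖l φ‖ₑ ≤ (C * K : ℝ≥0) * ‖T φ‖ₑ := by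
      rw [ENNReal.coe_mul, mul_assoc]
      exact (hl φ).trans (by gcongr; exact hK φ (hW φ φ.2))
    simpa using ENNReal.toReal_mono (by finiteness) hle
  obtain ⟨s, hs⟩ := exists_forall_eq_inner_of_norm_le T l hbound
  refine ⟨s, Lp.memLp s, fun φ => ?_⟩
  rw [hs, L2.inner_def]
  refine integral_congr_ae ?_
  filter_upwards [(hW φ φ.2).coeFn_toLp] with x hx
  rw [← hx, RCLike.inner_apply, conj_trivial]
  rfl

variable {Y : Type*} [NormedAddCommGroup Y] [NormedSpace ℝ Y] [MeasurableSpace Y] [BorelSpace Y]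

lemma exists_memLp_integral_fderiv_eq {ρ ν : Measure Y} [IsFiniteMeasureOnCompacts ρ]
    [IsFiniteMeasure ν] {V : Set Y} {v : Y} {C : ℝ≥0}
    (hC : ∀ φ ∈ testFunctions V, ‖∫ y, fderiv ℝ φ y v ∂ρ‖ₑ ≤ C * ∫⁻ x, ‖φ x‖ₑ ∂ν) :
    ∃ s, MemLp s 2 ν ∧ ∀ φ ∈ testFunctions V,
      ∫ y, fderiv ℝ φ y v ∂ρ = ∫ x, φ x * s x ∂ν := by
  have hint := fun φ : testFunctions V =>
    integrable_fderiv_apply_of_mem_testFunctions φ.2 ρ v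
  have hdiff := fun φ : testFunctions V => φ.2.1.differentiable one_ne_zero
  let l : testFunctions V →ₗ[ℝ] ℝ :=
    { toFun := fun φ => ∫ y, fderiv ℝ φ.1 y v ∂ρ
      map_add' := fun φ ψ => by
        rw [← integral_add (hint φ) (hint ψ)]
        simp only [Submodule.coe_add, fderiv_add (hdiff φ _) (hdiff ψ _)]
        rfl
      map_smul' := fun c φ => by
        rw [RingHom.id_apply, ← integral_smul]
        simp only [Submodule.coe_smul, fderiv_const_smul (hdiff φ _)]
        rfl }
  obtain ⟨s, hs, hls⟩ := exists_memLp_forall_eq_integral_mul (testFunctions V)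
    (fun φ hφ => hφ.1.continuous.memLp_of_hasCompactSupport hφ.2.1) l fun φ => hC φ φ.2
  exact ⟨s, hs, fun φ hφ => hls ⟨φ, hφ⟩⟩

end Riesz

section GaussGreenField

variable {Y : Type*} [NormedAddCommGroup Y] [InnerProductSpace ℝ Y] [FiniteDimensional ℝ Y]
  [MeasurableSpace Y] [BorelSpace Y]

/-- The Gauss–Green formula in `V` for the set `E`, with boundary measure `ν`: the vector
measure `σ ν` is minus the distributional gradient of the indicator of `E` in `V`. -/
structure IsGaussGreenField (E V : Set Y) (ν : Measure Y) (σ : Y → Y) : Prop where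
  integrable : Integrable σ ν
  integral_fderiv : ∀ φ ∈ testFunctions V, ∀ v,
    ∫ y in E, fderiv ℝ φ y v = ∫ x, φ x * ⟪σ x, v⟫ ∂ν

lemma isGaussGreenField_of_orthonormalBasis {ι : Type*} [Fintype ι] (b : OrthonormalBasis ι ℝ Y)
    {E V : Set Y} {ν : Measure Y} {s : ι → Y → ℝ}
    (hs : ∀ i, Integrable (s i) ν) (hsb : ∀ i, ∀ φ ∈ testFunctions V,
      ∫ y in E, fderiv ℝ φ y (b i) = ∫ x, φ x * s i x ∂ν) :
    IsGaussGreenField E V ν fun x => ∑ i, s i x • b i := by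
  refine ⟨integrable_finsetSum _ fun i _ => (hs i).smul_const _, fun φ hφ v => ?_⟩
  have hint : ∀ i, Integrable (fun x => φ x * s i x) ν := fun i => by
    obtain ⟨M, hM⟩ := hφ.2.1.exists_bound_of_continuous hφ.1.continuous
    exact (hs i).bdd_mul hφ.1.continuous.aestronglyMeasurable (Eventually.of_forall hM)
  calc ∫ y in E, fderiv ℝ φ y v
      = ∫ y in E, ∑ i, ⟪b i, v⟫ * fderiv ℝ φ y (b i) := by
        simp only [← smul_eq_mul, ← map_smul, ← map_sum, b.sum_repr']
    _ = ∑ i, ⟪b i, v⟫ * ∫ y in E, fderiv ℝ φ y (b i) := by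
        rw [integral_finsetSum _ fun i _ =>
          (integrable_fderiv_apply_of_mem_testFunctions hφ _ (b i)).const_mul _]
        simp only [integral_const_mul]
    _ = ∑ i, ⟪b i, v⟫ * ∫ x, φ x * s i x ∂ν := by simp only [hsb _ φ hφ]
    _ = ∫ x, ∑ i, ⟪b i, v⟫ * (φ x * s i x) ∂ν := by
        rw [integral_finsetSum _ fun i _ => (hint i).const_mul _]
        simp only [integral_const_mul]
    _ = ∫ x, φ x * ⟪∑ i, s i x • b i, v⟫ ∂ν := by
        simp only [sum_inner, real_inner_smul_left, Finset.mul_sum]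
        congr! 3
        ring

lemma exists_isGaussGreenField_essBdry {n : ℕ} {E V : Set (EuclideanSpace ℝ (Fin (n + 1)))}
    (hE : MeasurableSet E) (hV : IsOpen V) (hVc : Convex ℝ V)
    (hfin : μH[n] (essBdry E ∩ V) ≠ ⊤) :
    ∃ σ, IsGaussGreenField E V ((μH[n]).restrict (essBdry E ∩ V)) σ := by
  have : IsFiniteMeasure ((μH[n] : Measure (EuclideanSpace ℝ (Fin (n + 1)))).restrict
      (essBdry E ∩ V)) := ⟨by simpa [Measure.restrict_apply_univ] using hfin.lt_top⟩
  let b := EuclideanSpace.basisFun (Fin (n + 1)) ℝ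
  choose C hC using fun i =>
    exists_enorm_setIntegral_fderiv_le hE hV hVc hfin (b.norm_eq_one i)
  choose s hs hsb using fun i => exists_memLp_integral_fderiv_eq (hC i)
  exact ⟨_, isGaussGreenField_of_orthonormalBasis b (fun i => (hs i).integrable one_le_two) hsb⟩

end GaussGreenField

section SetIntegral

variable {X : Type*} [MeasurableSpace X] {μ : Measure X} {f : X → ℝ} {E S : Set X}

lemma measureReal_le_setIntegral (hS : MeasurableSet S) (hSfin : μ S ≠ ⊤) (hSE : S ⊆ E)
    (hf0 : 0 ≤ f) (hf1 : ∀ x ∈ S, 1 ≤ f x) (hint : IntegrableOn f E μ) :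
    μ.real S ≤ ∫ x in E, f x ∂μ :=
  calc μ.real S ≤ ∫ x in S, f x ∂μ := by
        simpa using setIntegral_ge_of_const_le_real hS hSfin hf1 (hint.mono_set hSE)
    _ ≤ ∫ x in E, f x ∂μ :=
        setIntegral_mono_set hint (Eventually.of_forall hf0) hSE.eventuallyLE

lemma setIntegral_le_measureReal (hE : MeasurableSet E) (hSfin : μ S ≠ ⊤) (hf1 : ∀ x, ‖f x‖ ≤ 1)
    (hf0 : ∀ x ∈ E \ S, f x = 0) : ∫ x in E, f x ∂μ ≤ μ.real S := by
  rw [setIntegral_eq_of_subset_of_forall_sdiff_eq_zero hE inter_subset_left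
    fun x (hx : x ∈ E \ (E ∩ S)) => hf0 x (by rwa [← sdiff_self_inter])]
  calc ∫ x in E ∩ S, f x ∂μ ≤ 1 * μ.real (E ∩ S) :=
        (Real.le_norm_self _).trans (norm_setIntegral_le_of_norm_le_const
          ((measure_mono inter_subset_right).trans_lt hSfin.lt_top) fun x _ => hf1 x)
    _ ≤ μ.real S := by
        rw [one_mul]
        exact measureReal_mono inter_subset_right hSfin

end SetIntegral

section Translation

variable {Y : Type*} [NormedAddCommGroup Y]

section NormedSpace

variable [NormedSpace ℝ Y]

lemma hasDerivAt_integral_comp_sub_smul [MeasurableSpace Y] [BorelSpace Y] (ρ : Measure Y)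
    [IsFiniteMeasure ρ] {φ : Y → ℝ} (hφ : ContDiff ℝ 1 φ) (hφc : HasCompactSupport φ) (v : Y)
    (s : ℝ) :
    HasDerivAt (fun s : ℝ => ∫ y, φ (y - s • v) ∂ρ) (∫ y, -fderiv ℝ φ (y - s • v) v ∂ρ) s := by
  obtain ⟨B, hB⟩ := hφc.exists_bound_of_continuous hφ.continuous
  have hφ' := hφ.continuous_fderiv one_ne_zero
  obtain ⟨M, hM⟩ := (hφc.fderiv (𝕜 := ℝ)).exists_bound_of_continuous hφ'
  have hmeas : ∀ s : ℝ, AEStronglyMeasurable (fun y => φ (y - s • v)) ρ := fun s =>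
    (hφ.continuous.comp (continuous_sub_right _)).aestronglyMeasurable
  refine (hasDerivAt_integral_of_dominated_loc_of_deriv_le (bound := fun _ => M * ‖v‖)
    (F := fun s y => φ (y - s • v)) (F' := fun s y => -fderiv ℝ φ (y - s • v) v) (s := univ)
    univ_mem (Eventually.of_forall hmeas)
    (Integrable.of_bound (hmeas s) B (Eventually.of_forall fun y => hB _))
    (Continuous.aestronglyMeasurable (by fun_prop)) (Eventually.of_forall fun y s _ => ?_)
    (integrable_const _) (Eventually.of_forall fun y s _ => ?_)).2
  · rw [norm_neg]
    exact (fderiv ℝ φ (y - s • v)).le_of_opNorm_le (hM _) v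
  · have hline : HasDerivAt (fun s : ℝ => y - s • v) (-v) s := by
      simpa using ((hasDerivAt_id s).smul_const v).const_sub y
    simpa [Function.comp_def] using
      (hφ.differentiable one_ne_zero _).hasFDerivAt.comp_hasDerivAt s hline

lemma comp_sub_mem_testFunctions {U V : Set Y} {φ : Y → ℝ} (hφ : φ ∈ testFunctions U) {v : Y}
    (hUV : ∀ y ∈ U, y + v ∈ V) : (fun y => φ (y - v)) ∈ testFunctions V := by
  refine ⟨hφ.1.comp (contDiff_id.sub contDiff_const),
    hφ.2.1.comp_homeomorph (Homeomorph.subRight v), fun y hy => ?_⟩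
  have hyφ := tsupport_comp_subset_preimage φ (f := fun y => y - v) (by fun_prop) hy
  simpa using hUV _ (hφ.2.2 hyφ)

lemma exists_mem_testFunctions_eqOn_one [FiniteDimensional ℝ Y] {K O : Set Y} (hK : IsCompact K)
    (hO : IsOpen O) (hKO : K ⊆ O) :
    ∃ φ ∈ testFunctions O, (∀ y, φ y ∈ Icc (0 : ℝ) 1) ∧ EqOn φ 1 K := by
  obtain ⟨δ, hδ, hδO⟩ := hK.exists_cthickening_subset_open hO hKO
  obtain ⟨φ, hφ0, hφ1, hφ⟩ := exists_contMDiffMap_zero_one_of_isClosed (n := 1)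
    (modelWithCornersSelf ℝ Y) isOpen_thickening.isClosed_compl hK.isClosed
    (disjoint_compl_left_iff_subset.2 (self_subset_thickening hδ K))
  have hsupp : tsupport φ ⊆ cthickening δ K := by
    refine closure_minimal (fun y hy => ?_) isClosed_cthickening
    by_contra hyK
    exact hy (hφ0 fun hyδ => hyK (thickening_subset_cthickening _ _ hyδ))
  exact ⟨φ, ⟨contMDiff_iff_contDiff.1 φ.contMDiff,
    hK.cthickening.of_isClosed_subset (isClosed_tsupport _) hsupp, hsupp.trans hδO⟩, hφ, hφ1⟩

end NormedSpace

namespace IsGaussGreenField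

variable [InnerProductSpace ℝ Y] [FiniteDimensional ℝ Y] [MeasurableSpace Y] [BorelSpace Y]
  {E V B B' : Set Y} {ν : Measure Y} {σ : Y → Y} {φ : Y → ℝ} {v : Y}

lemma setLIntegral_enorm_inner_ne_top (h : IsGaussGreenField E V ν σ) (B' : Set Y) (v : Y) :
    ∫⁻ x in B', ‖⟪σ x, v⟫‖ₑ ∂ν ≠ ⊤ :=
  ((setLIntegral_le_lintegral _ _).trans_lt (h.integrable.inner_const v).2).ne

lemma enorm_setIntegral_fderiv_le (h : IsGaussGreenField E V ν σ) (hB' : MeasurableSet B')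
    (hB'V : B' ⊆ V) (hφ : φ ∈ testFunctions B') (hφ1 : ∀ y, ‖φ y‖ₑ ≤ 1) (v : Y) :
    ‖∫ y in E, fderiv ℝ φ y v‖ₑ ≤ ∫⁻ x in B', ‖⟪σ x, v⟫‖ₑ ∂ν := by
  rw [h.integral_fderiv φ ⟨hφ.1, hφ.2.1, hφ.2.2.trans hB'V⟩, ← lintegral_indicator hB']
  refine (enorm_integral_le_lintegral_enorm _).trans (lintegral_mono fun x => ?_)
  by_cases hx : x ∈ B'
  · rw [indicator_of_mem hx, enorm_mul]
    exact mul_le_of_le_one_left' (hφ1 x)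
  · simp [image_eq_zero_of_notMem_tsupport fun hxφ => hx (hφ.2.2 hxφ)]

lemma norm_setIntegral_comp_sub_sub_le (h : IsGaussGreenField E V ν σ) (hEfin : volume E ≠ ⊤)
    (hB' : MeasurableSet B') (hB'V : B' ⊆ V) (hφ : φ ∈ testFunctions B) (hφ1 : ∀ y, ‖φ y‖ₑ ≤ 1)
    (hsweep : ∀ y ∈ B, ∀ s ∈ Icc (0 : ℝ) 1, y + s • v ∈ B') :
    ‖(∫ y in E, φ (y - v)) - ∫ y in E, φ y‖ ≤ (∫⁻ x in B', ‖⟪σ x, v⟫‖ₑ ∂ν).toReal := by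
  have : IsFiniteMeasure (volume.restrict E) := ⟨by simpa using hEfin.lt_top⟩
  have hbound : ∀ s ∈ Ico (0 : ℝ) 1, ‖∫ y in E, -fderiv ℝ φ (y - s • v) v‖ ≤
      (∫⁻ x in B', ‖⟪σ x, v⟫‖ₑ ∂ν).toReal := fun s hs => by
    have hshift := comp_sub_mem_testFunctions hφ fun y hy => hsweep y hy s ⟨hs.1, hs.2.le⟩
    have hle := h.enorm_setIntegral_fderiv_le hB' hB'V hshift (fun y => hφ1 _) v
    simp only [fderiv_comp_sub] at hle
    rw [integral_neg, norm_neg, ← toReal_enorm]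
    exact ENNReal.toReal_mono (h.setLIntegral_enorm_inner_ne_top B' v) hle
  simpa using norm_image_sub_le_of_norm_deriv_le_segment_01'
    (fun s _ => (hasDerivAt_integral_comp_sub_smul (volume.restrict E) hφ.1 hφ.2.1 v
      s).hasDerivWithinAt) hbound

lemma volume_le_of_isCompact (h : IsGaussGreenField E V ν σ) (hE : MeasurableSet E)
    (hEfin : volume E ≠ ⊤) (hB : IsOpen B) (hB' : MeasurableSet B') (hB'V : B' ⊆ V)
    (hsweep : ∀ y ∈ B, ∀ s ∈ Icc (0 : ℝ) 1, y + s • v ∈ B') {K : Set Y} (hK : IsCompact K)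
    (hKB : K ⊆ {y ∈ B | y ∉ E ∧ y + v ∈ E}) :
    volume K ≤ ∫⁻ x in B', ‖⟪σ x, v⟫‖ₑ ∂ν := by
  have : IsFiniteMeasure (volume.restrict E) := ⟨by simpa using hEfin.lt_top⟩
  have hKfin : volume K ≠ ⊤ := hK.measure_lt_top.ne
  refine ENNReal.le_of_forall_pos_le_add fun ε hε _ => ?_
  obtain ⟨O, hKO, hO, hOε⟩ := K.exists_isOpen_lt_add hKfin (ENNReal.coe_ne_zero.2 hε.ne')
  obtain ⟨φ, hφ, hφ01, hφK⟩ := exists_mem_testFunctions_eqOn_one hK (hO.inter hB)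
    (subset_inter hKO fun y hy => (hKB hy).1)
  have hnorm : ∀ y, ‖φ y‖ ≤ 1 := fun y => by
    rw [Real.norm_of_nonneg (hφ01 y).1]
    exact (hφ01 y).2
  have hmove := h.norm_setIntegral_comp_sub_sub_le hEfin hB' hB'V
    ⟨hφ.1, hφ.2.1, hφ.2.2.trans inter_subset_right⟩
    (fun y => by simpa [← ofReal_norm] using hnorm y) hsweep
  have hlower : volume.real K ≤ ∫ y in E, φ (y - v) := by
    have hshift : IsCompact ((fun y => y + v) '' K) := hK.image (by fun_prop)
    rw [show volume.real K = volume.real ((fun y => y + v) '' K) by simp [Measure.real]]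
    refine measureReal_le_setIntegral hshift.measurableSet hshift.measure_lt_top.ne
      (image_subset_iff.2 fun y hy => (hKB hy).2.2) (fun y => (hφ01 _).1)
      (by rintro _ ⟨y, hy, rfl⟩; simp [hφK hy]) (Integrable.of_bound
        (hφ.1.continuous.comp (by fun_prop)).aestronglyMeasurable 1
        (Eventually.of_forall fun y => hnorm _))
  have hOK : volume (O \ K) ≤ ε := by
    rw [measure_sdiff hKO hK.measurableSet.nullMeasurableSet hKfin]
    exact tsub_le_iff_left.2 hOε.le
  have hupper : ∫ y in E, φ y ≤ volume.real (O \ K) :=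
    setIntegral_le_measureReal hE (hOK.trans_lt ENNReal.coe_lt_top).ne hnorm fun y hy =>
      image_eq_zero_of_notMem_tsupport fun hyφ =>
        hy.2 ⟨(hφ.2.2 hyφ).1, fun hyK => (hKB hyK).2.1 hy.1⟩
  have hI := h.setLIntegral_enorm_inner_ne_top B' v
  rw [← ENNReal.toReal_le_toReal hKfin (by finiteness), ENNReal.toReal_add hI (by finiteness)]
  have hOKreal : volume.real (O \ K) ≤ (ε : ℝ≥0∞).toReal :=
    ENNReal.toReal_mono ENNReal.coe_ne_top hOK
  linarith [(Real.le_norm_self _).trans hmove, show volume.real K = (volume K).toReal from rfl]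

lemma volume_setOf_notMem_add_mem_le (h : IsGaussGreenField E V ν σ) (hE : MeasurableSet E)
    (hEfin : volume E ≠ ⊤) (hB : IsOpen B) (hB' : MeasurableSet B') (hB'V : B' ⊆ V)
    (hsweep : ∀ y ∈ B, ∀ s ∈ Icc (0 : ℝ) 1, y + s • v ∈ B') :
    volume {y ∈ B | y ∉ E ∧ y + v ∈ E} ≤ ∫⁻ x in B', ‖⟪σ x, v⟫‖ₑ ∂ν := by
  have hshift : Measurable fun y : Y => y + v := by fun_prop
  have hmeas : MeasurableSet {y ∈ B | y ∉ E ∧ y + v ∈ E} :=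
    hB.measurableSet.inter (hE.compl.inter (hshift hE))
  rw [hmeas.measure_eq_iSup_isCompact]
  exact iSup₂_le fun K hKB => iSup_le fun hK =>
    h.volume_le_of_isCompact hE hEfin hB hB' hB'V hsweep hK hKB

end IsGaussGreenField

end Translation

section Crossing

lemma measure_prod_mul_measure_section_eq_zero_le {F T : Type*} [AddGroup F] [MeasurableSpace F]
    [MeasurableAdd₂ F] [MeasurableSpace T] {μ : Measure F} [SFinite μ] [μ.IsAddLeftInvariant]
    {κ : Measure T} [SFinite κ] {M : Set (F × T)} (hM : MeasurableSet M) {D W : Set F}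
    (hD : MeasurableSet D) (hW : MeasurableSet W) (hDW : ∀ z ∈ D, ∀ w, z + w ∈ D → w ∈ W)
    {ε : ℝ≥0∞}
    (hshift : ∀ w ∈ W, (μ.restrict D).prod κ {p | p ∉ M ∧ (p.1 + w, p.2) ∈ M} ≤ ε) :
    (μ.restrict D).prod κ M * μ {z ∈ D | κ (Prod.mk z ⁻¹' M) = 0} ≤ μ W * ε := by
  set Bad := {z ∈ D | κ (Prod.mk z ⁻¹' M) = 0}
  have hBad : MeasurableSet Bad :=
    hD.inter (measurable_measure_prodMk_left hM (measurableSet_singleton 0))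
  have hmeas : Measurable fun p : (F × F) × T => (p.1.1 + p.1.2, p.2) := by fun_prop
  have hpair : MeasurableSet {p : (F × F) × T | (p.1.1, p.2) ∉ M ∧ (p.1.1 + p.1.2, p.2) ∈ M} :=
    MeasurableSet.inter ((show Measurable fun p : (F × F) × T => (p.1.1, p.2) by fun_prop) hM.compl)
      (hmeas hM)
  set k : F → F → ℝ≥0∞ := fun z w => κ {t | (z, t) ∉ M ∧ (z + w, t) ∈ M}
  have hk : Measurable (Function.uncurry k) := measurable_measure_prodMk_left hpair
  have hsection : ∀ z ∈ Bad, (μ.restrict D).prod κ M ≤ ∫⁻ w in W, k z w ∂μ := by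
    rintro z ⟨hzD, hz0⟩
    rw [Measure.prod_apply hM, ← lintegral_indicator hD, ← lintegral_indicator hW,
      ← lintegral_add_left_eq_self _ z]
    refine lintegral_mono fun w => indicator_apply_le' (fun hw => ?_) fun _ => zero_le
    rw [indicator_of_mem (hDW z hzD w hw)]
    calc κ (Prod.mk (z + w) ⁻¹' M)
        ≤ κ ({t | (z, t) ∉ M ∧ (z + w, t) ∈ M} ∪ Prod.mk z ⁻¹' M) :=
          measure_mono fun t ht => or_iff_not_imp_right.2 fun h => ⟨h, ht⟩
      _ ≤ k z w + κ (Prod.mk z ⁻¹' M) := measure_union_le _ _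
      _ = k z w := by rw [hz0, add_zero]
  have hswap : ∀ w ∈ W, ∫⁻ z in D, k z w ∂μ ≤ ε := fun w hw => by
    refine le_of_eq_of_le ?_ (hshift w hw)
    have hadd : Measurable fun p : F × T => (p.1 + w, p.2) := by fun_prop
    exact (Measure.prod_apply (μ := μ.restrict D) (ν := κ) (hM.compl.inter (hadd hM))).symm
  calc (μ.restrict D).prod κ M * μ Bad
      = ∫⁻ _ in Bad, (μ.restrict D).prod κ M ∂μ := (setLIntegral_const _ _).symm
    _ ≤ ∫⁻ z in Bad, ∫⁻ w in W, k z w ∂μ ∂μ := setLIntegral_mono' hBad hsection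
    _ ≤ ∫⁻ z in D, ∫⁻ w in W, k z w ∂μ ∂μ := lintegral_mono_set fun z hz => hz.1
    _ = ∫⁻ w in W, ∫⁻ z in D, k z w ∂μ ∂μ := lintegral_lintegral_swap hk.aemeasurable
    _ ≤ ∫⁻ _ in W, ε ∂μ := setLIntegral_mono' hW hswap
    _ = μ W * ε := by rw [setLIntegral_const, mul_comm]

lemma measure_cylinder_mul_measure_line_eq_zero_le {F Y : Type*} [NormedAddCommGroup F]
    [NormedSpace ℝ F] [FiniteDimensional ℝ F] [MeasurableSpace F] [BorelSpace F]
    [NormedAddCommGroup Y] [NormedSpace ℝ Y] [FiniteDimensional ℝ Y] [MeasurableSpace Y]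
    [BorelSpace Y] (Ψ : (F × ℝ) ≃L[ℝ] Y) (μ : Measure F) [μ.IsAddHaarMeasure] (ν : Measure Y)
    [ν.IsAddHaarMeasure] {E : Set Y} (hE : MeasurableSet E) {I : Set ℝ} (hI : MeasurableSet I)
    {z₀ : F} {a : ℝ} {ε : ℝ≥0∞}
    (hε : ∀ w : F, ‖w‖ < 2 * a →
      ν {y ∈ Ψ '' (ball z₀ a ×ˢ I) | y ∉ E ∧ y + Ψ (w, 0) ∈ E} ≤ ε) :
    ν (E ∩ Ψ '' (ball z₀ a ×ˢ I)) * μ {z ∈ ball z₀ a | volume (I ∩ {t | Ψ (z, t) ∈ E}) = 0} ≤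
      μ (ball 0 (2 * a)) * ε := by
  obtain ⟨c, hc0, hcT, hc⟩ := exists_measure_image_eq_mul Ψ (μ.prod volume) ν
  set D := ball z₀ a
  have hprod : ∀ S : Set Y, ν (S ∩ Ψ '' (D ×ˢ I)) =
      c * (μ.restrict D).prod (volume.restrict I) (Ψ ⁻¹' S) := fun S => by
    rw [inter_comm, ← image_inter_preimage, hc, Measure.prod_restrict, inter_comm,
      Measure.restrict_apply' (measurableSet_ball.prod hI)]
  have hDW : ∀ z ∈ D, ∀ w, z + w ∈ D → w ∈ ball (0 : F) (2 * a) := fun z hz w hzw => by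
    rw [mem_ball_zero_iff, ← dist_add_self_left z w, add_comm w, two_mul]
    exact (dist_triangle_right _ _ _).trans_lt (add_lt_add hzw hz)
  have hbad := measure_prod_mul_measure_section_eq_zero_le (μ := μ) (κ := volume.restrict I)
    (Ψ.continuous.measurable hE) measurableSet_ball measurableSet_ball hDW
    (ε := ε / c) fun w hw => by
      rw [ENNReal.le_div_iff_mul_le (Or.inl hc0) (Or.inl hcT), mul_comm]
      refine le_trans (le_of_eq ?_) (hε w (mem_ball_zero_iff.1 hw))
      have hset : {y ∈ Ψ '' (D ×ˢ I) | y ∉ E ∧ y + Ψ (w, 0) ∈ E} =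
          {y | y ∉ E ∧ y + Ψ (w, 0) ∈ E} ∩ Ψ '' (D ×ˢ I) := inter_comm _ _
      rw [hset, hprod]
      simp only [preimage_ofPred_eq, ← map_add, mem_preimage]
      simp only [Prod.add_def, add_zero]
      rfl
  calc ν (E ∩ Ψ '' (D ×ˢ I)) * μ {z ∈ D | volume (I ∩ {t | Ψ (z, t) ∈ E}) = 0}
      = c * ((μ.restrict D).prod (volume.restrict I) (Ψ ⁻¹' E) *
          μ {z ∈ D | volume.restrict I (Prod.mk z ⁻¹' (Ψ ⁻¹' E)) = 0}) := by
        rw [hprod, mul_assoc]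
        simp only [Measure.restrict_apply' hI, inter_comm I]
        rfl
    _ ≤ c * (μ (ball 0 (2 * a)) * (ε / c)) := by gcongr
    _ = μ (ball 0 (2 * a)) * ε := by
        rw [mul_left_comm, ENNReal.mul_div_cancel hc0 hcT]

namespace IsOrthogonalSplitting

variable {F Y : Type*} [NormedAddCommGroup F] [InnerProductSpace ℝ F] [NormedAddCommGroup Y]
  [InnerProductSpace ℝ Y] {Ψ : (F × ℝ) ≃L[ℝ] Y} {x : Y} {a b R : ℝ}

lemma image_cylinder_subset_ball (hΨ : IsOrthogonalSplitting Ψ) (hR : 0 ≤ R)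
    (hab : a ^ 2 + b ^ 2 ≤ R ^ 2) :
    Ψ '' (ball (Ψ.symm x).1 a ×ˢ Ioo ((Ψ.symm x).2 - b) ((Ψ.symm x).2 + b)) ⊆ ball x R := by
  rintro _ ⟨p, ⟨hz, ht⟩, rfl⟩
  rw [mem_ball_iff_norm] at hz ⊢
  have hz2 : ‖p.1 - (Ψ.symm x).1‖ ^ 2 < a ^ 2 := by gcongr
  have ht2 : (p.2 - (Ψ.symm x).2) ^ 2 ≤ b ^ 2 := sq_le_sq' (by linarith [ht.1]) (by linarith [ht.2])
  exact lt_of_pow_lt_pow_left₀ 2 hR (by linarith [hΨ.norm_sub_sq p x])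

lemma ball_subset_image_cylinder (hΨ : IsOrthogonalSplitting Ψ) (hb : 0 ≤ b) (hba : b ≤ a) :
    ball x b ⊆
      Ψ '' (ball (Ψ.symm x).1 a ×ˢ Ioo ((Ψ.symm x).2 - b) ((Ψ.symm x).2 + b)) := by
  intro y hy
  rw [mem_ball_iff_norm] at hy
  have hnorm := hΨ.norm_sub_sq (Ψ.symm y) x
  rw [Ψ.apply_symm_apply] at hnorm
  have hy2 : ‖y - x‖ ^ 2 < b ^ 2 := by gcongr
  have hz : ‖(Ψ.symm y).1 - (Ψ.symm x).1‖ < b := lt_of_pow_lt_pow_left₀ 2 hb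
    (by linarith [sq_nonneg ((Ψ.symm y).2 - (Ψ.symm x).2)])
  have ht : |(Ψ.symm y).2 - (Ψ.symm x).2| < b := lt_of_pow_lt_pow_left₀ 2 hb
    (by rw [sq_abs]; linarith [sq_nonneg ‖(Ψ.symm y).1 - (Ψ.symm x).1‖])
  rw [abs_lt] at ht
  exact ⟨Ψ.symm y, ⟨mem_ball_iff_norm.2 (hz.trans_le hba), by linarith, by linarith⟩,
    Ψ.apply_symm_apply y⟩

end IsOrthogonalSplitting

variable {n : ℕ} {E : Set (EuclideanSpace ℝ (Fin (n + 1)))}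
  {Ψ : (EuclideanSpace ℝ (Fin n) × ℝ) ≃L[ℝ] EuclideanSpace ℝ (Fin (n + 1))}

lemma hausdorffMeasure_le_hausdorffMeasure_essBdry_add (hΨ : IsOrthogonalSplitting Ψ)
    (hE : MeasurableSet E) {D : Set (EuclideanSpace ℝ (Fin n))} {s t : ℝ}
    {Q : Set (EuclideanSpace ℝ (Fin (n + 1)))} (hQ : Ψ '' (D ×ˢ Ioo s t) ⊆ Q) :
    μH[n] D ≤ μH[n] (essBdry E ∩ Q) +
      (μH[n] {z ∈ D | volume (Ioo s t ∩ {τ | Ψ (z, τ) ∈ E}) = 0} +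
        μH[n] {z ∈ D | volume (Ioo s t ∩ {τ | Ψ (z, τ) ∈ Eᶜ}) = 0}) := by
  set P := fun x => (Ψ.symm x).1
  have hcross : ∀ᵐ z ∂(μH[n] : Measure (EuclideanSpace ℝ (Fin n))), z ∈ D →
      z ∈ P '' (essBdry E ∩ Q) ∪ ({z ∈ D | volume (Ioo s t ∩ {τ | Ψ (z, τ) ∈ E}) = 0} ∪
        {z ∈ D | volume (Ioo s t ∩ {τ | Ψ (z, τ) ∈ Eᶜ}) = 0}) := by
    filter_upwards [ae_jumpsIn_essBdry Ψ μH[n] hE] with z hjump hz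
    by_cases hdisj : Disjoint (Ioo s t) {τ | Ψ (z, τ) ∈ essBdry E}
    · exact Or.inr ((hjump s t hdisj).imp (⟨hz, ·⟩) (⟨hz, ·⟩))
    · obtain ⟨τ, hτ, hτE⟩ := not_disjoint_iff.1 hdisj
      exact Or.inl ⟨Ψ (z, τ), ⟨hτE, hQ ⟨(z, τ), ⟨hz, hτ⟩, rfl⟩⟩, by simp [P]⟩
  have hproj : μH[n] (P '' (essBdry E ∩ Q)) ≤ μH[n] (essBdry E ∩ Q) := by
    simpa using hΨ.lipschitzWith_fst_symm.hausdorffMeasure_image_le n.cast_nonneg (essBdry E ∩ Q)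
  calc μH[n] D ≤ _ := measure_mono_ae hcross
    _ ≤ _ := measure_union_le _ _
    _ ≤ _ := add_le_add hproj (measure_union_le _ _)

/-- Both `E` and its complement fill a definite part of the core `B_{ηR}`, so near invariance makes
most lines in the direction `Ψ (0, 1)` meet both, hence cross `∂*E` within `B_R`. -/
lemma mul_hausdorffMeasure_ball_le_of_near_invariant (hΨ : IsOrthogonalSplitting Ψ)
    (hE : MeasurableSet E) {x : EuclideanSpace ℝ (Fin (n + 1))} {R η : ℝ} (hR : 0 ≤ R)
    (hη : 0 ≤ η) (hη2 : η ≤ 1 / 2) {ε δ : ℝ≥0∞}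
    (hεE : ∀ w : EuclideanSpace ℝ (Fin n), ‖w‖ < 2 * R →
      volume {y ∈ ball x R | y ∉ E ∧ y + Ψ (w, 0) ∈ E} ≤ ε)
    (hεEc : ∀ w : EuclideanSpace ℝ (Fin n), ‖w‖ < 2 * R →
      volume {y ∈ ball x R | y ∈ E ∧ y + Ψ (w, 0) ∉ E} ≤ ε)
    (hδE : δ ≤ volume (E ∩ ball x (η * R))) (hδEc : δ ≤ volume (Eᶜ ∩ ball x (η * R))) :
    δ * μH[n] (ball (0 : EuclideanSpace ℝ (Fin n)) ((1 - η) * R)) ≤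
      δ * μH[n] (essBdry E ∩ ball x R) +
        2 * (μH[n] (ball (0 : EuclideanSpace ℝ (Fin n)) (2 * R)) * ε) := by
  set μ : Measure (EuclideanSpace ℝ (Fin n)) := μH[n]
  set a := (1 - η) * R
  have haR : a ≤ R := mul_le_of_le_one_left hR (by linarith)
  have hsq : a ^ 2 + (η * R) ^ 2 ≤ R ^ 2 := by
    have h1η : 0 ≤ 1 - η := by linarith
    have hcross : 0 ≤ 2 * η * (1 - η) * R ^ 2 := by positivity
    linarith
  have hin := hΨ.image_cylinder_subset_ball (x := x) hR hsq
  have hout := hΨ.ball_subset_image_cylinder (x := x) (mul_nonneg hη hR)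
    (show η * R ≤ a from mul_le_mul_of_nonneg_right (by linarith) hR)
  have hBad : ∀ {G : Set (EuclideanSpace ℝ (Fin (n + 1)))}, MeasurableSet G →
      δ ≤ volume (G ∩ ball x (η * R)) →
      (∀ w : EuclideanSpace ℝ (Fin n), ‖w‖ < 2 * R →
        volume {y ∈ ball x R | y ∉ G ∧ y + Ψ (w, 0) ∈ G} ≤ ε) →
      δ * μ {z ∈ ball (Ψ.symm x).1 a | volume (Ioo ((Ψ.symm x).2 - η * R)
        ((Ψ.symm x).2 + η * R) ∩ {t | Ψ (z, t) ∈ G}) = 0} ≤ μ (ball 0 (2 * R)) * ε :=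
    fun {G} hG hδ hε => calc
      _ ≤ volume (G ∩ Ψ '' (ball (Ψ.symm x).1 a ×ˢ Ioo _ _)) * _ :=
        mul_le_mul_left (hδ.trans (measure_mono (by gcongr))) _
      _ ≤ μ (ball 0 (2 * a)) * ε :=
        measure_cylinder_mul_measure_line_eq_zero_le Ψ μ volume hG measurableSet_Ioo fun w hw =>
          (measure_mono (inter_subset_inter_left _ hin)).trans (hε w (by linarith))
      _ ≤ μ (ball 0 (2 * R)) * ε := by gcongr
  rw [← Measure.addHaar_ball_center μ (Ψ.symm x).1, two_mul]
  refine (mul_le_mul_right (hausdorffMeasure_le_hausdorffMeasure_essBdry_add hΨ hE hin) δ).trans ?_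
  rw [mul_add, mul_add]
  exact add_le_add_right (add_le_add (hBad hE hδE hεE)
    (hBad hE.compl hδEc (by simpa only [mem_compl_iff, not_not] using hεEc))) _

end Crossing

section IntermediateDensity

variable {N : ℕ} {E : Set (EuclideanSpace ℝ (Fin N))} {x : EuclideanSpace ℝ (Fin N)}

lemma abs_measureReal_inter_sub_le {X : Type*} [MeasurableSpace X] {μ : Measure X} (E : Set X)
    {A B : Set X} (hAB : A ⊆ B) (hA : MeasurableSet A) (hB : μ B ≠ ⊤) :
    |μ.real (E ∩ B) - μ.real (E ∩ A)| ≤ |μ.real B - μ.real A| := by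
  have hsub : E ∩ A ⊆ E ∩ B := inter_subset_inter_right _ hAB
  have hsplit : μ.real (E ∩ B) ≤ μ.real (E ∩ A) + μ.real (B \ A) := by
    refine (measureReal_mono (fun y hy => ?_)
      (measure_ne_top_of_subset (union_subset ?_ sdiff_subset) hB)).trans (measureReal_union_le _ _)
    · exact (em (y ∈ A)).imp (⟨hy.1, ·⟩) (⟨hy.2, ·⟩)
    · exact inter_subset_right.trans hAB
  rw [measureReal_sdiff hAB hA hB] at hsplit
  rw [abs_of_nonneg (sub_nonneg.2 (measureReal_mono hsub
    (measure_ne_top_of_subset inter_subset_right hB)))]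
  exact (by linarith : _ ≤ μ.real B - μ.real A).trans (le_abs_self _)

lemma continuousOn_volume_inter_ball (E : Set (EuclideanSpace ℝ (Fin N)))
    (x : EuclideanSpace ℝ (Fin N)) :
    ContinuousOn (fun r => volume (E ∩ ball x r)) (Ioi 0) := by
  have hball : ContinuousOn (fun r => volume.real (ball x r)) (Ioi 0) := by
    refine (show ContinuousOn (fun r => r ^ N * volume.real (ball (0 : EuclideanSpace ℝ (Fin N)) 1))
      (Ioi 0) by fun_prop).congr fun r hr => ?_
    simp [Measure.real, Measure.addHaar_ball_of_pos volume x hr, (mem_Ioi.1 hr).le]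
  have hreal : ContinuousOn (fun r => volume.real (E ∩ ball x r)) (Ioi 0) := by
    intro r hr
    refine tendsto_iff_dist_tendsto_zero.2 (squeeze_zero (fun _ => dist_nonneg) (fun s => ?_)
      (tendsto_iff_dist_tendsto_zero.1 (hball r hr)))
    rcases le_total r s with hrs | hsr
    · exact abs_measureReal_inter_sub_le E (ball_subset_ball hrs) measurableSet_ball
        measure_ball_lt_top.ne
    · rw [dist_comm, dist_comm (volume.real (ball x s))]
      exact abs_measureReal_inter_sub_le E (ball_subset_ball hsr) measurableSet_ball
        measure_ball_lt_top.ne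
  refine (ENNReal.continuous_ofReal.comp_continuousOn hreal).congr fun r _ => ?_
  exact (ofReal_measureReal
    (measure_ne_top_of_subset inter_subset_right measure_ball_lt_top.ne)).symm

lemma continuousOn_volume_inter_ball_div (E : Set (EuclideanSpace ℝ (Fin N)))
    (x : EuclideanSpace ℝ (Fin N)) :
    ContinuousOn (fun r => volume (E ∩ ball x r) / volume (ball x r)) (Ioi 0) := by
  intro r hr
  have hball := continuousOn_volume_inter_ball univ x r hr
  simp only [univ_inter] at hball
  have h0 := (measure_ball_pos volume x hr).ne'
  exact ENNReal.Tendsto.div (continuousOn_volume_inter_ball E x r hr) (Or.inr h0) hball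
    (Or.inr (measure_ne_top_of_subset inter_subset_right measure_ball_lt_top.ne))

lemma mem_densityZeroPts_of_eventually_le_half (hE : MeasurableSet E)
    (hhalf : ∀ᶠ r in 𝓝[>] (0 : ℝ), volume (E ∩ ball x r) / volume (ball x r) ≤ 2⁻¹)
    (hsmall : ∀ δ > 0, ∀ᶠ r in 𝓝[>] (0 : ℝ), volume (E ∩ ball x r) / volume (ball x r) < δ ∨
      volume (Eᶜ ∩ ball x r) / volume (ball x r) < δ) : x ∈ densityZeroPts E := by
  refine ENNReal.tendsto_nhds_zero.2 fun δ hδ => ?_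
  filter_upwards [hhalf, hsmall (min δ 2⁻¹) (by simp [hδ]), self_mem_nhdsWithin]
    with r hle hor hr
  rw [volume_compl_inter_ball_div hE x hr, lt_min_iff, lt_min_iff] at hor
  refine (hor.resolve_right fun hcompl => hcompl.2.not_ge ?_).1.le
  rw [← ENNReal.one_sub_inv_two]
  exact tsub_le_tsub_left hle 1

lemma eventually_nhdsGT_lt_or_gt {α : Type*} [LinearOrder α] [TopologicalSpace α]
    [OrderClosedTopology α] {f : ℝ → α} {a : ℝ} {c : α} (hf : ContinuousOn f (Ioi a))
    (hne : ∀ᶠ r in 𝓝[>] a, f r ≠ c) : (∀ᶠ r in 𝓝[>] a, f r < c) ∨ ∀ᶠ r in 𝓝[>] a, c < f r := by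
  obtain ⟨b, hab, hb⟩ := mem_nhdsGT_iff_exists_Ioo_subset.1 hne
  have hconn : (f '' Ioo a b).OrdConnected :=
    (isPreconnected_Ioo.image f (hf.mono Ioo_subset_Ioi_self)).ordConnected
  have hc : c ∉ f '' Ioo a b := fun ⟨r, hr, hrc⟩ => hb hr hrc
  obtain ⟨s, hs⟩ := nonempty_Ioo.2 (mem_Ioi.1 hab)
  have hmem : Ioo a b ∈ 𝓝[>] a := Ioo_mem_nhdsGT hab
  rcases (hb hs).lt_or_gt with hlt | hgt
  · refine Or.inl (mem_of_superset hmem fun r hr => not_le.1 fun hle => hc ?_)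
    exact hconn.out (mem_image_of_mem f hs) (mem_image_of_mem f hr) ⟨hlt.le, hle⟩
  · refine Or.inr (mem_of_superset hmem fun r hr => not_le.1 fun hle => hc ?_)
    exact hconn.out (mem_image_of_mem f hr) (mem_image_of_mem f hs) ⟨hle, hgt.le⟩

/-- The volume fraction of `E` in `ball x r` depends continuously on `r`, so if it is close to `0`
or `1` for all small `r`, it cannot switch between the two. -/
lemma exists_frequently_le_volume_inter_ball_div (hE : MeasurableSet E) (hx : x ∈ essBdry E) :
    ∃ δ : ℝ≥0∞, δ ≠ 0 ∧ ∃ᶠ r in 𝓝[>] (0 : ℝ),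
      δ ≤ volume (E ∩ ball x r) / volume (ball x r) ∧
        δ ≤ volume (Eᶜ ∩ ball x r) / volume (ball x r) := by
  by_contra! hcon
  have hsmall : ∀ δ > 0, ∀ᶠ r in 𝓝[>] (0 : ℝ), volume (E ∩ ball x r) / volume (ball x r) < δ ∨
      volume (Eᶜ ∩ ball x r) / volume (ball x r) < δ := fun δ hδ => by
    simpa only [← not_le, ← imp_iff_not_or] using hcon δ hδ.ne'
  have hcompl : ∀ᶠ r in 𝓝[>] (0 : ℝ), volume (Eᶜ ∩ ball x r) / volume (ball x r) =
      1 - volume (E ∩ ball x r) / volume (ball x r) := by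
    filter_upwards [self_mem_nhdsWithin] with r hr using volume_compl_inter_ball_div hE x hr
  have hne : ∀ᶠ r in 𝓝[>] (0 : ℝ), volume (E ∩ ball x r) / volume (ball x r) ≠ 2⁻¹ := by
    filter_upwards [hsmall 2⁻¹ (by simp), hcompl] with r hor hr heq
    simp [hr, heq] at hor
  refine hx ?_
  rcases eventually_nhdsGT_lt_or_gt (continuousOn_volume_inter_ball_div E x) hne with hlt | hgt
  · exact Or.inr (mem_densityZeroPts_of_eventually_le_half hE (hlt.mono fun _ => le_of_lt)
      hsmall)
  · rw [← densityZeroPts_compl hE]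
    refine Or.inl (mem_densityZeroPts_of_eventually_le_half hE.compl ?_ ?_)
    · filter_upwards [hgt, hcompl] with r hr heq
      rw [heq, ← ENNReal.one_sub_inv_two]
      exact tsub_le_tsub_left hr.le 1
    · simpa only [compl_compl, or_comm] using hsmall

end IntermediateDensity

section NearInvariance

variable {Y : Type*} [NormedAddCommGroup Y] [MeasurableSpace Y] [BorelSpace Y]

lemma measure_notMem_add_mem_le_add_symmDiff (μ : Measure Y) [μ.IsAddRightInvariant]
    (E E' B : Set Y) (v : Y) :
    μ {y ∈ B | y ∉ E' ∧ y + v ∈ E'} ≤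
      μ {y ∈ B | y ∉ E ∧ y + v ∈ E} + 2 * μ (symmDiff E' E) := by
  have hsub : {y ∈ B | y ∉ E' ∧ y + v ∈ E'} ⊆ {y ∈ B | y ∉ E ∧ y + v ∈ E} ∪
      (symmDiff E' E ∪ (· + v) ⁻¹' symmDiff E' E) := by
    rintro y ⟨hB, hy, hyv⟩
    by_cases hyE : y ∈ E
    · exact Or.inr (Or.inl (Or.inr ⟨hyE, hy⟩))
    by_cases hyvE : y + v ∈ E
    · exact Or.inl ⟨hB, hyE, hyvE⟩
    · exact Or.inr (Or.inr (Or.inl ⟨hyv, hyvE⟩))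
  calc _ ≤ _ := measure_mono hsub
    _ ≤ _ := measure_union_le _ _
    _ ≤ _ := add_le_add_right (measure_union_le _ _) _
    _ = _ := by rw [measure_preimage_add_right, two_mul]

lemma measure_mem_add_notMem_le (μ : Measure Y) [μ.IsAddRightInvariant] (E : Set Y) (x : Y)
    {v : Y} {r R : ℝ} (hv : ‖v‖ + r ≤ R) :
    μ {y ∈ ball x r | y ∈ E ∧ y + v ∉ E} ≤ μ {y ∈ ball x R | y ∉ E ∧ y + -v ∈ E} := by
  rw [← measure_preimage_add_right μ v {y ∈ ball x R | y ∉ E ∧ y + -v ∈ E}]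
  refine measure_mono fun y ⟨hy, hyE, hyv⟩ => ⟨?_, hyv, by simpa using hyE⟩
  rw [mem_ball] at hy ⊢
  calc dist (y + v) x ≤ dist (y + v) y + dist y x := dist_triangle _ _ _
    _ < ‖v‖ + r := by rw [dist_self_add_left]; gcongr
    _ ≤ R := hv

lemma le_measure_inter_of_add_symmDiff_le {X : Type*} [MeasurableSpace X] {μ : Measure X}
    {E E' Q : Set X} {δ : ℝ≥0∞} (hfin : μ (symmDiff E' E) ≠ ⊤)
    (h : δ + μ (symmDiff E' E) ≤ μ (E ∩ Q)) : δ ≤ μ (E' ∩ Q) := by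
  have hsub : E ∩ Q ⊆ (E' ∩ Q) ∪ symmDiff E' E := fun y hy =>
    (em (y ∈ E')).imp (⟨·, hy.2⟩) fun hyE' => Or.inr ⟨hy.1, hyE'⟩
  exact (ENNReal.add_le_add_iff_right hfin).1
    (h.trans ((measure_mono hsub).trans (measure_union_le _ _)))

variable [InnerProductSpace ℝ Y] [FiniteDimensional ℝ Y] {E V : Set Y} {ν : Measure Y}
  {σ : Y → Y} {x : Y}

namespace IsGaussGreenField

lemma volume_notMem_add_mem_le_of_inner_eq_zero (h : IsGaussGreenField E V ν σ)
    (hE : MeasurableSet E) (hEfin : volume E ≠ ⊤) {R : ℝ} (hR : closedBall x (5 * R) ⊆ V) {v : Y}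
    (hv : ‖v‖ ≤ 2 * R) (horth : ⟪σ x, v⟫ = 0) :
    volume {y ∈ ball x (3 * R) | y ∉ E ∧ y + v ∈ E} ≤
      ENNReal.ofReal (2 * R) * ∫⁻ y in closedBall x (5 * R), ‖σ y - σ x‖ₑ ∂ν := by
  have hsweep : ∀ y ∈ ball x (3 * R), ∀ s ∈ Icc (0 : ℝ) 1, y + s • v ∈ closedBall x (5 * R) := by
    intro y hy s hs
    have hsv : ‖s • v‖ ≤ ‖v‖ := by
      rw [norm_smul, Real.norm_of_nonneg hs.1]
      exact mul_le_of_le_one_left (norm_nonneg v) hs.2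
    rw [mem_ball] at hy
    rw [mem_closedBall]
    calc dist (y + s • v) x ≤ dist (y + s • v) y + dist y x := dist_triangle _ _ _
      _ = ‖s • v‖ + dist y x := by rw [dist_self_add_left]
      _ ≤ 5 * R := by linarith
  refine (h.volume_setOf_notMem_add_mem_le hE hEfin isOpen_ball measurableSet_closedBall hR
    hsweep).trans ?_
  rw [← lintegral_const_mul' _ _ ENNReal.ofReal_ne_top]
  refine lintegral_mono fun y => ?_
  rw [← sub_zero ⟪σ y, v⟫, ← horth, ← inner_sub_left, ← ofReal_norm, ← ofReal_norm,
    ← ENNReal.ofReal_mul ((norm_nonneg v).trans hv)]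
  refine ENNReal.ofReal_le_ofReal ((norm_inner_le_norm _ _).trans ?_)
  rw [mul_comm]
  gcongr

lemma eventually_volume_notMem_add_mem_le (h : IsGaussGreenField E V ν σ) (hE : MeasurableSet E)
    (hEfin : volume E ≠ ⊤) (hV : IsOpen V) (hxV : x ∈ V)
    (hleb : ∀ ε : ℝ≥0∞, ε ≠ 0 → ∀ᶠ r in 𝓝[>] (0 : ℝ),
      ∫⁻ y in closedBall x r, ‖σ y - σ x‖ₑ ∂ν ≤ ε * ν (closedBall x r))
    {n : ℕ} {C : ℝ≥0∞} (hC : C ≠ ⊤)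
    (hgrowth : ∀ᶠ r in 𝓝[>] (0 : ℝ), ν (closedBall x r) ≤ C * ENNReal.ofReal (2 * r) ^ n)
    {ε : ℝ≥0∞} (hε : ε ≠ 0) :
    ∀ᶠ R in 𝓝[>] (0 : ℝ), ∀ v, ‖v‖ ≤ 2 * R → ⟪σ x, v⟫ = 0 →
      volume {y ∈ ball x (3 * R) | y ∉ E ∧ y + v ∈ E} ≤ ε * ENNReal.ofReal R ^ (n + 1) := by
  set C' := 2 * C * 10 ^ n with hC'
  have hε' : ε / C' ≠ 0 := (ENNReal.div_pos hε (by finiteness)).ne'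
  have hscale : Tendsto (fun R : ℝ => 5 * R) (𝓝[>] 0) (𝓝[>] 0) := by
    refine tendsto_nhdsWithin_iff.2 ⟨?_, ?_⟩
    · exact (Continuous.tendsto' (by fun_prop) 0 0 (by simp)).mono_left nhdsWithin_le_nhds
    · filter_upwards [self_mem_nhdsWithin] with R hR using mul_pos (by norm_num) (mem_Ioi.1 hR)
  have hsub : ∀ᶠ r in 𝓝[>] (0 : ℝ), closedBall x r ⊆ V :=
    nhdsWithin_le_nhds (eventually_closedBall_subset (hV.mem_nhds hxV))
  filter_upwards [hscale.eventually hsub, hscale.eventually (hleb _ hε'),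
    hscale.eventually hgrowth] with R hRV hRleb hRgrowth v hv horth
  calc volume {y ∈ ball x (3 * R) | y ∉ E ∧ y + v ∈ E}
      ≤ ENNReal.ofReal (2 * R) * ∫⁻ y in closedBall x (5 * R), ‖σ y - σ x‖ₑ ∂ν :=
        h.volume_notMem_add_mem_le_of_inner_eq_zero hE hEfin hRV hv horth
    _ ≤ ENNReal.ofReal (2 * R) * (ε / C' * (C * ENNReal.ofReal (2 * (5 * R)) ^ n)) := by
        gcongr
        exact hRleb.trans (by gcongr)
    _ = C' * (ε / C') * ENNReal.ofReal R ^ (n + 1) := by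
        have h2 : ENNReal.ofReal (2 * R) = 2 * ENNReal.ofReal R := by
          simp [ENNReal.ofReal_mul]
        have h10 : ENNReal.ofReal (2 * (5 * R)) = 10 * ENNReal.ofReal R := by
          rw [← mul_assoc, ENNReal.ofReal_mul (by norm_num)]
          norm_num
        rw [h2, h10, hC']
        ring
    _ ≤ ε * ENNReal.ofReal R ^ (n + 1) := by
        gcongr
        exact ENNReal.mul_div_le

end IsGaussGreenField

end NearInvariance

section Point

variable {n : ℕ} {E E' : Set (EuclideanSpace ℝ (Fin (n + 1)))}
  {x : EuclideanSpace ℝ (Fin (n + 1))}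

lemma exists_frequently_mul_pow_le_volume_inter_ball {N : ℕ} {E : Set (EuclideanSpace ℝ (Fin N))}
    (hE : MeasurableSet E) {x : EuclideanSpace ℝ (Fin N)} (hx : x ∈ essBdry E) {η : ℝ}
    (hη : 0 < η) :
    ∃ δ : ℝ≥0∞, δ ≠ 0 ∧ ∃ᶠ R in 𝓝[>] (0 : ℝ),
      δ * ENNReal.ofReal R ^ N ≤ volume (E ∩ ball x (η * R)) ∧
        δ * ENNReal.ofReal R ^ N ≤ volume (Eᶜ ∩ ball x (η * R)) := by
  obtain ⟨δ, hδ, hfreq⟩ := exists_frequently_le_volume_inter_ball_div hE hx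
  set ω := volume (ball (0 : EuclideanSpace ℝ (Fin N)) 1)
  have hω : ω ≠ 0 := (measure_ball_pos _ _ one_pos).ne'
  have hscale : Tendsto (fun r : ℝ => r / η) (𝓝[>] 0) (𝓝[>] 0) := by
    refine tendsto_nhdsWithin_iff.2 ⟨?_, ?_⟩
    · exact (Continuous.tendsto' (by fun_prop) 0 0 (by simp)).mono_left nhdsWithin_le_nhds
    · filter_upwards [self_mem_nhdsWithin] with r hr using div_pos hr hη
  refine ⟨δ * (ENNReal.ofReal η ^ N * ω), by simp [hδ, hω, hη],
    hscale.frequently ((hfreq.and_eventually self_mem_nhdsWithin).mono ?_)⟩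
  rintro r ⟨⟨hrE, hrEc⟩, hr⟩
  have hball : δ * (ENNReal.ofReal η ^ N * ω) * ENNReal.ofReal (r / η) ^ N =
      δ * volume (ball x r) := by
    rw [Measure.addHaar_ball_of_pos volume x hr, finrank_euclideanSpace_fin,
      ENNReal.ofReal_pow (mem_Ioi.1 hr).le, ENNReal.ofReal_div_of_pos hη]
    rw [mul_assoc, mul_right_comm, ← mul_pow, ENNReal.mul_div_cancel (by simp [hη]) (by simp)]
  rw [hball, mul_div_cancel₀ r hη.ne']
  exact ⟨ENNReal.mul_le_of_le_div hrE, ENNReal.mul_le_of_le_div hrEc⟩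

lemma mul_hausdorffMeasure_ball_le_of_symmDiff
    {Ψ : (EuclideanSpace ℝ (Fin n) × ℝ) ≃L[ℝ] EuclideanSpace ℝ (Fin (n + 1))}
    (hΨ : IsOrthogonalSplitting Ψ) (hE' : MeasurableSet E') {R η : ℝ}
    (hR : 0 ≤ R) (hη : 0 ≤ η) (hη2 : η ≤ 1 / 2) {ε δ : ℝ≥0∞}
    (hε : ∀ w : EuclideanSpace ℝ (Fin n), ‖w‖ ≤ 2 * R →
      volume {y ∈ ball x (3 * R) | y ∉ E ∧ y + Ψ (w, 0) ∈ E} ≤ ε)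
    (hfin : volume (symmDiff E' E) ≠ ⊤)
    (hδE : δ + volume (symmDiff E' E) ≤ volume (E ∩ ball x (η * R)))
    (hδEc : δ + volume (symmDiff E' E) ≤ volume (Eᶜ ∩ ball x (η * R))) :
    δ * μH[n] (ball (0 : EuclideanSpace ℝ (Fin n)) ((1 - η) * R)) ≤
      δ * μH[n] (essBdry E' ∩ ball x R) +
        2 * (μH[n] (ball (0 : EuclideanSpace ℝ (Fin n)) (2 * R)) *
          (ε + 2 * volume (symmDiff E' E))) := by
  have hε' : ∀ w : EuclideanSpace ℝ (Fin n), ‖w‖ ≤ 2 * R →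
      volume {y ∈ ball x (3 * R) | y ∉ E' ∧ y + Ψ (w, 0) ∈ E'} ≤
        ε + 2 * volume (symmDiff E' E) := fun w hw =>
    (measure_notMem_add_mem_le_add_symmDiff volume E E' _ _).trans (by gcongr; exact hε w hw)
  refine mul_hausdorffMeasure_ball_le_of_near_invariant hΨ hE' hR hη hη2 (fun w hw => ?_)
    (fun w hw => ?_) (le_measure_inter_of_add_symmDiff_le hfin hδE) ?_
  · refine (measure_mono (inter_subset_inter_left _ (ball_subset_ball ?_))).trans (hε' w hw.le)
    linarith
  · refine (measure_mem_add_notMem_le volume E' x (R := 3 * R) ?_).trans ?_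
    · rw [hΨ.norm_apply_zero_right]
      linarith
    · simpa [← map_neg] using hε' (-w) (by simpa using hw.le)
  · rw [← compl_symmDiff_compl] at hδEc hfin
    exact le_measure_inter_of_add_symmDiff_le hfin hδEc

end Point

section DensityEstimate

lemma exists_mul_ofReal_one_add_add_le_pow (n : ℕ) {θ : ℝ≥0} (hθ : θ < 1) :
    ∃ s ∈ Ioc (0 : ℝ) (1 / 2),
      θ * ENNReal.ofReal (1 + s) + ENNReal.ofReal s ≤ ENNReal.ofReal (1 - s) ^ n := by
  have hlt : ∀ᶠ s in 𝓝 (0 : ℝ), (θ : ℝ) * (1 + s) + s < (1 - s) ^ n :=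
    ContinuousAt.eventually_lt (by fun_prop) (by fun_prop) (by simpa using hθ)
  obtain ⟨s, hs, hs0, hs2⟩ := ((hlt.filter_mono nhdsWithin_le_nhds).and
    (Ioc_mem_nhdsGT (one_half_pos (α := ℝ)))).exists
  refine ⟨s, ⟨hs0, hs2⟩, ?_⟩
  rw [← ENNReal.ofReal_coe_nnreal, ← ENNReal.ofReal_mul θ.coe_nonneg,
    ← ENNReal.ofReal_add (by positivity) hs0.le, ← ENNReal.ofReal_pow (by linarith)]
  exact ENNReal.ofReal_le_ofReal hs.le

lemma exists_norm_eq_one_and_eq_norm_smul {F : Type*} [NormedAddCommGroup F] [NormedSpace ℝ F]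
    [Nontrivial F] (v : F) : ∃ e : F, ‖e‖ = 1 ∧ v = ‖v‖ • e := by
  rcases eq_or_ne v 0 with rfl | hv
  · obtain ⟨e, he⟩ := exists_norm_eq F zero_le_one
    exact ⟨e, he, by simp⟩
  · exact ⟨‖v‖⁻¹ • v, norm_smul_inv_norm (𝕜 := ℝ) hv,
      (smul_inv_smul₀ (norm_ne_zero_iff.2 hv) v).symm⟩

lemma hausdorffMeasure_ball_eq_pow_mul (n : ℕ) {r : ℝ} (hr : 0 < r) :
    μH[n] (ball (0 : EuclideanSpace ℝ (Fin n)) r) =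
      ENNReal.ofReal r ^ n * μH[n] (ball (0 : EuclideanSpace ℝ (Fin n)) 1) := by
  rw [Measure.addHaar_ball_of_pos _ 0 hr, finrank_euclideanSpace_fin, ENNReal.ofReal_pow hr.le]

variable {n : ℕ} {E : Set (EuclideanSpace ℝ (Fin (n + 1)))} {x : EuclideanSpace ℝ (Fin (n + 1))}

lemma mul_pow_le_hausdorffMeasure_essBdry_inter_ball {E' : Set (EuclideanSpace ℝ (Fin (n + 1)))}
    {Ψ : (EuclideanSpace ℝ (Fin n) × ℝ) ≃L[ℝ] EuclideanSpace ℝ (Fin (n + 1))}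
    (hΨ : IsOrthogonalSplitting Ψ) (hE' : MeasurableSet E') {R s : ℝ} (hR : 0 < R)
    (hs : s ∈ Ioc (0 : ℝ) (1 / 2)) {θ ε δ : ℝ≥0∞}
    (hθ : θ * ENNReal.ofReal (1 + s) + ENNReal.ofReal s ≤ ENNReal.ofReal (1 - s) ^ n)
    (hδ : δ ≠ 0) (hεδ : 6 * 2 ^ n * ε ≤ δ * ENNReal.ofReal s)
    (hε : ∀ w : EuclideanSpace ℝ (Fin n), ‖w‖ ≤ 2 * R →
      volume {y ∈ ball x (3 * R) | y ∉ E ∧ y + Ψ (w, 0) ∈ E} ≤ ε)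
    (hvol : volume (symmDiff E' E) ≤ ε)
    (hδE : δ + volume (symmDiff E' E) ≤ volume (E ∩ ball x (s * R)))
    (hδEc : δ + volume (symmDiff E' E) ≤ volume (Eᶜ ∩ ball x (s * R))) :
    θ * (ENNReal.ofReal (1 + s) * ENNReal.ofReal (2 * R) ^ n) ≤
      μH[n] (essBdry E' ∩ ball x R) := by
  obtain ⟨hs0, hs2⟩ := hs
  have hmass : δ + volume (symmDiff E' E) ≠ ⊤ :=
    ne_top_of_le_ne_top (measure_ball_lt_top.ne) (hδE.trans (measure_mono inter_subset_right))
  obtain ⟨hδT, hfin⟩ := ENNReal.add_ne_top.1 hmass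
  have hball := mul_hausdorffMeasure_ball_le_of_symmDiff hΨ hE' hR.le hs0.le hs2 hε hfin hδE hδEc
  rw [hausdorffMeasure_ball_eq_pow_mul n (by nlinarith : 0 < (1 - s) * R),
    hausdorffMeasure_ball_eq_pow_mul n (by linarith : 0 < 2 * R)] at hball
  have hκT : μH[n] (ball (0 : EuclideanSpace ℝ (Fin n)) 1) ≠ ⊤ := measure_ball_lt_top.ne
  have hκ := two_pow_le_hausdorffMeasure_ball n
  set κ := μH[n] (ball (0 : EuclideanSpace ℝ (Fin n)) 1)
  set ρ := ENNReal.ofReal R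
  have h2R : ENNReal.ofReal (2 * R) = 2 * ρ := by simp [ρ, ENNReal.ofReal_mul]
  have herror : 2 * ((2 * ρ) ^ n * κ * (ε + 2 * volume (symmDiff E' E))) ≤
      δ * (ENNReal.ofReal s * (ρ ^ n * κ)) :=
    calc 2 * ((2 * ρ) ^ n * κ * (ε + 2 * volume (symmDiff E' E)))
        ≤ 2 * ((2 * ρ) ^ n * κ * (ε + 2 * ε)) := by gcongr
      _ = 6 * 2 ^ n * ε * (ρ ^ n * κ) := by ring
      _ ≤ δ * ENNReal.ofReal s * (ρ ^ n * κ) := by gcongr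
      _ = δ * (ENNReal.ofReal s * (ρ ^ n * κ)) := mul_assoc _ _ _
  have hcancel : ENNReal.ofReal ((1 - s) * R) ^ n * κ ≤
      μH[n] (essBdry E' ∩ ball x R) + ENNReal.ofReal s * (ρ ^ n * κ) := by
    rw [← ENNReal.mul_le_mul_iff_right hδ hδT, mul_add]
    rw [h2R] at hball
    exact hball.trans (by gcongr)
  refine (ENNReal.add_le_add_iff_right (a := ENNReal.ofReal s * (ρ ^ n * κ)) (by finiteness)).1
    (le_trans ?_ hcancel)
  calc θ * (ENNReal.ofReal (1 + s) * ENNReal.ofReal (2 * R) ^ n) + ENNReal.ofReal s * (ρ ^ n * κ)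
      = θ * ENNReal.ofReal (1 + s) * (ρ ^ n * 2 ^ n) + ENNReal.ofReal s * (ρ ^ n * κ) := by
        rw [h2R]; ring
    _ ≤ θ * ENNReal.ofReal (1 + s) * (ρ ^ n * κ) + ENNReal.ofReal s * (ρ ^ n * κ) := by gcongr
    _ = (θ * ENNReal.ofReal (1 + s) + ENNReal.ofReal s) * (ρ ^ n * κ) := (add_mul _ _ _).symm
    _ ≤ ENNReal.ofReal (1 - s) ^ n * (ρ ^ n * κ) := by gcongr
    _ = ENNReal.ofReal ((1 - s) * R) ^ n * κ := by
        rw [ENNReal.ofReal_mul (by linarith), mul_pow, mul_assoc]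

lemma IsGaussGreenField.frequently_eventually_mul_le_hausdorffMeasure_essBdry
    {V : Set (EuclideanSpace ℝ (Fin (n + 1)))} {ν : Measure (EuclideanSpace ℝ (Fin (n + 1)))}
    {σ : EuclideanSpace ℝ (Fin (n + 1)) → EuclideanSpace ℝ (Fin (n + 1))}
    (h : IsGaussGreenField E V ν σ) (hE : MeasurableSet E) (hEfin : volume E ≠ ⊤) (hV : IsOpen V)
    (hxV : x ∈ V) (hx : x ∈ essBdry E)
    (hleb : ∀ ε : ℝ≥0∞, ε ≠ 0 → ∀ᶠ r in 𝓝[>] (0 : ℝ),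
      ∫⁻ y in closedBall x r, ‖σ y - σ x‖ₑ ∂ν ≤ ε * ν (closedBall x r))
    (hdens : ∀ t : ℝ≥0∞, 1 < t → ∀ᶠ r in 𝓝[>] (0 : ℝ),
      ν (closedBall x r) ≤ t * ENNReal.ofReal (2 * r) ^ n)
    {ι : Type*} {l : Filter ι} {F : ι → Set (EuclideanSpace ℝ (Fin (n + 1)))}
    (hF : ∀ i, MeasurableSet (F i))
    (hconv : Tendsto (fun i => volume (symmDiff (F i) E)) l (𝓝 0)) {θ : ℝ≥0} (hθ : θ < 1) :
    ∃ᶠ R in 𝓝[>] (0 : ℝ), ∀ᶠ i in l,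
      θ * ν (closedBall x R) ≤ μH[n] (essBdry (F i) ∩ ball x R) := by
  obtain ⟨s, hs, hθs⟩ := exists_mul_ofReal_one_add_add_le_pow n hθ
  have hs0 : ENNReal.ofReal s ≠ 0 := by simpa using hs.1
  obtain ⟨e, he, hσe⟩ := exists_norm_eq_one_and_eq_norm_smul (σ x)
  obtain ⟨Ψ, rfl, hΨ⟩ := exists_isOrthogonalSplitting (n := n) (by simp) he
  have horth : ∀ w, ⟪σ x, Ψ (w, 0)⟫ = 0 := fun w => by
    rw [hσe, real_inner_smul_left, real_inner_comm, hΨ.inner_apply_apply, mul_zero]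
  obtain ⟨δ, hδ0, hmass⟩ := exists_frequently_mul_pow_le_volume_inter_ball hE hx hs.1
  have hδ2 : δ / 2 ≠ 0 := (ENNReal.half_pos hδ0).ne'
  set ε := δ / 2 * ENNReal.ofReal s / (6 * 2 ^ n)
  have hε0 : ε ≠ 0 := ENNReal.div_ne_zero.2 ⟨mul_ne_zero hδ2 hs0, by finiteness⟩
  have hεδ : 6 * 2 ^ n * ε = δ / 2 * ENNReal.ofReal s :=
    ENNReal.mul_div_cancel (by positivity) (by finiteness)
  have hdens_s := hdens (ENNReal.ofReal (1 + s)) (by simpa using hs.1)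
  have hinv := h.eventually_volume_notMem_add_mem_le hE hEfin hV hxV hleb ENNReal.ofReal_ne_top
    hdens_s hε0
  refine (hmass.and_eventually (hinv.and (hdens_s.and self_mem_nhdsWithin))).mono ?_
  rintro R ⟨⟨hRE, hREc⟩, hRinv, hRdens, hR⟩
  have hρ : ENNReal.ofReal R ^ (n + 1) ≠ 0 := pow_ne_zero _ (by simpa using hR)
  have hsplit : δ * ENNReal.ofReal R ^ (n + 1) =
      δ / 2 * ENNReal.ofReal R ^ (n + 1) + δ / 2 * ENNReal.ofReal R ^ (n + 1) := by
    rw [← add_mul, ENNReal.add_halves]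
  filter_upwards [hconv.eventually_le_const (pos_iff_ne_zero.2 (mul_ne_zero hδ2 hρ)),
    hconv.eventually_le_const (pos_iff_ne_zero.2 (mul_ne_zero hε0 hρ))] with i hiδ hiε
  have hmass_i : δ / 2 * ENNReal.ofReal R ^ (n + 1) + volume (symmDiff (F i) E) ≤
      δ * ENNReal.ofReal R ^ (n + 1) := hsplit ▸ by gcongr
  calc θ * ν (closedBall x R)
      ≤ θ * (ENNReal.ofReal (1 + s) * ENNReal.ofReal (2 * R) ^ n) := by gcongr
    _ ≤ μH[n] (essBdry (F i) ∩ ball x R) :=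
      mul_pow_le_hausdorffMeasure_essBdry_inter_ball hΨ (hF i) hR hs hθs
        (mul_ne_zero hδ2 hρ) (by rw [← mul_assoc, hεδ, mul_right_comm])
        (fun w hw => hRinv _ (by rwa [hΨ.norm_apply_zero_right]) (horth w)) hiε
        (hmass_i.trans hRE) (hmass_i.trans hREc)

end DensityEstimate

section AlmostEverywhere

variable {X : Type*} [MetricSpace X] [MeasurableSpace X] [BorelSpace X]
  [SecondCountableTopology X] [HasBesicovitchCovering X]

lemma ae_eventually_lintegral_closedBall_enorm_sub_le {F : Type*} [NormedAddCommGroup F]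
    (ν : Measure X) [IsFiniteMeasure ν] {σ : X → F} (hσ : Integrable σ ν) :
    ∀ᵐ x ∂ν, ∀ ε : ℝ≥0∞, ε ≠ 0 → ∀ᶠ r in 𝓝[>] (0 : ℝ),
      ∫⁻ y in closedBall x r, ‖σ y - σ x‖ₑ ∂ν ≤ ε * ν (closedBall x r) := by
  filter_upwards [(Besicovitch.vitaliFamily ν).ae_tendsto_lintegral_enorm_sub_div
    hσ.locallyIntegrable] with x hx ε hε
  filter_upwards [(hx.comp (Besicovitch.tendsto_filterAt ν x)).eventually_le_const
    (pos_iff_ne_zero.2 hε)] with r hr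
  rcases eq_or_ne (ν (closedBall x r)) 0 with hzero | hzero
  · simp [Measure.restrict_eq_zero.2 hzero]
  · exact (ENNReal.div_le_iff_le_mul (Or.inl hzero) (Or.inl (measure_ne_top _ _))).1 hr

lemma hausdorffMeasure_not_eventually_restrict_closedBall_le {d : ℝ} (hd : 0 ≤ d) {S : Set X}
    (hS : μH[d] S ≠ ⊤) :
    μH[d] {x ∈ S | ¬ ∀ t : ℝ≥0∞, 1 < t → ∀ᶠ r in 𝓝[>] (0 : ℝ),
      (μH[d] : Measure X).restrict S (closedBall x r) ≤ t * ENNReal.ofReal (2 * r) ^ d} = 0 := by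
  obtain ⟨u, -, hu, hulim⟩ := exists_seq_strictAnti_tendsto' ENNReal.one_lt_top
  refine measure_mono_null ?_ (measure_iUnion_null fun k =>
    hausdorffMeasure_inter_upperDensityPts_restrict hd hS (hu k).1 (hu k).2.ne)
  rintro x ⟨hxS, hx⟩
  push Not at hx
  obtain ⟨t, ht, hfreq⟩ := hx
  obtain ⟨k, hk⟩ := (hulim.eventually_le_const ht).exists
  refine mem_iUnion.2 ⟨k, hxS, fun ε hε => ?_⟩
  obtain ⟨r, hr, hlt⟩ := (nhdsGT_basis 0).frequently_iff.1 hfreq ε hε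
  exact ⟨r, hr, (mul_le_mul_left hk _).trans hlt.le⟩

end AlmostEverywhere

section LowerSemicontinuity

variable {n : ℕ} {E V : Set (EuclideanSpace ℝ (Fin (n + 1)))} {ι : Type*} {l : Filter ι}
  {F : ι → Set (EuclideanSpace ℝ (Fin (n + 1)))}

/-- The points at which, in arbitrarily small balls and eventually along `l`, the measure of
`essBdry (F i)` is at least any prescribed fraction `θ < 1` of that of `essBdry E`. The ball is
closed on the side of `E` and open on the side of `F i`, so that disjoint closed balls covering
`essBdry E` bound the measure of `essBdry E` by that of `essBdry (F i)`. -/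
def perimeterLscPts (E : Set (EuclideanSpace ℝ (Fin (n + 1))))
    (F : ι → Set (EuclideanSpace ℝ (Fin (n + 1)))) (l : Filter ι) :
    Set (EuclideanSpace ℝ (Fin (n + 1))) :=
  {x | ∀ θ : ℝ≥0, θ < 1 → ∃ᶠ R in 𝓝[>] (0 : ℝ), ∀ᶠ i in l,
    θ * μH[n] (essBdry E ∩ closedBall x R) ≤ μH[n] (essBdry (F i) ∩ ball x R)}

lemma hausdorffMeasure_essBdry_inter_sdiff_perimeterLscPts_of_convex (hE : MeasurableSet E)
    (hEfin : volume E ≠ ⊤) (hV : IsOpen V) (hVc : Convex ℝ V)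
    (hfin : μH[n] (essBdry E ∩ V) ≠ ⊤) (hF : ∀ i, MeasurableSet (F i))
    (hconv : Tendsto (fun i => volume (symmDiff (F i) E)) l (𝓝 0)) :
    μH[n] ((essBdry E ∩ V) \ perimeterLscPts E F l) = 0 := by
  have : IsFiniteMeasure ((μH[n] : Measure (EuclideanSpace ℝ (Fin (n + 1)))).restrict
    (essBdry E ∩ V)) := isFiniteMeasure_restrict.2 hfin
  obtain ⟨σ, hσ⟩ := exists_isGaussGreenField_essBdry hE hV hVc hfin
  have hleb := ae_iff.1 (ae_eventually_lintegral_closedBall_enorm_sub_le _ hσ.integrable)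
  refine measure_mono_null ?_ (measure_union_null (Measure.measure_inter_eq_zero_of_restrict hleb)
    (hausdorffMeasure_not_eventually_restrict_closedBall_le n.cast_nonneg hfin))
  rintro x ⟨hx, hxlsc⟩
  by_contra hxbad
  rw [mem_union, not_or] at hxbad
  have hxleb := not_not.1 fun h => hxbad.1 ⟨h, hx⟩
  have hxdens := not_not.1 fun h => hxbad.2 ⟨hx, h⟩
  simp only [ENNReal.rpow_natCast] at hxdens
  refine hxlsc fun θ hθ => ?_
  have hclosedBall : ∀ᶠ R in 𝓝[>] (0 : ℝ), closedBall x R ⊆ V :=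
    (eventually_closedBall_subset (hV.mem_nhds hx.2)).filter_mono nhdsWithin_le_nhds
  refine ((hσ.frequently_eventually_mul_le_hausdorffMeasure_essBdry hE hEfin hV hx.2 hx.1
    hxleb hxdens hF hconv hθ).and_eventually hclosedBall).mono ?_
  rintro R ⟨hR, hRV⟩
  rwa [Measure.restrict_apply measurableSet_closedBall, inter_comm, inter_assoc,
    inter_eq_self_of_subset_right hRV] at hR

lemma hausdorffMeasure_essBdry_inter_sdiff_perimeterLscPts (hE : MeasurableSet E)
    (hEfin : volume E ≠ ⊤) (hV : IsOpen V) (hfin : μH[n] (essBdry E ∩ V) ≠ ⊤)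
    (hF : ∀ i, MeasurableSet (F i))
    (hconv : Tendsto (fun i => volume (symmDiff (F i) E)) l (𝓝 0)) :
    μH[n] ((essBdry E ∩ V) \ perimeterLscPts E F l) = 0 := by
  refine measure_null_of_locally_null _ fun x hx => ?_
  obtain ⟨r, hr, hrV⟩ := Metric.isOpen_iff.1 hV x hx.1.2
  refine ⟨(essBdry E ∩ ball x r) \ perimeterLscPts E F l, ?_,
    hausdorffMeasure_essBdry_inter_sdiff_perimeterLscPts_of_convex hE hEfin isOpen_ball
      (convex_ball x r) (measure_ne_top_of_subset (inter_subset_inter_right _ hrV) hfin) hF hconv⟩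
  filter_upwards [self_mem_nhdsWithin, mem_nhdsWithin_of_mem_nhds (ball_mem_nhds x hr)]
    with y hy hyr using ⟨⟨hy.1.1, hyr⟩, hy.2⟩

lemma measure_le_tsum_inter_of_sdiff_biUnion_null {X κ : Type*} [MeasurableSpace X]
    (μ : Measure X) {S B : Set X} {T : Set κ} (hT : T.Countable) {Q : κ → Set X}
    (hSB : S ⊆ B) (hcov : μ (S \ ⋃ x ∈ T, Q x) = 0) :
    μ S ≤ ∑' x : T, μ (B ∩ Q x) :=
  calc μ S ≤ μ (S ∩ ⋃ x ∈ T, Q x) + μ (S \ ⋃ x ∈ T, Q x) := measure_le_inter_add_sdiff _ _ _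
    _ = μ (S ∩ ⋃ x ∈ T, Q x) := by rw [hcov, add_zero]
    _ ≤ μ (⋃ x ∈ T, B ∩ Q x) := by
        rw [← inter_iUnion₂]
        exact measure_mono (inter_subset_inter_left _ hSB)
    _ ≤ ∑' x : T, μ (B ∩ Q x) := measure_biUnion_le _ hT _

lemma sum_measure_inter_le_of_pairwiseDisjoint {X κ : Type*} [MeasurableSpace X] (μ : Measure X)
    (B : Set X) {V : Set X} (hV : MeasurableSet V) {s : Finset κ} {Q : κ → Set X}
    (hQ : ∀ x ∈ s, MeasurableSet (Q x)) (hdisj : (s : Set κ).PairwiseDisjoint Q)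
    (hQV : ∀ x ∈ s, Q x ⊆ V) : ∑ x ∈ s, μ (B ∩ Q x) ≤ μ (B ∩ V) :=
  calc ∑ x ∈ s, μ (B ∩ Q x) = ∑ x ∈ s, μ.restrict B (Q x) :=
        Finset.sum_congr rfl fun x hx => by rw [Measure.restrict_apply (hQ x hx), inter_comm]
    _ = μ.restrict B (⋃ x ∈ s, Q x) := (measure_biUnion_finset hdisj hQ).symm
    _ ≤ μ.restrict B V := measure_mono (iUnion₂_subset hQV)
    _ = μ (B ∩ V) := by rw [Measure.restrict_apply hV, inter_comm]

lemma mul_hausdorffMeasure_essBdry_inter_le_liminf (hV : IsOpen V)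
    (hfin : μH[n] (essBdry E ∩ V) ≠ ⊤)
    (hlsc : μH[n] ((essBdry E ∩ V) \ perimeterLscPts E F l) = 0) {θ : ℝ≥0} (hθ : θ < 1) :
    θ * μH[n] (essBdry E ∩ V) ≤ liminf (fun i => μH[n] (essBdry (F i) ∩ V)) l := by
  have : IsFiniteMeasure ((μH[n] : Measure (EuclideanSpace ℝ (Fin (n + 1)))).restrict
    (essBdry E ∩ V)) := isFiniteMeasure_restrict.2 hfin
  obtain ⟨T, r, hT, hr, hcov, hdisj⟩ := exists_disjoint_closedBall_covering_ae_subset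
    ((μH[n] : Measure (EuclideanSpace ℝ (Fin (n + 1)))).restrict (essBdry E ∩ V)) hV
    (inter_subset_left.trans inter_subset_right :
      (essBdry E ∩ V) ∩ perimeterLscPts E F l ⊆ V)
    (f := fun x => {R | ∀ᶠ i in l,
      θ * μH[n] (essBdry E ∩ closedBall x R) ≤ μH[n] (essBdry (F i) ∩ ball x R)})
    (fun x hx δ hδ => let ⟨R, hR, hRl⟩ := (nhdsGT_basis 0).frequently_iff.1 (hx.2 θ hθ) δ hδ
      ⟨R, hRl, hR⟩) one_pos
  rw [Measure.restrict_eq_self _ (sdiff_subset.trans inter_subset_left)] at hcov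
  have hcov' : μH[n] ((essBdry E ∩ V) \ ⋃ x ∈ T, closedBall x (r x)) = 0 := by
    refine measure_mono_null (fun x hx => ?_) (measure_union_null hcov hlsc)
    by_cases hxlsc : x ∈ perimeterLscPts E F l
    exacts [Or.inl ⟨⟨hx.1, hxlsc⟩, hx.2⟩, Or.inr ⟨hx.1, hxlsc⟩]
  calc θ * μH[n] (essBdry E ∩ V)
      ≤ ∑' x : T, θ * μH[n] (essBdry E ∩ closedBall x.1 (r x)) := by
        rw [ENNReal.tsum_mul_left]
        gcongr
        exact measure_le_tsum_inter_of_sdiff_biUnion_null _ hT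
          (Q := fun x => closedBall x (r x)) inter_subset_left hcov'
    _ ≤ liminf (fun i => μH[n] (essBdry (F i) ∩ V)) l := by
        refine ENNReal.summable.tsum_le_of_sum_le fun s => le_liminf_of_le ?_ ?_
        · isBoundedDefault
        filter_upwards [(Filter.eventually_all_finset s).2 fun x _ => (hr x x.2).1.1] with i hi
        refine (Finset.sum_le_sum hi).trans (sum_measure_inter_le_of_pairwiseDisjoint _ _
          hV.measurableSet (fun _ _ => measurableSet_ball) (fun x _ y _ hxy => ?_)
          fun x _ => ball_subset_closedBall.trans (hr x x.2).2)
        exact (hdisj x.2 y.2 (Subtype.coe_injective.ne hxy)).mono ball_subset_closedBall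
          ball_subset_closedBall

theorem hausdorffMeasure_essBdry_inter_le_liminf (hE : MeasurableSet E) (hEfin : volume E ≠ ⊤)
    (hV : IsOpen V) (hfin : μH[n] (essBdry E ∩ V) ≠ ⊤) (hF : ∀ i, MeasurableSet (F i))
    (hconv : Tendsto (fun i => volume (symmDiff (F i) E)) l (𝓝 0)) :
    μH[n] (essBdry E ∩ V) ≤ liminf (fun i => μH[n] (essBdry (F i) ∩ V)) l := by
  have hlsc := hausdorffMeasure_essBdry_inter_sdiff_perimeterLscPts hE hEfin hV hfin hF hconv
  refine ENNReal.le_of_forall_lt_one_mul_le fun θ hθ => ?_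
  lift θ to ℝ≥0 using hθ.ne_top
  exact mul_hausdorffMeasure_essBdry_inter_le_liminf hV hfin hlsc (mod_cast hθ)

end LowerSemicontinuity

section WeightedPerimeter

lemma essBdry_eq_empty (E : Set (EuclideanSpace ℝ (Fin 0))) : essBdry E = ∅ := by
  rw [essBdry, compl_empty_iff, eq_univ_iff_forall]
  intro x
  rcases E.eq_empty_or_nonempty with rfl | hE
  · exact Or.inr (by simp [densityZeroPts])
  · rw [hE.eq_univ]
    refine Or.inl (tendsto_const_nhds.congr' ?_)
    filter_upwards [self_mem_nhdsWithin] with r hr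
    rw [univ_inter, ENNReal.div_self (measure_ball_pos _ _ hr).ne' measure_ball_lt_top.ne]

lemma liminf_add_liminf_le_liminf_add {ι : Type*} {l : Filter ι} (u v : ι → ℝ≥0∞) :
    liminf u l + liminf v l ≤ liminf (fun i => u i + v i) l := by
  rw [liminf_eq_iSup_iInf, liminf_eq_iSup_iInf]
  refine ENNReal.biSup_add_biSup_le' ⟨univ, univ_mem⟩ ⟨univ, univ_mem⟩ fun s hs t ht =>
    le_liminf_of_le (by isBoundedDefault) ?_
  filter_upwards [hs, ht] with i his hit using add_le_add (biInf_le _ his) (biInf_le _ hit)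

lemma measure_inter_add_mul_measure_sdiff_inter {X : Type*} [MeasurableSpace X] (μ : Measure X)
    (S D : Set X) {K : Set X} (hK : MeasurableSet K) {A : ℝ≥0∞} (hA : 1 ≤ A) :
    μ (S ∩ K ∩ D) + A * μ ((S \ K) ∩ D) = μ (S ∩ D) + (A - 1) * μ (S ∩ (D \ K)) := by
  rw [inter_right_comm, inter_comm (S \ K), ← inter_sdiff_assoc, inter_comm D, ← inter_sdiff_assoc,
    ← measure_inter_add_sdiff (S ∩ D) hK, add_assoc, ← one_add_mul, add_tsub_cancel_of_le hA]

variable {N : ℕ} {E V : Set (EuclideanSpace ℝ (Fin N))} {ι : Type*} {l : Filter ι}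
  {F : ι → Set (EuclideanSpace ℝ (Fin N))}

theorem perim_le_liminf_perim (hE : MeasurableSet E) (hEfin : volume E ≠ ⊤) (hV : IsOpen V)
    (hfin : perim E V ≠ ⊤) (hF : ∀ i, MeasurableSet (F i))
    (hconv : Tendsto (fun i => volume (symmDiff (F i) E)) l (𝓝 0)) :
    perim E V ≤ liminf (fun i => perim (F i) V) l := by
  rcases N with _ | n
  · simp [perim, essBdry_eq_empty]
  · simp only [perim, Nat.cast_add_one, add_sub_cancel_right] at hfin ⊢
    exact hausdorffMeasure_essBdry_inter_le_liminf hE hEfin hV hfin hF hconv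

theorem stmt_12_general {D K : Set (EuclideanSpace ℝ (Fin N))} (hD : IsOpen D) (hK : IsClosed K)
    (hE : MeasurableSet E) (hEfin : volume E ≠ ⊤) (hfin : perim E D ≠ ⊤)
    (hF : ∀ i, MeasurableSet (F i))
    (hconv : Tendsto (fun i => volume (symmDiff (F i) E)) l (𝓝 0)) {A : ℝ≥0∞} (hA : 1 ≤ A) :
    μH[(N : ℝ) - 1] (essBdry E ∩ K ∩ D) + A * μH[(N : ℝ) - 1] ((essBdry E \ K) ∩ D) ≤
      liminf (fun i => μH[(N : ℝ) - 1] (essBdry (F i) ∩ K ∩ D) +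
        A * μH[(N : ℝ) - 1] ((essBdry (F i) \ K) ∩ D)) l := by
  simp only [measure_inter_add_mul_measure_sdiff_inter _ _ _ hK.measurableSet hA]
  have hfinK : perim E (D \ K) ≠ ⊤ :=
    measure_ne_top_of_subset (inter_subset_inter_right _ sdiff_subset) hfin
  calc perim E D + (A - 1) * perim E (D \ K)
      ≤ liminf (fun i => perim (F i) D) l + (A - 1) * liminf (fun i => perim (F i) (D \ K)) l := by
        gcongr
        exacts [perim_le_liminf_perim hE hEfin hD hfin hF hconv,
          perim_le_liminf_perim hE hEfin (hD.sdiff hK) hfinK hF hconv]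
    _ ≤ liminf (fun i => perim (F i) D) l +
          liminf (fun i => (A - 1) * perim (F i) (D \ K)) l := by
        gcongr
        refine le_trans ?_ ENNReal.le_liminf_mul
        gcongr
        exact le_liminf_of_le (by isBoundedDefault) (Eventually.of_forall fun _ => le_rfl)
    _ ≤ liminf (fun i => perim (F i) D + (A - 1) * perim (F i) (D \ K)) l :=
        liminf_add_liminf_le_liminf_add _ _

end WeightedPerimeter

theorem stmt_12 {N : ℕ} (D : Set (EuclideanSpace ℝ (Fin N))) (hD : IsOpen D)
    (hDb : IsBounded D)
    (Om : Set (EuclideanSpace ℝ (Fin N))) (Omn : ℕ → Set (EuclideanSpace ℝ (Fin N)))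
    (hmeasn : ∀ n, MeasurableSet (Omn n)) (hmeas : MeasurableSet Om)
    (hsubn : ∀ n, Omn n ⊆ D) (hsub : Om ⊆ D)
    (hfpn : ∀ n, perim (Omn n) D < ⊤) (hfp : perim Om D < ⊤)
    (hconv : Tendsto (fun n => volume (symmDiff (Omn n) Om)) atTop (𝓝 0))
    (Om0 K : Set (EuclideanSpace ℝ (Fin N))) (hK : K = frontier Om0)
    (hKcl : IsClosed K) (hKD : K ⊆ D)
    (U : Set (EuclideanSpace ℝ (Fin N))) (hU : IsOpen U) (hKU : K ⊆ U) (hUD : U ⊆ D)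
    (hnulln : ∀ n, μH[(N : ℝ) - 1] (essBdry (Omn n) ∩ frontier U) = 0)
    (hnull : μH[(N : ℝ) - 1] (essBdry Om ∩ frontier U) = 0)
    (A : ℝ≥0∞) (hA : 1 ≤ A) :
    μH[(N : ℝ) - 1] (essBdry Om ∩ K ∩ D) + A * μH[(N : ℝ) - 1] ((essBdry Om \ K) ∩ D) ≤
      Filter.atTop.liminf (fun n =>
        μH[(N : ℝ) - 1] (essBdry (Omn n) ∩ K ∩ D) +
          A * μH[(N : ℝ) - 1] ((essBdry (Omn n) \ K) ∩ D)) :=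
  stmt_12_general hD hKcl hmeas
    (ne_top_of_le_ne_top hDb.measure_lt_top.ne (measure_mono hsub)) hfp.ne hmeasn hconv hA

end
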